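/- arXiv:2010.15073 — 7 statements merged into one kernel-verified Lean document; each statement's English description precedes it below -/
import Mathlib

section
/- Fix d ∈ ℕ, d ≥ 1, and η > 0. There exists a constant Δ = Δ(η) > 0 with the following property. Let D = [0,1]^d, A = [0,1]^(d−1) × [0, 1/2], B = [0,1]^(d−1) × [1/2, 1], and let α, β ≥ 0 with α + β = 1 and η ≤ α ≤ 1 − η. Then there exists a Lipschitz homeomorphism Φ : [0,1]^d → [0,1]^d such that: (i) Φ restricted to the boundary ∂[0,1]^d is the identity; (ii) for Lebesgue-almost every x ∈ [0,1]^d, the Jacobian determinant of Φ at x equals 2α if x ∈ A and 2β if x ∈ B; (iii) Lip(Φ − id) ≤ Δ·|1 − 2α|, where Lip denotes the Lipschitz constant with respect to the Euclidean metric. -/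
open MeasureTheory

/-- Euclidean distance on `ℝ^d` (realised as `Fin d → ℝ`). -/
noncomputable def eudist {d : ℕ} (x y : Fin d → ℝ) : ℝ :=
  Real.sqrt (∑ i, (x i - y i) ^ 2)

/-- The unit cube `[0,1]^d`. -/
def unitCube (d : ℕ) : Set (Fin d → ℝ) := {x | ∀ i, 0 ≤ x i ∧ x i ≤ 1}


lemma lam_exists (d m : ℕ) (hd : 1 ≤ d) (η : ℝ) (hη : 0 < η) (hη2 : η ≤ 1/2)
    (hm : (d:ℝ) ≤ η * m) (ε : ℝ) (hε : |ε| ≤ 1 - 2 * η) :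
    ∃ lam lam' : ℝ → ℝ, lam 1 = 1 ∧ ∀ r ∈ Set.Icc (0:ℝ) 1,
      HasDerivAt lam (lam' r) r ∧ η / 2 ≤ lam r ∧
      |lam' r| ≤ (1 / (2 * η)) * (2 / η) ^ (d - 1) * |ε| ∧
      lam r ^ (d - 1) * (lam r + lam' r * r) * (1 + ε) = 1 + ε * (1 + d / m) * (1 - r ^ m) ∧
      (η / 2) * η ^ (d - 1) ≤ lam r + lam' r * r := by
  have hd0 : (0:ℝ) < d := by exact_mod_cast hd
  have hm0 : (0:ℝ) < m := by
    by_contra h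
    have : η * m ≤ 0 := mul_nonpos_of_nonneg_of_nonpos hη.le (not_lt.1 h)
    linarith
  have hm1 : 1 ≤ m := by exact_mod_cast hm0
  obtain ⟨he1, he2⟩ := abs_le.1 hε
  have h1e : 2 * η ≤ 1 + ε := by linarith
  have h1e0 : 0 < 1 + ε := by linarith
  have hdm : (d:ℝ) / m ≤ η := by rw [div_le_iff₀ hm0]; exact hm
  have hdm0 : 0 < (d:ℝ) / m := by positivity
  set q : ℝ := (d:ℝ) / m with hq
  have hc : |ε * (1 + q)| ≤ 1 - η := by
    rw [abs_mul, abs_of_pos (by linarith : 0 < 1 + q)]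
    nlinarith [abs_nonneg ε]
  obtain ⟨hc1, hc2⟩ := abs_le.1 hc
  set kap : ℝ → ℝ := fun r => 1 + (ε / (1 + ε)) * q * (1 - r ^ m) with hkap
  have hrm : ∀ r ∈ Set.Icc (0:ℝ) 1, 0 ≤ r ^ m ∧ r ^ m ≤ 1 := fun r hr =>
    ⟨pow_nonneg hr.1 _, pow_le_one₀ hr.1 hr.2⟩
  have hk : ∀ r, (1 + ε) * kap r = 1 + ε + ε * q * (1 - r ^ m) := by
    intro r; simp only [hkap]; field_simp
  have hklo : ∀ r ∈ Set.Icc (0:ℝ) 1, η / 2 ≤ kap r := by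
    intro r hr
    obtain ⟨h0, h1⟩ := hrm r hr
    have := hk r
    have h3 : η ≤ (1 + ε) * kap r := by rw [this]; nlinarith
    by_contra h
    push Not at h
    nlinarith
  have hkhi : ∀ r ∈ Set.Icc (0:ℝ) 1, kap r ≤ 1 / η := by
    intro r hr
    obtain ⟨h0, h1⟩ := hrm r hr
    have := hk r
    have h3 : (1 + ε) * kap r ≤ 2 := by rw [this]; nlinarith
    rw [le_div_iff₀ hη]
    nlinarith [hklo r hr]
  set lam : ℝ → ℝ := fun r => kap r ^ ((1:ℝ) / d) with hlam
  set lam' : ℝ → ℝ := fun r => (-(ε / (1 + ε)) * q * (m * r ^ (m - 1))) * ((1:ℝ) / d) * kap r ^ ((1:ℝ) / d - 1)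
  have hder : ∀ r ∈ Set.Icc (0:ℝ) 1, HasDerivAt lam (lam' r) r := by
    intro r hr
    have h1 : HasDerivAt kap (-(ε / (1 + ε)) * q * (m * r ^ (m - 1))) r := by
      have := (((hasDerivAt_pow m r).const_sub 1).const_mul ((ε / (1 + ε)) * q)).const_add 1
      exact this.congr_deriv (by ring)
    exact h1.rpow_const (Or.inl (by linarith [hklo r hr]))
  have hlpos : ∀ r ∈ Set.Icc (0:ℝ) 1, 0 < lam r := fun r hr =>
    Real.rpow_pos_of_pos (by linarith [hklo r hr]) _
  have hpow : ∀ r ∈ Set.Icc (0:ℝ) 1, lam r ^ d = kap r := by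
    intro r hr
    simp only [hlam]
    rw [one_div]
    exact Real.rpow_inv_natCast_pow (by linarith [hklo r hr]) (by omega)
  have hpow' : ∀ r ∈ Set.Icc (0:ℝ) 1, lam r ^ (d-1) * lam r = kap r := by
    intro r hr
    rw [← pow_succ, Nat.sub_add_cancel hd, hpow r hr]
  have hllo : ∀ r ∈ Set.Icc (0:ℝ) 1, η / 2 ≤ lam r := by
    intro r hr
    by_contra h
    push Not at h
    have h1 := hpow' r hr
    have h2 : lam r ^ (d-1) ≤ 1 := pow_le_one₀ (hlpos r hr).le (by linarith)
    nlinarith [hklo r hr, hlpos r hr]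
  have hlhi : ∀ r ∈ Set.Icc (0:ℝ) 1, lam r ≤ 1 / η := by
    intro r hr
    by_contra h
    push Not at h
    have h1 := hpow' r hr
    have h3 : 1 ≤ 1 / η := by rw [le_div_iff₀ hη]; linarith
    have h2 : 1 ≤ lam r ^ (d-1) := one_le_pow₀ (by linarith)
    nlinarith [hkhi r hr, hlpos r hr]
  have hl' : ∀ r ∈ Set.Icc (0:ℝ) 1, lam r ^ (d-1) * lam' r * (1 + ε) = - ε * r ^ (m-1) := by
    intro r hr
    have hkp : 0 < kap r := by linarith [hklo r hr]
    have h1 : lam r ^ (d-1) * kap r ^ ((1:ℝ) / d - 1) = 1 := by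
      simp only [hlam]
      rw [← Real.rpow_natCast, ← Real.rpow_mul hkp.le, ← Real.rpow_add hkp, Nat.cast_sub hd]
      have : (1:ℝ) / d * ((d:ℝ) - (1:ℕ)) + (1 / d - 1) = 0 := by
        push_cast; field_simp; ring
      rw [this, Real.rpow_zero]
    calc lam r ^ (d-1) * lam' r * (1 + ε)
        = (lam r ^ (d-1) * kap r ^ ((1:ℝ) / d - 1)) * ((-(ε / (1 + ε)) * q * (m * r ^ (m - 1))) * ((1:ℝ) / d) * (1 + ε)) := by
          simp only [lam']; ring
      _ = _ := by
          rw [h1, hq]; field_simp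
  have hmain : ∀ r ∈ Set.Icc (0:ℝ) 1, lam r ^ (d - 1) * (lam r + lam' r * r) * (1 + ε) = 1 + ε * (1 + q) * (1 - r ^ m) := by
    intro r hr
    have h1 := hl' r hr
    have h2 := hpow' r hr
    have h3 : r ^ (m-1) * r = r ^ m := by rw [← pow_succ, Nat.sub_add_cancel hm1]
    calc _ = (lam r ^ (d - 1) * lam r) * (1 + ε) + (lam r ^ (d-1) * lam' r * (1 + ε)) * r := by ring
      _ = (1 + ε) * kap r - ε * (r ^ (m-1) * r) := by rw [h1, h2]; ring
      _ = _ := by rw [hk, h3]; ring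
  clear_value lam'
  refine ⟨lam, lam', by simp [hlam, hkap], fun r hr => ⟨hder r hr, hllo r hr, ?_, hmain r hr, ?_⟩⟩
  · have h1 := hl' r hr
    have h2 : (η/2)^(d-1) ≤ lam r ^ (d-1) := by gcongr; exact hllo r hr
    have h3 : lam r ^ (d-1) * |lam' r| * (1 + ε) ≤ |ε| := by
      have := congrArg abs h1
      rw [abs_mul, abs_mul, abs_of_pos h1e0, abs_of_pos (pow_pos (hlpos r hr) _), abs_mul, abs_neg,
        abs_of_nonneg (pow_nonneg hr.1 (m-1))] at this
      rw [this]
      exact mul_le_of_le_one_right (abs_nonneg _) (pow_le_one₀ hr.1 hr.2)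
    have h4 : (η/2)^(d-1) * |lam' r| * (2 * η) ≤ |ε| := by
      refine le_trans ?_ h3
      have := mul_nonneg (pow_pos (hlpos r hr) (d-1)).le (abs_nonneg (lam' r))
      gcongr
    have h5 : (2/η)^(d-1) * (η/2)^(d-1) = 1 := by
      rw [← mul_pow]; field_simp; simp
    calc |lam' r| = (1 / (2 * η)) * (2 / η) ^ (d - 1) * ((η/2)^(d-1) * |lam' r| * (2 * η)) := by
          rw [show (1 / (2 * η)) * (2 / η) ^ (d - 1) * ((η/2)^(d-1) * |lam' r| * (2 * η)) = ((2/η)^(d-1) * (η/2)^(d-1)) * |lam' r| * ((1/(2*η)) * (2 * η)) by ring, h5]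
          field_simp
      _ ≤ _ := by gcongr
  · have h1 := hmain r hr
    obtain ⟨g0, g1⟩ := hrm r hr
    have h2 : η ≤ 1 + ε * (1 + q) * (1 - r ^ m) := by nlinarith
    have h3 : lam r ^ (d-1) ≤ (1/η)^(d-1) := by gcongr; exact (hlpos r hr).le; exact hlhi r hr
    set X := lam r + lam' r * r
    have hP := pow_pos (hlpos r hr) (d-1)
    have hX : 0 < X := by
      by_contra h
      push Not at h
      have : lam r ^ (d - 1) * X * (1 + ε) ≤ 0 :=
        mul_nonpos_of_nonpos_of_nonneg (mul_nonpos_of_nonneg_of_nonpos hP.le h) h1e0.le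
      linarith
    have h4 : η ≤ (1/η)^(d-1) * X * 2 := by
      calc η ≤ lam r ^ (d - 1) * X * (1 + ε) := by rw [h1]; exact h2
        _ ≤ _ := by gcongr; linarith
    have h5 : η^(d-1) * (1/η)^(d-1) = 1 := by
      rw [← mul_pow]; field_simp; simp
    calc (η / 2) * η ^ (d - 1) ≤ ((1/η)^(d-1) * X * 2) / 2 * η^(d-1) := by gcongr
      _ = (η^(d-1) * (1/η)^(d-1)) * X := by ring
      _ = X := by rw [h5, one_mul]

lemma det_smul_add (d : ℕ) (a : ℝ) (ha : a ≠ 0) (f : (Fin d → ℝ) →L[ℝ] ℝ) (v : Fin d → ℝ) :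
    (a • ContinuousLinearMap.id ℝ (Fin d → ℝ) + f.smulRight v).det = a ^ d * (1 + a⁻¹ * f v) := by
  have h : ((a • ContinuousLinearMap.id ℝ (Fin d → ℝ) + f.smulRight v : (Fin d → ℝ) →L[ℝ] (Fin d → ℝ)) : (Fin d → ℝ) →ₗ[ℝ] (Fin d → ℝ))
      = a • LinearMap.transvection (a⁻¹ • (f : (Fin d → ℝ) →ₗ[ℝ] ℝ)) v := by
    ext i j
    simp [LinearMap.transvection, ha, mul_add, ← mul_assoc]
  rw [ContinuousLinearMap.det, h, LinearMap.det_smul, LinearMap.transvection.det]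
  simp

section radial
variable {E : Type*} [NormedAddCommGroup E] [NormedSpace ℝ E]

lemma radial_facts (lam lam' : ℝ → ℝ) (K l0 c0 : ℝ) (hK : 0 ≤ K) (hl0 : 0 < l0) (hc0 : 0 < c0)
    (h1 : lam 1 = 1)
    (hl : ∀ r ∈ Set.Icc (0:ℝ) 1, HasDerivAt lam (lam' r) r ∧ l0 ≤ lam r ∧ |lam' r| ≤ K ∧
      c0 ≤ lam r + lam' r * r) :
    (∀ x y : E, ‖x‖ ≤ 1 → ‖y‖ ≤ 1 →
      ‖(lam ‖x‖ • x - x) - (lam ‖y‖ • y - y)‖ ≤ 2 * K * ‖x - y‖) ∧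
    (∀ x y : E, ‖x‖ ≤ 1 → ‖y‖ ≤ 1 →
      ‖x - y‖ ≤ ((1 + K / c0) / l0) * ‖lam ‖x‖ • x - lam ‖y‖ • y‖) ∧
    (∀ x : E, ‖x‖ ≤ 1 → ‖lam ‖x‖ • x‖ ≤ 1) ∧
    (∀ z : E, ‖z‖ ≤ 1 → ∃ x : E, ‖x‖ ≤ 1 ∧ lam ‖x‖ • x = z) := by
  have hmem : ∀ x : E, ‖x‖ ≤ 1 → ‖x‖ ∈ Set.Icc (0:ℝ) 1 := fun x hx => ⟨norm_nonneg _, hx⟩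
  have hLip : ∀ r ∈ Set.Icc (0:ℝ) 1, ∀ s ∈ Set.Icc (0:ℝ) 1, |lam r - lam s| ≤ K * |r - s| := by
    intro r hr s hs
    exact Convex.norm_image_sub_le_of_norm_hasDerivWithin_le (f' := lam')
      (fun x hx => (hl x hx).1.hasDerivWithinAt) (fun x hx => (hl x hx).2.2.1) (convex_Icc 0 1) hs hr
  have hρd : ∀ r ∈ Set.Icc (0:ℝ) 1, HasDerivAt (fun r => lam r * r) (lam r + lam' r * r) r := by
    intro r hr
    have := (hl r hr).1.mul (hasDerivAt_id r)
    exact this.congr_deriv (by simp only [id]; ring)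
  have hρc : ContinuousOn (fun r => lam r * r) (Set.Icc 0 1) := fun r hr =>
    (hρd r hr).continuousAt.continuousWithinAt
  have hρ : ∀ r ∈ Set.Icc (0:ℝ) 1, ∀ s ∈ Set.Icc (0:ℝ) 1, r ≤ s → c0 * (s - r) ≤ lam s * s - lam r * r := by
    intro r hr s hs hrs
    refine (convex_Icc (0:ℝ) 1).mul_sub_le_image_sub_of_le_deriv hρc ?_ ?_ r hr s hs hrs
    · intro x hx
      exact (hρd x (interior_subset hx)).differentiableAt.differentiableWithinAt
    · intro x hx
      rw [(hρd x (interior_subset hx)).deriv]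
      exact (hl x (interior_subset hx)).2.2.2
  have hρ' : ∀ r ∈ Set.Icc (0:ℝ) 1, ∀ s ∈ Set.Icc (0:ℝ) 1, c0 * |s - r| ≤ |lam s * s - lam r * r| := by
    intro r hr s hs
    rcases le_total r s with h | h
    · rw [abs_of_nonneg (sub_nonneg.2 h)]
      exact (hρ r hr s hs h).trans (le_abs_self _)
    · rw [abs_sub_comm s r, abs_of_nonneg (sub_nonneg.2 h), abs_sub_comm]
      exact (hρ s hs r hr h).trans (le_abs_self _)
  have hnorm : ∀ x : E, ‖x‖ ≤ 1 → ‖lam ‖x‖ • x‖ = lam ‖x‖ * ‖x‖ := by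
    intro x hx
    rw [norm_smul, Real.norm_of_nonneg (hl0.le.trans (hl _ (hmem x hx)).2.1)]
  refine ⟨?_, ?_, ?_, ?_⟩
  · intro x y hx hy
    have e : (lam ‖x‖ • x - x) - (lam ‖y‖ • y - y) = (lam ‖x‖ - 1) • (x - y) + (lam ‖x‖ - lam ‖y‖) • y := by
      module
    rw [e]
    refine (norm_add_le _ _).trans ?_
    rw [norm_smul, norm_smul, Real.norm_eq_abs, Real.norm_eq_abs]
    have a1 : |lam ‖x‖ - 1| ≤ K := by
      have := hLip _ (hmem x hx) 1 (by simp)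
      rw [h1] at this
      refine this.trans (mul_le_of_le_one_right hK ?_)
      rw [abs_le]; constructor <;> linarith [norm_nonneg x]
    have a2 : |lam ‖x‖ - lam ‖y‖| ≤ K * ‖x - y‖ :=
      (hLip _ (hmem x hx) _ (hmem y hy)).trans (by gcongr; exact abs_norm_sub_norm_le x y)
    have : |lam ‖x‖ - lam ‖y‖| * ‖y‖ ≤ K * ‖x - y‖ * 1 := by gcongr
    have : |lam ‖x‖ - 1| * ‖x - y‖ ≤ K * ‖x - y‖ := by gcongr
    linarith
  · intro x y hx hy
    set P := ‖lam ‖x‖ • x - lam ‖y‖ • y‖ with hP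
    have a0 : c0 * |‖x‖ - ‖y‖| ≤ P := by
      refine (hρ' _ (hmem y hy) _ (hmem x hx)).trans ?_
      rw [← hnorm x hx, ← hnorm y hy]
      exact abs_norm_sub_norm_le _ _
    have e : lam ‖x‖ • (x - y) = (lam ‖x‖ • x - lam ‖y‖ • y) - (lam ‖x‖ - lam ‖y‖) • y := by
      module
    have a1 : lam ‖x‖ * ‖x - y‖ ≤ P + K * |‖x‖ - ‖y‖| := by
      have := norm_sub_le (lam ‖x‖ • x - lam ‖y‖ • y) ((lam ‖x‖ - lam ‖y‖) • y)
      rw [← e, norm_smul, norm_smul, Real.norm_of_nonneg (hl0.le.trans (hl _ (hmem x hx)).2.1), Real.norm_eq_abs] at this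
      have a2 := hLip _ (hmem x hx) _ (hmem y hy)
      have : |lam ‖x‖ - lam ‖y‖| * ‖y‖ ≤ (K * |‖x‖ - ‖y‖|) * 1 := by gcongr
      linarith
    have a3 : l0 * ‖x - y‖ ≤ lam ‖x‖ * ‖x - y‖ := by
      gcongr; exact (hl _ (hmem x hx)).2.1
    have a4 : |‖x‖ - ‖y‖| ≤ P / c0 := by rw [le_div_iff₀ hc0]; linarith
    have a5 : K * |‖x‖ - ‖y‖| ≤ K * (P / c0) := by gcongr
    rw [div_mul_eq_mul_div, le_div_iff₀ hl0]
    calc _ ≤ P + K * (P / c0) := by linarith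
      _ = _ := by ring
  · intro x hx
    rw [hnorm x hx]
    have := hρ _ (hmem x hx) 1 (by simp) hx
    rw [h1] at this
    nlinarith
  · intro z hz
    by_cases h0 : z = 0
    · exact ⟨0, by simp, by simp [h0]⟩
    have hz0 : 0 < ‖z‖ := norm_pos_iff.2 h0
    have := intermediate_value_Icc (zero_le_one) hρc
    obtain ⟨r, hr, hrz⟩ := this (show ‖z‖ ∈ _ by simp [h1, hz])
    have hn : ‖(r / ‖z‖) • z‖ = r := by
      rw [norm_smul, Real.norm_of_nonneg (div_nonneg hr.1 hz0.le)]; field_simp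
    refine ⟨(r / ‖z‖) • z, by rw [hn]; exact hr.2, ?_⟩
    rw [hn, smul_smul]
    have : lam r * (r / ‖z‖) = 1 := by
      rw [← mul_div_assoc]; simp only at hrz; rw [hrz]; field_simp
    rw [this, one_smul]

lemma radial_deriv (lam : ℝ → ℝ) (l' : ℝ) (y : E)
    (hl : HasDerivAt lam l' ‖y‖) (hn : DifferentiableAt ℝ (fun x : E => ‖x‖) y) :
    HasFDerivAt (fun x : E => lam ‖x‖ • x)
      (lam ‖y‖ • ContinuousLinearMap.id ℝ E + (l' • fderiv ℝ (fun x : E => ‖x‖) y).smulRight y) y := by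
  have h1 : HasFDerivAt (fun x : E => lam ‖x‖) (l' • fderiv ℝ (fun x : E => ‖x‖) y) y :=
    hl.comp_hasFDerivAt y hn.hasFDerivAt
  exact h1.smul (hasFDerivAt_id y)
end radial

noncomputable def HH (m : ℕ) (n w : ℝ) : ℝ := ∫ s in (-1:ℝ)..w, (1 - (max n |s|) ^ m)

lemma HH_cont (m : ℕ) (n : ℝ) : Continuous (fun s : ℝ => 1 - (max n |s|) ^ m) := by fun_prop

lemma HH_neg_one (m : ℕ) (n : ℝ) : HH m n (-1) = 0 := by simp [HH]

lemma HH_one (m : ℕ) (w : ℝ) (h1 : -1 ≤ w) (h2 : w ≤ 1) : HH m 1 w = 0 := by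
  unfold HH
  rw [intervalIntegral.integral_congr (g := fun _ => 0)]
  · simp
  · intro s hs
    rw [Set.uIcc_of_le h1] at hs
    have : max 1 |s| = 1 := max_eq_left (abs_le.2 ⟨hs.1, hs.2.trans h2⟩)
    simp [this]

lemma HH_deriv (m : ℕ) (n w : ℝ) : HasDerivAt (HH m n) (1 - (max n |w|) ^ m) w :=
  intervalIntegral.integral_hasDerivAt_right ((HH_cont m n).intervalIntegrable _ _)
    (HH_cont m n).stronglyMeasurable.stronglyMeasurableAtFilter (HH_cont m n).continuousAt

lemma pow_lip (m : ℕ) (a b : ℝ) (ha : a ∈ Set.Icc (0:ℝ) 1) (hb : b ∈ Set.Icc (0:ℝ) 1) :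
    |a ^ m - b ^ m| ≤ m * |a - b| := by
  refine Convex.norm_image_sub_le_of_norm_hasDerivWithin_le (f := fun x : ℝ => x ^ m)
    (f' := fun x => m * x ^ (m-1)) (s := Set.Icc (0:ℝ) 1)
      (fun x hx => (hasDerivAt_pow m x).hasDerivWithinAt) (fun x hx => ?_) (convex_Icc 0 1) hb ha
  rw [Real.norm_of_nonneg (mul_nonneg (Nat.cast_nonneg _) (pow_nonneg hx.1 _))]
  exact mul_le_of_le_one_right (Nat.cast_nonneg _) (pow_le_one₀ hx.1 hx.2)

lemma max_mem {n s : ℝ} (hn : n ∈ Set.Icc (0:ℝ) 1) (hs : s ∈ Set.Icc (-1:ℝ) 1) :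
    max n |s| ∈ Set.Icc (0:ℝ) 1 :=
  ⟨le_max_of_le_left hn.1, max_le hn.2 (abs_le.2 hs)⟩

lemma HH_lip1 (m : ℕ) (n w w' : ℝ) (hn : n ∈ Set.Icc (0:ℝ) 1) (hw : w ∈ Set.Icc (-1:ℝ) 1)
    (hw' : w' ∈ Set.Icc (-1:ℝ) 1) : |HH m n w - HH m n w'| ≤ |w - w'| := by
  unfold HH
  rw [intervalIntegral.integral_interval_sub_left ((HH_cont m n).intervalIntegrable _ _)
    ((HH_cont m n).intervalIntegrable _ _)]
  have := intervalIntegral.norm_integral_le_of_norm_le_const (C := 1) (a := w') (b := w)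
    (f := fun s : ℝ => 1 - (max n |s|) ^ m) ?_
  · simpa using this
  · intro s hs
    have hs' : s ∈ Set.Icc (-1:ℝ) 1 := by
      have := Set.uIoc_subset_uIcc hs
      exact Set.uIcc_subset_Icc hw' hw this
    have h := max_mem hn hs'
    have h1 := pow_nonneg h.1 m
    have h2 := pow_le_one₀ h.1 h.2 (n := m)
    rw [Real.norm_eq_abs, abs_le]; constructor <;> linarith

lemma HH_lip2 (m : ℕ) (n n' w : ℝ) (hn : n ∈ Set.Icc (0:ℝ) 1) (hn' : n' ∈ Set.Icc (0:ℝ) 1)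
    (hw : w ∈ Set.Icc (-1:ℝ) 1) : |HH m n w - HH m n' w| ≤ 2 * m * |n - n'| := by
  unfold HH
  rw [← intervalIntegral.integral_sub ((HH_cont m n).intervalIntegrable _ _)
    ((HH_cont m n').intervalIntegrable _ _)]
  have := intervalIntegral.norm_integral_le_of_norm_le_const (C := m * |n - n'|) (a := -1) (b := w)
    (f := fun s : ℝ => (1 - (max n |s|) ^ m) - (1 - (max n' |s|) ^ m)) ?_
  · refine (le_trans this ?_)
    have : |w - -1| ≤ 2 := by rw [abs_le]; constructor <;> linarith [hw.1, hw.2]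
    have h0 : 0 ≤ m * |n - n'| := by positivity
    nlinarith
  · intro s hs
    rw [Set.uIoc_of_le hw.1] at hs
    have hs' : s ∈ Set.Icc (-1:ℝ) 1 := ⟨hs.1.le, hs.2.trans hw.2⟩
    have h := pow_lip m _ _ (max_mem hn hs') (max_mem hn' hs')
    rw [Real.norm_eq_abs, sub_sub_sub_cancel_left, abs_sub_comm]
    refine h.trans ?_
    exact mul_le_mul_of_nonneg_left (by simpa using abs_max_sub_max_le_max n |s| n' |s|) (Nat.cast_nonneg m)

lemma HH_lip (m : ℕ) (n n' w w' : ℝ) (hn : n ∈ Set.Icc (0:ℝ) 1) (hn' : n' ∈ Set.Icc (0:ℝ) 1)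
    (hw : w ∈ Set.Icc (-1:ℝ) 1) (hw' : w' ∈ Set.Icc (-1:ℝ) 1) :
    |HH m n w - HH m n' w'| ≤ |w - w'| + 2 * m * |n - n'| := by
  have h1 := HH_lip1 m n w w' hn hw hw'
  have h2 := HH_lip2 m n n' w' hn hn' hw'
  have := abs_sub_le (HH m n w) (HH m n w') (HH m n' w')
  linarith

section vmap
variable {d : ℕ} (l : Fin d)

noncomputable def nn (y : Fin d → ℝ) : ℝ := ‖Function.update y l 0‖

lemma nn_nonneg (y : Fin d → ℝ) : 0 ≤ nn l y := norm_nonneg _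

lemma norm_eq_max (y : Fin d → ℝ) : ‖y‖ = max (nn l y) |y l| := by
  apply le_antisymm
  · rw [pi_norm_le_iff_of_nonneg (le_max_of_le_left (nn_nonneg l y))]
    intro i
    by_cases h : i = l
    · subst h; exact le_max_right _ _
    · refine le_max_of_le_left ?_
      have := norm_le_pi_norm (Function.update y l 0) i
      rwa [Function.update_of_ne h] at this
  · refine max_le ?_ (norm_le_pi_norm y l)
    unfold nn
    rw [pi_norm_le_iff_of_nonneg (norm_nonneg _)]
    intro i
    by_cases h : i = l
    · subst h; simp
    · rw [Function.update_of_ne h]; exact norm_le_pi_norm y i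

lemma nn_le (y : Fin d → ℝ) : nn l y ≤ ‖y‖ := by rw [norm_eq_max l]; exact le_max_left _ _

lemma nn_lip (x y : Fin d → ℝ) : |nn l x - nn l y| ≤ ‖x - y‖ := by
  refine (abs_norm_sub_norm_le _ _).trans ?_
  have : Function.update x l 0 - Function.update y l 0 = Function.update (x - y) l 0 := by
    ext i
    by_cases h : i = l
    · subst h; simp
    · simp [Function.update_of_ne h]
  rw [this]
  exact nn_le l _

lemma nn_congr {x y : Fin d → ℝ} (h : ∀ i, i ≠ l → x i = y i) : nn l x = nn l y := by
  unfold nn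
  congr 1
  ext i
  by_cases h' : i = l
  · subst h'; simp
  · simp [Function.update_of_ne h', h i h']

noncomputable def vv (m : ℕ) (c : ℝ) (y : Fin d → ℝ) : Fin d → ℝ :=
  y + (c * HH m (nn l y) (y l)) • (Pi.single l 1 : Fin d → ℝ)

def TT (m : ℕ) (c : ℝ) : Set (Fin d → ℝ) :=
  {z | nn l z ≤ 1 ∧ -1 ≤ z l ∧ z l ≤ 1 + c * HH m (nn l z) 1}

lemma vv_l (m : ℕ) (c : ℝ) (y : Fin d → ℝ) : vv l m c y l = y l + c * HH m (nn l y) (y l) := by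
  simp [vv]

lemma vv_ne (m : ℕ) (c : ℝ) (y : Fin d → ℝ) (i : Fin d) (hi : i ≠ l) : vv l m c y i = y i := by
  simp [vv, hi]

lemma nn_vv (m : ℕ) (c : ℝ) (y : Fin d → ℝ) : nn l (vv l m c y) = nn l y :=
  nn_congr l (fun i hi => vv_ne l m c y i hi)

lemma ball_l {y : Fin d → ℝ} (hy : ‖y‖ ≤ 1) : y l ∈ Set.Icc (-1:ℝ) 1 :=
  abs_le.1 ((norm_le_pi_norm y l).trans hy)

lemma ball_n {y : Fin d → ℝ} (hy : ‖y‖ ≤ 1) : nn l y ∈ Set.Icc (0:ℝ) 1 :=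
  ⟨nn_nonneg l y, (nn_le l y).trans hy⟩

lemma HHv_lip (m : ℕ) (x y : Fin d → ℝ) (hx : ‖x‖ ≤ 1) (hy : ‖y‖ ≤ 1) :
    |HH m (nn l x) (x l) - HH m (nn l y) (y l)| ≤ (1 + 2 * m) * ‖x - y‖ := by
  refine (HH_lip m _ _ _ _ (ball_n l hx) (ball_n l hy) (ball_l l hx) (ball_l l hy)).trans ?_
  have h1 : |x l - y l| ≤ ‖x - y‖ := norm_le_pi_norm (x - y) l
  have h2 := nn_lip l x y
  have : 2 * (m:ℝ) * |nn l x - nn l y| ≤ 2 * m * ‖x - y‖ := by gcongr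
  linarith

lemma vv_lip (m : ℕ) (c : ℝ) (x y : Fin d → ℝ) (hx : ‖x‖ ≤ 1) (hy : ‖y‖ ≤ 1) :
    ‖(vv l m c x - x) - (vv l m c y - y)‖ ≤ |c| * (1 + 2 * m) * ‖x - y‖ := by
  have : (vv l m c x - x) - (vv l m c y - y) =
      (c * (HH m (nn l x) (x l) - HH m (nn l y) (y l))) • (Pi.single l 1 : Fin d → ℝ) := by
    unfold vv; module
  rw [this, norm_smul, Pi.norm_single, norm_one, mul_one, Real.norm_eq_abs, abs_mul, mul_assoc]
  gcongr
  exact HHv_lip l m x y hx hy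

lemma mono_aux (m : ℕ) (c : ℝ) (hc : |c| < 1) (n : ℝ) (hn : n ∈ Set.Icc (0:ℝ) 1) :
    StrictMonoOn (fun w => w + c * HH m n w) (Set.Icc (-1) 1) := by
  intro w hw w' hw' hlt
  have h := HH_lip1 m n w w' hn hw hw'
  have h2 : |c * (HH m n w - HH m n w')| ≤ |c| * |w - w'| := by rw [abs_mul]; gcongr
  have h3 : 0 < |w - w'| := abs_pos.2 (by linarith)
  have h4 : |c| * |w - w'| < |w - w'| := by nlinarith
  have h5 : |w - w'| = w' - w := by rw [abs_sub_comm, abs_of_pos (by linarith)]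
  have := (abs_le.1 h2).2
  simp only
  nlinarith

lemma vv_bij (m : ℕ) (c : ℝ) (hc : |c| < 1) :
    Set.BijOn (vv l m c) {y | ‖y‖ ≤ 1} (TT l m c) := by
  refine ⟨?_, ?_, ?_⟩
  · intro y hy
    have hm := (mono_aux m c hc _ (ball_n l hy)).monotoneOn
    refine ⟨by rw [nn_vv]; exact (ball_n l hy).2, ?_, ?_⟩
    · rw [vv_l]
      have := hm (by simp) (ball_l l hy) (ball_l l hy).1
      simpa [HH_neg_one] using this
    · rw [vv_l, nn_vv]
      exact hm (ball_l l hy) (by simp) (ball_l l hy).2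
  · intro x hx y hy h
    have hn : nn l x = nn l y := by rw [← nn_vv l m c x, h, nn_vv]
    have hl : x l = y l := by
      have h1 := congrFun h l
      rw [vv_l, vv_l, hn] at h1
      exact (mono_aux m c hc _ (ball_n l hy)).injOn (ball_l l hx) (ball_l l hy) h1
    ext i
    by_cases hi : i = l
    · rw [hi, hl]
    · rw [← vv_ne l m c x i hi, h, vv_ne l m c y i hi]
  · rintro z ⟨hz1, hz2, hz3⟩
    have hcont : ContinuousOn (fun w => w + c * HH m (nn l z) w) (Set.Icc (-1) 1) := by
      have : Continuous (HH m (nn l z)) :=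
        continuous_iff_continuousAt.2 fun w => (HH_deriv m _ w).continuousAt
      fun_prop
    obtain ⟨w, hw, hwz⟩ := intermediate_value_Icc (by norm_num) hcont
      (show z l ∈ _ by simpa [HH_neg_one] using ⟨hz2, hz3⟩)
    have hn : nn l (Function.update z l w) = nn l z :=
      nn_congr l (fun i hi => Function.update_of_ne hi _ _)
    refine ⟨Function.update z l w, ?_, ?_⟩
    · simp only [Set.mem_ofPred_eq]
      rw [norm_eq_max l, hn]
      exact max_le hz1 (by simpa using abs_le.2 hw)
    · ext i
      by_cases hi : i = l
      · rw [hi, vv_l, hn, Function.update_self]; exact hwz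
      · rw [vv_ne l m c _ i hi, Function.update_of_ne hi]

lemma vv_deriv (m : ℕ) (c : ℝ) : ∀ᵐ y : Fin d → ℝ, ‖y‖ < 1 →
    ∃ D : (Fin d → ℝ) →L[ℝ] (Fin d → ℝ), HasFDerivAt (vv l m c) D y ∧
      D.det = 1 + c * (1 - ‖y‖ ^ m) := by
  have hL : LipschitzOnWith (1 + 2 * m) (fun y : Fin d → ℝ => HH m (nn l y) (y l)) (Metric.ball 0 1) := by
    apply LipschitzOnWith.of_dist_le_mul
    intro x hx y hy
    rw [mem_ball_zero_iff] at hx hy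
    rw [dist_eq_norm, dist_eq_norm]
    exact_mod_cast HHv_lip l m x y hx.le hy.le
  filter_upwards [hL.ae_differentiableWithinAt_of_mem (μ := volume)] with y hy hy1
  have hmem : y ∈ Metric.ball (0 : Fin d → ℝ) 1 := by rwa [mem_ball_zero_iff]
  have hd := ((hy hmem).differentiableAt (Metric.isOpen_ball.mem_nhds hmem)).hasFDerivAt
  set f' := fderiv ℝ (fun y : Fin d → ℝ => HH m (nn l y) (y l)) y
  refine ⟨(1:ℝ) • ContinuousLinearMap.id ℝ _ + (c • f').smulRight (Pi.single l 1), ?_, ?_⟩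
  · rw [one_smul]
    exact (hasFDerivAt_id y).add ((hd.const_mul c).smul_const (Pi.single l 1 : Fin d → ℝ))
  · rw [det_smul_add d 1 one_ne_zero]
    have h1 : HasDerivAt (fun s : ℝ => y + s • (Pi.single l 1 : Fin d → ℝ)) (Pi.single l 1) 0 := by
      simpa using ((hasDerivAt_id (0:ℝ)).smul_const (Pi.single l 1 : Fin d → ℝ)).const_add y
    have h2 := HasFDerivAt.comp_hasDerivAt (x := (0:ℝ)) (l := fun y : Fin d → ℝ => HH m (nn l y) (y l)) (l' := f') (by simpa using hd) h1
    have h3 : (fun y : Fin d → ℝ => HH m (nn l y) (y l)) ∘ (fun s : ℝ => y + s • (Pi.single l 1 : Fin d → ℝ))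
        = fun s => HH m (nn l y) (y l + s) := by
      ext s
      have : nn l (y + s • (Pi.single l 1 : Fin d → ℝ)) = nn l y :=
        nn_congr l (fun i hi => by simp [hi])
      simp [this]
    rw [h3] at h2
    have h4 : HasDerivAt (fun s => HH m (nn l y) (y l + s)) (1 - (max (nn l y) |y l|) ^ m) 0 := by
      have := HH_deriv m (nn l y) (y l + 0)
      have := this.comp_const_add (y l) 0
      simpa using this
    have h5 := h2.unique h4
    rw [← norm_eq_max] at h5
    simp [h5]
end vmap

lemma null_image_lip {d : ℕ} (C : NNReal) (f : (Fin d → ℝ) → (Fin d → ℝ)) (S : Set (Fin d → ℝ))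
    (hf : LipschitzOnWith C f S) (hS : volume S = 0) : volume (f '' S) = 0 := by
  have h := hf.hausdorffMeasure_image_le (d := (d:ℝ)) (Nat.cast_nonneg d)
  have e : (Measure.hausdorffMeasure (d:ℝ) : Measure (Fin d → ℝ)) = volume := by
    have := hausdorffMeasure_pi_real (ι := Fin d)
    simpa using this
  rw [e, hS, mul_zero] at h
  exact le_antisymm h bot_le

lemma g_exists {d : ℕ} (l : Fin d) (m : ℕ) (η : ℝ) (hη : 0 < η) (hη2 : η ≤ 1/2)
    (hm : (d:ℝ) ≤ η * m) (C K0 C2 : ℝ)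
    (hK0 : K0 = (1 / (2 * η)) * (2 / η) ^ (d - 1))
    (hC2 : C2 = (1 + K0 / ((η / 2) * η ^ (d - 1))) / (η / 2))
    (hC : C = (2 * (1 + 2 * m) + 2 * K0) * C2) (ε : ℝ) (hε : |ε| ≤ 1 - 2 * η) :
    ∃ g : (Fin d → ℝ) → (Fin d → ℝ),
      Set.BijOn g {y | ‖y‖ ≤ 1} (TT l m (ε * (1 + d / m))) ∧
      (∀ y, ‖y‖ = 1 → g y = vv l m (ε * (1 + d / m)) y) ∧
      (∀ᵐ z : Fin d → ℝ, ‖z‖ < 1 → ∃ D : (Fin d → ℝ) →L[ℝ] (Fin d → ℝ),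
        HasFDerivAt g D z ∧ D.det = 1 + ε) ∧
      (∀ x y, ‖x‖ ≤ 1 → ‖y‖ ≤ 1 → ‖(g x - x) - (g y - y)‖ ≤ C * |ε| * ‖x - y‖) := by
  have hd : 1 ≤ d := by have := l.2; omega
  have hd0 : (0:ℝ) < d := by exact_mod_cast hd
  have hm0 : (0:ℝ) < m := by
    by_contra h
    have : η * m ≤ 0 := mul_nonpos_of_nonneg_of_nonpos hη.le (not_lt.1 h)
    linarith
  have hdm : (d:ℝ) / m ≤ η := by rw [div_le_iff₀ hm0]; exact hm
  have hdm0 : 0 < (d:ℝ) / m := by positivity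
  obtain ⟨he1, he2⟩ := abs_le.1 hε
  have h1e0 : 0 < 1 + ε := by linarith
  obtain ⟨lam, lam', hlam1, hlam⟩ := lam_exists d m hd η hη hη2 hm ε hε
  rw [← hK0] at hlam
  set q : ℝ := (d:ℝ) / m with hq
  set c := ε * (1 + q) with hcdef
  have hc : |c| ≤ 1 - η := by
    rw [hcdef, abs_mul, abs_of_pos (by linarith : 0 < 1 + q)]
    nlinarith [abs_nonneg ε]
  have hc' : |c| ≤ 2 * |ε| := by
    rw [hcdef, abs_mul, abs_of_pos (by linarith : 0 < 1 + q)]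
    nlinarith [abs_nonneg ε]
  have hK0p : 0 < K0 := by rw [hK0]; positivity
  have hC2p : 0 < C2 := by rw [hC2]; positivity
  obtain ⟨f1, -, f3, f4⟩ := radial_facts (E := Fin d → ℝ) lam lam' (K0 * |ε|) (η/2) ((η / 2) * η ^ (d - 1))
    (by positivity) (by positivity) (by positivity) hlam1
    (fun r hr => ⟨(hlam r hr).1, (hlam r hr).2.1, (hlam r hr).2.2.1, (hlam r hr).2.2.2.2⟩)
  obtain ⟨-, f2, -, -⟩ := radial_facts (E := Fin d → ℝ) lam lam' K0 (η/2) ((η / 2) * η ^ (d - 1))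
    (by positivity) (by positivity) (by positivity) hlam1
    (fun r hr => ⟨(hlam r hr).1, (hlam r hr).2.1, (hlam r hr).2.2.1.trans
      (mul_le_of_le_one_right hK0p.le (by linarith)), (hlam r hr).2.2.2.2⟩)
  rw [← hC2] at f2
  set p : (Fin d → ℝ) → (Fin d → ℝ) := fun y => lam ‖y‖ • y with hp
  set Bl : Set (Fin d → ℝ) := {y | ‖y‖ ≤ 1} with hBl
  have hpS : Set.SurjOn p Bl Bl := fun z hz => by
    obtain ⟨x, hx, hxz⟩ := f4 z hz; exact ⟨x, hx, hxz⟩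
  have hpI : Set.InjOn p Bl := fun x hx y hy h => by
    have := f2 x y hx hy
    change ‖x - y‖ ≤ C2 * ‖p x - p y‖ at this
    rw [h, sub_self, norm_zero, mul_zero] at this
    exact sub_eq_zero.1 (norm_le_zero_iff.1 this)
  set R := Function.invFunOn p Bl with hR
  have hRm : ∀ z, ‖z‖ ≤ 1 → ‖R z‖ ≤ 1 := fun z hz => Function.invFunOn_mem (hpS hz)
  have hpR : ∀ z, ‖z‖ ≤ 1 → p (R z) = z := fun z hz => Function.invFunOn_eq (hpS hz)
  have hp1 : ∀ y, ‖y‖ = 1 → p y = y := fun y hy => by simp [hp, hy, hlam1]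
  have hRp : ∀ y, ‖y‖ ≤ 1 → R (p y) = y := fun y hy =>
    hpI (hRm _ (f3 y hy)) hy (hpR _ (f3 y hy))
  have hRB : Set.BijOn R Bl Bl := by
    refine ⟨hRm, fun x hx y hy h => ?_, fun y hy => ⟨p y, f3 y hy, hRp y hy⟩⟩
    rw [← hpR x hx, h, hpR y hy]
  refine ⟨vv l m c ∘ R, (vv_bij l m c (by linarith)).comp hRB, ?_, ?_, ?_⟩
  · intro y hy
    have := hRp y hy.le
    rw [hp1 y hy] at this
    simp [this]
  · have hN : ∀ᵐ y : Fin d → ℝ, DifferentiableAt ℝ (fun x : Fin d → ℝ => ‖x‖) y :=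
      lipschitzWith_one_norm.ae_differentiableAt
    have hpLip : LipschitzOnWith (Real.toNNReal (1 + 2 * (K0 * |ε|))) p Bl := by
      apply LipschitzOnWith.of_dist_le_mul
      intro x hx y hy
      rw [dist_eq_norm, dist_eq_norm, Real.coe_toNNReal _ (by positivity)]
      have h1 := f1 x y hx hy
      have h2 : p x - p y = ((lam ‖x‖ • x - x) - (lam ‖y‖ • y - y)) + (x - y) := by
        simp only [hp]; abel
      rw [h2]
      refine (norm_add_le _ _).trans ?_
      linarith
    have hgood := hN.and (vv_deriv l m c)
    set S := {y : Fin d → ℝ | ¬ (DifferentiableAt ℝ (fun x : Fin d → ℝ => ‖x‖) y ∧ (‖y‖ < 1 →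
      ∃ D : (Fin d → ℝ) →L[ℝ] (Fin d → ℝ), HasFDerivAt (vv l m c) D y ∧
        D.det = 1 + c * (1 - ‖y‖ ^ m)))} with hS
    have hS0 : volume S = 0 := hgood
    have hpS0 : volume (p '' (S ∩ Bl)) = 0 :=
      null_image_lip _ p _ (hpLip.mono Set.inter_subset_right)
        (measure_mono_null Set.inter_subset_left hS0)
    have : ∀ᵐ z : Fin d → ℝ, z ∉ p '' (S ∩ Bl) := measure_eq_zero_iff_ae_notMem.1 hpS0
    filter_upwards [this] with z hz hz1
    set y := R z with hy
    have hyB : ‖y‖ ≤ 1 := hRm z hz1.le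
    have hpy : p y = z := hpR z hz1.le
    have hy1 : ‖y‖ < 1 := by
      refine lt_of_le_of_ne hyB fun h => ?_
      rw [hp1 y h] at hpy
      rw [← hpy] at hz1
      linarith
    have hyS : y ∉ S := fun h => hz ⟨y, ⟨h, hyB⟩, hpy⟩
    simp only [hS, Set.mem_ofPred_eq, not_not] at hyS
    obtain ⟨hn, hv⟩ := hyS
    obtain ⟨Dv, hDv, hdet⟩ := hv hy1
    obtain ⟨g1, g2, g3, g4, g5⟩ := hlam ‖y‖ ⟨norm_nonneg _, hyB⟩
    have hDp := radial_deriv lam (lam' ‖y‖) y g1 hn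
    set Dp := lam ‖y‖ • ContinuousLinearMap.id ℝ (Fin d → ℝ) + (lam' ‖y‖ • fderiv ℝ (fun x : Fin d → ℝ => ‖x‖) y).smulRight y with hDpd
    have hlp : 0 < lam ‖y‖ := by linarith
    have hdp : Dp.det * (1 + ε) = 1 + c * (1 - ‖y‖ ^ m) := by
      rw [← g4, hDpd, det_smul_add d _ hlp.ne', smul_apply, hn.fderiv_norm_self]
      have : lam ‖y‖ ^ d = lam ‖y‖ ^ (d-1) * lam ‖y‖ := by rw [← pow_succ, Nat.sub_add_cancel hd]
      rw [this, smul_eq_mul]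
      field_simp
    have hpos : 0 < 1 + c * (1 - ‖y‖ ^ m) := by
      have h0 : 0 ≤ ‖y‖ ^ m := by positivity
      have h1 : ‖y‖ ^ m ≤ 1 := pow_le_one₀ (norm_nonneg _) hyB
      have := (abs_le.1 hc).1
      nlinarith
    have hne : Dp.det ≠ 0 := by
      intro h; rw [h, zero_mul] at hdp; linarith
    set e := Dp.toContinuousLinearEquivOfDetNeZero hne with he
    have hec : (e : (Fin d → ℝ) →L[ℝ] (Fin d → ℝ)) = Dp := Dp.coe_toContinuousLinearEquivOfDetNeZero hne
    have hnb : ∀ᶠ z' in nhds z, ‖z'‖ ≤ 1 := by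
      have : Metric.ball (0 : Fin d → ℝ) 1 ∈ nhds z :=
        Metric.isOpen_ball.mem_nhds (by rwa [mem_ball_zero_iff])
      filter_upwards [this] with z' hz'
      rw [mem_ball_zero_iff] at hz'
      exact hz'.le
    have hRc : ContinuousAt R z := by
      have hRL : LipschitzOnWith (Real.toNNReal C2) R Bl := by
        apply LipschitzOnWith.of_dist_le_mul
        intro x hx y hy
        rw [dist_eq_norm, dist_eq_norm, Real.coe_toNNReal _ hC2p.le]
        have := f2 (R x) (R y) (hRm x hx) (hRm y hy)
        change _ ≤ C2 * ‖p (R x) - p (R y)‖ at this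
        rwa [hpR x hx, hpR y hy] at this
      exact hRL.continuousOn.continuousAt hnb
    have hRd : HasFDerivAt R (e.symm : (Fin d → ℝ) →L[ℝ] (Fin d → ℝ)) z := by
      refine HasFDerivAt.of_local_left_inverse (f := p) hRc ?_ (hnb.mono fun z' hz' => hpR z' hz')
      rw [hec]; exact hDp
    refine ⟨Dv.comp (e.symm : (Fin d → ℝ) →L[ℝ] (Fin d → ℝ)), hDv.comp z hRd, ?_⟩
    have hmul : (Dv.comp (e.symm : (Fin d → ℝ) →L[ℝ] (Fin d → ℝ))).det * Dp.det = Dv.det := by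
      rw [← hec]
      simp only [ContinuousLinearMap.det]
      rw [← LinearMap.det_comp]
      congr 1
      ext1 x
      ext
      simp
    rw [hdet, ← hdp, mul_comm (Dp.det)] at hmul
    exact mul_right_cancel₀ hne hmul
  · intro x y hx hy
    have hx' := hRm x hx
    have hy' := hRm y hy
    have k1 := vv_lip l m c (R x) (R y) hx' hy'
    have k2 := f1 (R x) (R y) hx' hy'
    have k3 := f2 (R x) (R y) hx' hy'
    change _ ≤ C2 * ‖p (R x) - p (R y)‖ at k3
    change ‖(p (R x) - R x) - (p (R y) - R y)‖ ≤ _ at k2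
    rw [hpR x hx, hpR y hy] at k2 k3
    have e : ((vv l m c ∘ R) x - x) - ((vv l m c ∘ R) y - y) =
      ((vv l m c (R x) - R x) - (vv l m c (R y) - R y)) - ((x - R x) - (y - R y)) := by
      simp only [Function.comp]; abel
    rw [e]
    refine (norm_sub_le _ _).trans ?_
    calc _ ≤ |c| * (1 + 2 * m) * ‖R x - R y‖ + 2 * (K0 * |ε|) * ‖R x - R y‖ := add_le_add k1 k2
      _ ≤ (2 * |ε|) * (1 + 2 * m) * ‖R x - R y‖ + 2 * (K0 * |ε|) * ‖R x - R y‖ := by gcongr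
      _ = (2 * (1 + 2 * m) + 2 * K0) * |ε| * ‖R x - R y‖ := by ring
      _ ≤ (2 * (1 + 2 * m) + 2 * K0) * |ε| * (C2 * ‖x - y‖) := by gcongr
      _ = _ := by rw [hC]; ring

section aff
variable {d : ℕ}

noncomputable def Dg (b : Fin d → ℝ) : (Fin d → ℝ) →L[ℝ] (Fin d → ℝ) :=
  ContinuousLinearMap.pi (fun i => b i • ContinuousLinearMap.proj i)

noncomputable def aff (b t x : Fin d → ℝ) : Fin d → ℝ := fun i => b i * x i + t i

lemma aff_deriv (b t x : Fin d → ℝ) : HasFDerivAt (aff b t) (Dg b) x := by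
  have : aff b t = fun x => Dg b x + t := by
    ext x i; simp [aff, Dg]
  rw [this]
  exact (Dg b).hasFDerivAt.add_const t

lemma det_conj (b b' : Fin d → ℝ) (h : ∀ i, b' i * b i = 1) (D : (Fin d → ℝ) →L[ℝ] (Fin d → ℝ)) :
    ((Dg b').comp (D.comp (Dg b))).det = D.det := by
  have h1 : (Dg b').det * (Dg b).det = 1 := by
    simp only [ContinuousLinearMap.det]
    rw [← LinearMap.det_comp]
    have : ((Dg b' : (Fin d → ℝ) →L[ℝ] (Fin d → ℝ)) : (Fin d → ℝ) →ₗ[ℝ] (Fin d → ℝ)) ∘ₗ (Dg b : (Fin d → ℝ) →L[ℝ] (Fin d → ℝ)) = LinearMap.id := by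
      apply LinearMap.ext
      intro x
      ext i
      simp [Dg, ← mul_assoc, h]
    rw [this, LinearMap.det_id]
  simp only [ContinuousLinearMap.det] at h1 ⊢
  rw [ContinuousLinearMap.toLinearMap_comp, ContinuousLinearMap.toLinearMap_comp, LinearMap.det_comp, LinearMap.det_comp]
  linear_combination (LinearMap.det (D : (Fin d → ℝ) →ₗ[ℝ] (Fin d → ℝ))) * h1

lemma aff_ae (b b' t : Fin d → ℝ) (h : ∀ i, b' i * b i = 1) (P : (Fin d → ℝ) → Prop)
    (hP : ∀ᵐ z : Fin d → ℝ, P z) : ∀ᵐ x : Fin d → ℝ, P (aff b t x) := by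
  have h0 : volume {z | ¬ P z} = 0 := hP
  have h1 : volume (aff b' (fun i => - (b' i * t i)) '' {z | ¬ P z}) = 0 :=
    addHaar_image_eq_zero_of_differentiableOn_of_addHaar_eq_zero volume
      (fun x _ => (aff_deriv _ _ x).differentiableAt.differentiableWithinAt) h0
  refine measure_mono_null ?_ h1
  intro x hx
  refine ⟨aff b t x, hx, ?_⟩
  ext i
  simp only [aff]
  linear_combination x i * h i

lemma conj_ae (b b' t t' : Fin d → ℝ) (h : ∀ i, b' i * b i = 1) (Q : (Fin d → ℝ) → Prop)
    (g : (Fin d → ℝ) → (Fin d → ℝ)) (k : ℝ)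
    (hg : ∀ᵐ z : Fin d → ℝ, Q z → ∃ D : (Fin d → ℝ) →L[ℝ] (Fin d → ℝ), HasFDerivAt g D z ∧ D.det = k) :
    ∀ᵐ x : Fin d → ℝ, Q (aff b t x) → ∃ D : (Fin d → ℝ) →L[ℝ] (Fin d → ℝ),
      HasFDerivAt (fun x => aff b' t' (g (aff b t x))) D x ∧ D.det = k := by
  filter_upwards [aff_ae b b' t h _ hg] with x hx hQ
  obtain ⟨D, hD, hk⟩ := hx hQ
  exact ⟨(Dg b').comp (D.comp (Dg b)), (aff_deriv b' t' _).comp x (hD.comp x (aff_deriv b t x)),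
    by rw [det_conj b b' h, hk]⟩
end aff

section half
variable {d : ℕ} (l : Fin d)

noncomputable def aa (i : Fin d) : ℝ := if i = l then 4 else 2
noncomputable def LL : (Fin d → ℝ) → (Fin d → ℝ) := aff (aa l) (fun _ => -1)
noncomputable def LI : (Fin d → ℝ) → (Fin d → ℝ) := aff (fun i => (aa l i)⁻¹) (fun i => (aa l i)⁻¹)

lemma aa_ne (i : Fin d) : aa l i ≠ 0 := by unfold aa; split_ifs <;> norm_num
lemma aa_l : aa l l = 4 := by simp [aa]
lemma aa_o (i : Fin d) (h : i ≠ l) : aa l i = 2 := by simp [aa, h]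

lemma LI_LL (x : Fin d → ℝ) : LI l (LL l x) = x := by
  ext i; simp only [LI, LL, aff]; have := aa_ne l i; field_simp; ring
lemma LL_LI (x : Fin d → ℝ) : LL l (LI l x) = x := by
  ext i; simp only [LI, LL, aff]; have := aa_ne l i; field_simp; ring

def AA : Set (Fin d → ℝ) := {x ∈ unitCube d | x l ≤ 1 / 2}

lemma LL_mem (x : Fin d → ℝ) : ‖LL l x‖ ≤ 1 ↔ x ∈ AA l := by
  rw [pi_norm_le_iff_of_nonneg zero_le_one]
  constructor
  · intro h
    refine ⟨fun i => ?_, ?_⟩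
    · have := abs_le.1 (h i)
      by_cases hi : i = l
      · subst hi; simp only [LL, aff, aa_l] at this; constructor <;> linarith
      · simp only [LL, aff, aa_o l i hi] at this; constructor <;> linarith
    · have := abs_le.1 (h l)
      simp only [LL, aff, aa_l] at this; linarith
  · rintro ⟨h1, h2⟩ i
    rw [Real.norm_eq_abs, abs_le]
    have := h1 i
    by_cases hi : i = l
    · subst hi; simp only [LL, aff, aa_l]; constructor <;> linarith
    · simp only [LL, aff, aa_o l i hi]; constructor <;> linarith

lemma LL_lt (x : Fin d → ℝ) (h0 : ∀ i, 0 < x i ∧ x i < 1) (h1 : x l < 1/2) : ‖LL l x‖ < 1 := by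
  rw [pi_norm_lt_iff zero_lt_one]
  intro i
  rw [Real.norm_eq_abs, abs_lt]
  have := h0 i
  by_cases hi : i = l
  · subst hi; simp only [LL, aff, aa_l]; constructor <;> linarith
  · simp only [LL, aff, aa_o l i hi]; constructor <;> linarith

noncomputable def th (m : ℕ) (x : Fin d → ℝ) : ℝ := (1 + d / m) / 4 * HH m (nn l (LL l x)) 1

lemma th_congr (m : ℕ) {x y : Fin d → ℝ} (h : ∀ i, i ≠ l → x i = y i) : th l m x = th l m y := by
  unfold th
  rw [nn_congr l (x := LL l x) (y := LL l y)]
  intro i hi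
  simp [LL, aff, h i hi]

def TA (m : ℕ) (ε : ℝ) : Set (Fin d → ℝ) := {x ∈ unitCube d | x l ≤ 1 / 2 + ε * th l m x}

lemma LL_TT (m : ℕ) (ε : ℝ) (hc : |ε * (1 + d / m)| ≤ 1) (x : Fin d → ℝ) :
    LL l x ∈ TT l m (ε * (1 + d / m)) ↔ x ∈ TA l m ε := by
  have hl : LL l x l = 4 * x l - 1 := by simp [LL, aff, aa_l]; ring
  have ho : ∀ i, i ≠ l → LL l x i = 2 * x i - 1 := fun i hi => by simp [LL, aff, aa_o l i hi]; ring
  have hnn : nn l (LL l x) ≤ 1 ↔ ∀ i, i ≠ l → 0 ≤ x i ∧ x i ≤ 1 := by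
    unfold nn
    rw [pi_norm_le_iff_of_nonneg zero_le_one]
    constructor
    · intro h i hi
      have := h i
      rw [Function.update_of_ne hi, ho i hi, Real.norm_eq_abs, abs_le] at this
      constructor <;> linarith
    · intro h i
      by_cases hi : i = l
      · subst hi; simp
      · have := h i hi
        rw [Function.update_of_ne hi, ho i hi, Real.norm_eq_abs, abs_le]
        constructor <;> linarith
  have key : ε * th l m x = (ε * (1 + d / m)) * HH m (nn l (LL l x)) 1 / 4 := by
    unfold th; ring
  constructor
  · rintro ⟨h1, h2, h3⟩
    have hb : |(ε * (1 + d / m)) * HH m (nn l (LL l x)) 1| ≤ 2 := by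
      have := HH_lip1 m (nn l (LL l x)) 1 (-1) ⟨nn_nonneg l _, h1⟩ (by simp) (by simp)
      rw [HH_neg_one, sub_zero] at this
      norm_num at this
      rw [abs_mul]
      nlinarith [abs_nonneg (HH m (nn l (LL l x)) 1), abs_nonneg (ε * (1 + d / m))]
    have hb2 := (abs_le.1 hb).2
    rw [hl] at h2 h3
    refine ⟨fun i => ?_, by rw [key]; linarith⟩
    by_cases hi : i = l
    · subst hi; constructor <;> linarith
    · exact hnn.1 h1 i hi
  · rintro ⟨h1, h2⟩
    rw [key] at h2
    refine ⟨hnn.2 fun i _ => h1 i, ?_, ?_⟩ <;> rw [hl]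
    · linarith [(h1 l).1]
    · linarith

lemma half_exists (m : ℕ) (η : ℝ) (hη : 0 < η) (hη2 : η ≤ 1/2)
    (hm : (d:ℝ) ≤ η * m) (C K0 C2 : ℝ)
    (hK0 : K0 = (1 / (2 * η)) * (2 / η) ^ (d - 1))
    (hC2 : C2 = (1 + K0 / ((η / 2) * η ^ (d - 1))) / (η / 2))
    (hC : C = (2 * (1 + 2 * m) + 2 * K0) * C2) (ε : ℝ) (hε : |ε| ≤ 1 - 2 * η) :
    ∃ G : (Fin d → ℝ) → (Fin d → ℝ),
      Set.BijOn G (AA l) (TA l m ε) ∧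
      (∀ x ∈ AA l, x l = 1/2 → G x = Function.update x l (1 / 2 + ε * th l m x)) ∧
      (∀ x ∈ AA l, (x l = 0 ∨ ∃ i, i ≠ l ∧ (x i = 0 ∨ x i = 1)) → G x = x) ∧
      (∀ᵐ x : Fin d → ℝ, ((∀ i, 0 < x i ∧ x i < 1) ∧ x l < 1/2) →
        ∃ D : (Fin d → ℝ) →L[ℝ] (Fin d → ℝ), HasFDerivAt G D x ∧ D.det = 1 + ε) ∧
      (∀ x ∈ AA l, ∀ y ∈ AA l, ‖(G x - x) - (G y - y)‖ ≤ 2 * C * |ε| * ‖x - y‖) := by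
  have hd : 1 ≤ d := by have := l.2; omega
  have hd0 : (0:ℝ) < d := by exact_mod_cast hd
  have hm0 : (0:ℝ) < m := by
    by_contra h
    have : η * m ≤ 0 := mul_nonpos_of_nonneg_of_nonpos hη.le (not_lt.1 h)
    linarith
  have hdm : (d:ℝ) / m ≤ η := by rw [div_le_iff₀ hm0]; exact hm
  have hdm0 : 0 < (d:ℝ) / m := by positivity
  have hc : |ε * (1 + d / m)| ≤ 1 := by
    rw [abs_mul, abs_of_pos (by linarith : 0 < 1 + (d:ℝ) / m)]
    nlinarith [abs_nonneg ε]
  have hCp : 0 ≤ C := by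
    have : 0 ≤ K0 := by rw [hK0]; positivity
    have : 0 ≤ C2 := by rw [hC2]; positivity
    rw [hC]; positivity
  obtain ⟨g, g1, g2, g3, g4⟩ := g_exists l m η hη hη2 hm C K0 C2 hK0 hC2 hC ε hε
  have hbd : ∀ x ∈ AA l, (x l = 1/2 ∨ x l = 0 ∨ ∃ i, i ≠ l ∧ (x i = 0 ∨ x i = 1)) →
      LI l (g (LL l x)) = Function.update x l (x l + ε * ((1 + d / m) / 4 * HH m (nn l (LL l x)) (4 * x l - 1))) := by
    intro x hx h
    have hn : ‖LL l x‖ = 1 := by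
      apply le_antisymm ((LL_mem l x).2 hx)
      have key : ∀ i, |LL l x i| = 1 → 1 ≤ ‖LL l x‖ := fun i hi => by
        rw [← hi]; exact norm_le_pi_norm (LL l x) i
      rcases h with h | h | ⟨i, hi, h | h⟩
      · apply key l; simp [LL, aff, aa_l, h]; norm_num
      · apply key l; simp [LL, aff, h]
      · apply key i; simp [LL, aff, h]
      · apply key i; simp [LL, aff, aa_o l i hi, h]; norm_num
    rw [g2 _ hn]
    ext i
    by_cases hi : i = l
    · subst hi
      simp only [LI, aff, vv_l, Function.update_self, aa_l]
      have : LL i x i = 4 * x i - 1 := by simp [LL, aff, aa_l]; ring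
      rw [this]; ring
    · simp only [LI, aff, vv_ne l m _ _ i hi, Function.update_of_ne hi]
      have := congrFun (LI_LL l x) i
      simpa only [LI, aff] using this
  refine ⟨fun x => LI l (g (LL l x)), ?_, ?_, ?_, ?_, ?_⟩
  · refine ⟨?_, ?_, ?_⟩
    · intro x hx
      rw [← LL_TT l m ε hc, LL_LI]
      exact g1.1 ((LL_mem l x).2 hx)
    · intro x hx y hy h
      have h1 := congrArg (LL l) h
      simp only [LL_LI] at h1
      have h2 := g1.2.1 ((LL_mem l x).2 hx) ((LL_mem l y).2 hy) h1
      rw [← LI_LL l x, h2, LI_LL]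
    · intro z hz
      obtain ⟨y, hy, hyz⟩ := g1.2.2 ((LL_TT l m ε hc z).2 hz)
      refine ⟨LI l y, (LL_mem l _).1 (by rw [LL_LI]; exact hy), ?_⟩
      simp only [LL_LI, hyz, LI_LL]
  · intro x hx h
    simp only
    rw [hbd x hx (Or.inl h), h]
    unfold th
    norm_num
  · intro x hx h
    simp only
    rw [hbd x hx (Or.inr h)]
    have h0 : HH m (nn l (LL l x)) (4 * x l - 1) = 0 := by
      rcases h with h | ⟨i, hi, h⟩
      · rw [h]; norm_num [HH_neg_one]
      · have hn : nn l (LL l x) = 1 := by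
          apply le_antisymm (ball_n l ((LL_mem l x).2 hx)).2
          have h3 : |LL l x i| = 1 := by
            rcases h with h | h <;> simp [LL, aff, aa_o l i hi, h]
            norm_num
          rw [← h3]
          have := norm_le_pi_norm (Function.update (LL l x) l 0) i
          rwa [Function.update_of_ne hi] at this
        rw [hn]
        apply HH_one
        · linarith [(hx.1 l).1]
        · linarith [hx.2]
    rw [h0]; simp
  · have := conj_ae (aa l) (fun i => (aa l i)⁻¹) (fun _ => -1) (fun i => (aa l i)⁻¹)
      (fun i => inv_mul_cancel₀ (aa_ne l i)) (fun z => ‖z‖ < 1) g (1 + ε) g3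
    filter_upwards [this] with x hx hx1
    exact hx (LL_lt l x hx1.1 hx1.2)
  · intro x hx y hy
    have h := g4 _ _ ((LL_mem l x).2 hx) ((LL_mem l y).2 hy)
    have hL : ‖LL l x - LL l y‖ ≤ 4 * ‖x - y‖ := by
      rw [pi_norm_le_iff_of_nonneg (by positivity)]
      intro i
      have h1 := norm_le_pi_norm (x - y) i
      have : (LL l x - LL l y) i = aa l i * (x - y) i := by simp [LL, aff]; ring
      rw [this, norm_mul]
      have : ‖aa l i‖ ≤ 4 := by unfold aa; split_ifs <;> norm_num
      gcongr
    have h2 : ‖g (LL l x) - LL l x - (g (LL l y) - LL l y)‖ ≤ 4 * C * |ε| * ‖x - y‖ := by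
      refine h.trans ?_
      calc _ ≤ C * |ε| * (4 * ‖x - y‖) := by gcongr
        _ = _ := by ring
    rw [pi_norm_le_iff_of_nonneg (by positivity)]
    intro i
    have h3 := (norm_le_pi_norm _ i).trans h2
    set W := (g (LL l x) - LL l x - (g (LL l y) - LL l y)) with hW
    have h4 : (LI l (g (LL l x)) - x - (LI l (g (LL l y)) - y)) i = (aa l i)⁻¹ * W i := by
      have hx := congrFun (LI_LL l x) i
      have hy := congrFun (LI_LL l y) i
      simp only [hW, Pi.sub_apply]
      conv_lhs => rw [← hx, ← hy]
      simp only [LI, aff]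
      ring
    rw [h4, norm_mul]
    have h5 : ‖(aa l i)⁻¹‖ ≤ 1/2 := by unfold aa; split_ifs <;> norm_num
    calc _ ≤ 1/2 * (4 * C * |ε| * ‖x - y‖) := by gcongr
      _ = _ := by ring
end half

section glue
variable {d : ℕ} (l : Fin d)

noncomputable def ss (i : Fin d) : ℝ := if i = l then -1 else 1
noncomputable def tt (i : Fin d) : ℝ := if i = l then 1 else 0
noncomputable def SS : (Fin d → ℝ) → (Fin d → ℝ) := aff (ss l) (tt l)

lemma SS_l (x : Fin d → ℝ) : SS l x l = 1 - x l := by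
  simp [SS, aff, ss, tt]; ring

lemma SS_ne (x : Fin d → ℝ) (i : Fin d) (h : i ≠ l) : SS l x i = x i := by
  simp [SS, aff, ss, tt, h]

lemma ss_sq (i : Fin d) : ss l i * ss l i = 1 := by
  unfold ss; split_ifs <;> norm_num

lemma SS_SS (x : Fin d → ℝ) : SS l (SS l x) = x := by
  ext i
  by_cases h : i = l
  · subst h; rw [SS_l, SS_l]; ring
  · rw [SS_ne l _ i h, SS_ne l _ i h]

lemma SS_cube (x : Fin d → ℝ) (hx : x ∈ unitCube d) : SS l x ∈ unitCube d := by
  intro i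
  have := hx i
  by_cases h : i = l
  · subst h; rw [SS_l]; constructor <;> linarith
  · rw [SS_ne l _ i h]; exact this

lemma SS_norm (u v x y : Fin d → ℝ) :
    ‖(SS l u - SS l x) - (SS l v - SS l y)‖ = ‖(u - x) - (v - y)‖ := by
  have h : ∀ i, ‖((SS l u - SS l x) - (SS l v - SS l y)) i‖ = ‖((u - x) - (v - y)) i‖ := by
    intro i
    by_cases h : i = l
    · subst h
      simp only [Pi.sub_apply, SS_l]
      rw [← norm_neg]; congr 1; ring
    · simp only [Pi.sub_apply, SS_ne l _ i h]
  apply le_antisymm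
  · refine (pi_norm_le_iff_of_nonneg (norm_nonneg _)).2 fun i => ?_
    rw [h i]; exact norm_le_pi_norm _ i
  · refine (pi_norm_le_iff_of_nonneg (norm_nonneg _)).2 fun i => ?_
    rw [← h i]; exact norm_le_pi_norm _ i

lemma SS_norm2 (x y : Fin d → ℝ) : ‖SS l x - SS l y‖ = ‖x - y‖ := by
  have := SS_norm l x y 0 0
  have e : ∀ a b c : Fin d → ℝ, (a - c) - (b - c) = a - b := by intros; abel
  simpa only [e] using this

def HalfOK (θ : (Fin d → ℝ) → ℝ) (ε K : ℝ) (G : (Fin d → ℝ) → (Fin d → ℝ)) : Prop :=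
  Set.BijOn G (AA l) {x ∈ unitCube d | x l ≤ 1 / 2 + ε * θ x} ∧
  (∀ x ∈ AA l, x l = 1/2 → G x = Function.update x l (1 / 2 + ε * θ x)) ∧
  (∀ x ∈ AA l, (x l = 0 ∨ ∃ i, i ≠ l ∧ (x i = 0 ∨ x i = 1)) → G x = x) ∧
  (∀ᵐ x : Fin d → ℝ, ((∀ i, 0 < x i ∧ x i < 1) ∧ x l < 1/2) →
    ∃ D : (Fin d → ℝ) →L[ℝ] (Fin d → ℝ), HasFDerivAt G D x ∧ D.det = 1 + ε) ∧
  (∀ x ∈ AA l, ∀ y ∈ AA l, ‖(G x - x) - (G y - y)‖ ≤ K * ‖x - y‖)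

lemma SS_AA (x : Fin d → ℝ) (hx : x ∈ unitCube d) (h : 1/2 ≤ x l) : SS l x ∈ AA l :=
  ⟨SS_cube l x hx, by rw [SS_l]; linarith⟩

lemma cube_pi : unitCube d = Set.pi Set.univ (fun _ : Fin d => Set.Icc (0:ℝ) 1) := by
  ext x
  exact ⟨fun h i _ => h i, fun h i => h i (Set.mem_univ i)⟩

lemma cube_closed : IsClosed (unitCube d) := by
  rw [cube_pi]; exact isClosed_set_pi fun _ _ => isClosed_Icc

lemma cube_bd (x : Fin d → ℝ) (hx : x ∈ frontier (unitCube d)) :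
    x ∈ unitCube d ∧ ∃ i, x i = 0 ∨ x i = 1 := by
  have hc : IsClosed (unitCube d) := cube_closed
  have hxc : x ∈ unitCube d := hc.frontier_subset hx
  refine ⟨hxc, ?_⟩
  by_contra hcon
  push Not at hcon
  apply hx.2
  rw [cube_pi, interior_pi_set Set.finite_univ]
  intro i _
  rw [interior_Icc]
  exact ⟨lt_of_le_of_ne (hxc i).1 (Ne.symm (hcon i).1), lt_of_le_of_ne (hxc i).2 (hcon i).2⟩

lemma ae_good : ∀ᵐ x : Fin d → ℝ, (∀ i, x i ≠ 0 ∧ x i ≠ 1) ∧ x l ≠ 1/2 := by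
  have h : ∀ (i : Fin d) (c : ℝ), ∀ᵐ x : Fin d → ℝ, x i ≠ c := by
    intro i c
    rw [volume_pi]
    exact Measure.ae_eval_ne (μ := fun _ : Fin d => (volume : Measure ℝ)) i c
  filter_upwards [ae_all_iff.2 fun i => h i 0, ae_all_iff.2 fun i => h i 1, h l (1/2)] with x a b c
  exact ⟨fun i => ⟨a i, b i⟩, c⟩

lemma mid_point (x y : Fin d → ℝ) (hx : x ∈ unitCube d) (hy : y ∈ unitCube d)
    (hxl : x l ≤ 1/2) (hyl : 1/2 < y l) :
    ∃ z ∈ unitCube d, z l = 1/2 ∧ ‖x - z‖ + ‖z - y‖ = ‖x - y‖ := by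
  have hp : 0 < y l - x l := by linarith
  set τ := (1/2 - x l) / (y l - x l) with hτ
  have h0 : 0 ≤ τ := div_nonneg (by linarith) hp.le
  have h1 : τ ≤ 1 := by rw [hτ, div_le_one hp]; linarith
  refine ⟨fun i => x i + τ * (y i - x i), ?_, ?_, ?_⟩
  · intro i
    have a := hx i
    have b := hy i
    constructor <;> nlinarith
  · show x l + τ * (y l - x l) = 1/2
    rw [hτ, div_mul_cancel₀ _ hp.ne']; ring
  · have e1 : (x - fun i => x i + τ * (y i - x i)) = τ • (x - y) := by
      ext i; simp; ring
    have e2 : ((fun i => x i + τ * (y i - x i)) - y) = (1 - τ) • (x - y) := by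
      ext i; simp; ring
    rw [e1, e2, norm_smul, norm_smul, Real.norm_of_nonneg h0, Real.norm_of_nonneg (by linarith)]
    ring

set_option maxHeartbeats 1000000 in
lemma glue (θ : (Fin d → ℝ) → ℝ) (hθ : ∀ x y, (∀ i, i ≠ l → x i = y i) → θ x = θ y)
    (ε K : ℝ) (G1 G2 : (Fin d → ℝ) → (Fin d → ℝ))
    (H1 : HalfOK l θ ε K G1) (H2 : HalfOK l θ (-ε) K G2) :
    ∃ Φ : (Fin d → ℝ) → (Fin d → ℝ),
      Set.BijOn Φ (unitCube d) (unitCube d) ∧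
      (∀ x ∈ frontier (unitCube d), Φ x = x) ∧
      (∀ᵐ x ∂(volume.restrict {x ∈ unitCube d | x l ≤ 1 / 2}),
        ∃ D : (Fin d → ℝ) →L[ℝ] (Fin d → ℝ),
          HasFDerivWithinAt Φ D (unitCube d) x ∧ D.det = 1 + ε) ∧
      (∀ᵐ x ∂(volume.restrict {x ∈ unitCube d | 1 / 2 ≤ x l}),
        ∃ D : (Fin d → ℝ) →L[ℝ] (Fin d → ℝ),
          HasFDerivWithinAt Φ D (unitCube d) x ∧ D.det = 1 + -ε) ∧
      (∀ x ∈ unitCube d, ∀ y ∈ unitCube d, ‖(Φ x - x) - (Φ y - y)‖ ≤ K * ‖x - y‖) := by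
  obtain ⟨b1, c1, f1, d1, l1⟩ := H1
  obtain ⟨b2, c2, f2, d2, l2⟩ := H2
  have hθS : ∀ x, θ (SS l x) = θ x := fun x => hθ _ _ fun i hi => SS_ne l x i hi
  set B : Set (Fin d → ℝ) := {x ∈ unitCube d | 1 / 2 ≤ x l} with hB
  set TB : Set (Fin d → ℝ) := {x ∈ unitCube d | 1 / 2 + ε * θ x ≤ x l} with hTB
  have bB : Set.BijOn (fun x => SS l (G2 (SS l x))) B TB := by
    have h1 : Set.BijOn (SS l) B (AA l) := by
      refine Set.InvOn.bijOn (f' := SS l) ⟨fun x _ => SS_SS l x, fun x _ => SS_SS l x⟩ ?_ ?_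
      · intro x hx; exact SS_AA l x hx.1 hx.2
      · intro x hx
        refine ⟨SS_cube l x hx.1, ?_⟩
        have := hx.2
        rw [SS_l]; linarith
    have h3 : Set.BijOn (SS l) {x ∈ unitCube d | x l ≤ 1 / 2 + -ε * θ x} TB := by
      refine Set.InvOn.bijOn (f' := SS l) ⟨fun x _ => SS_SS l x, fun x _ => SS_SS l x⟩ ?_ ?_
      · intro x hx
        refine ⟨SS_cube l x hx.1, ?_⟩
        have := hx.2
        rw [SS_l, hθS]; linarith
      · intro x hx
        refine ⟨SS_cube l x hx.1, ?_⟩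
        have := hx.2
        rw [SS_l, hθS]; linarith
    exact h3.comp (b2.comp h1)
  have cB : ∀ x ∈ AA l, x l = 1/2 → SS l (G2 (SS l x)) = Function.update x l (1 / 2 + ε * θ x) := by
    intro x hx hxl
    have e : SS l x = x := by
      ext i
      by_cases h : i = l
      · subst h; rw [SS_l]; linarith
      · rw [SS_ne l x i h]
    rw [e, c2 x hx hxl]
    ext i
    by_cases h : i = l
    · subst h; rw [SS_l]; simp; ring
    · rw [SS_ne l _ i h]; simp [h]
  set Φ : (Fin d → ℝ) → (Fin d → ℝ) := fun x => if x l ≤ 1/2 then G1 x else SS l (G2 (SS l x)) with hΦ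
  have Φ1 : ∀ x ∈ AA l, Φ x = G1 x := fun x hx => if_pos hx.2
  have Φ2 : ∀ x ∈ B, Φ x = SS l (G2 (SS l x)) := by
    intro x hx
    by_cases h : x l ≤ 1/2
    · have hA : x ∈ AA l := ⟨hx.1, h⟩
      have hh : x l = 1/2 := le_antisymm h hx.2
      rw [Φ1 x hA, c1 x hA hh, cB x hA hh]
    · exact if_neg h
  have B1 : Set.BijOn Φ (AA l) {x ∈ unitCube d | x l ≤ 1 / 2 + ε * θ x} :=
    b1.congr fun x hx => (Φ1 x hx).symm
  have B2 : Set.BijOn Φ B TB := bB.congr fun x hx => (Φ2 x hx).symm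
  have L2 : ∀ x ∈ B, ∀ y ∈ B, ‖(Φ x - x) - (Φ y - y)‖ ≤ K * ‖x - y‖ := by
    intro x hx y hy
    have := l2 _ (SS_AA l x hx.1 hx.2) _ (SS_AA l y hy.1 hy.2)
    rw [SS_norm2, ← SS_norm l, SS_SS, SS_SS] at this
    rw [Φ2 x hx, Φ2 y hy]; exact this
  have L1 : ∀ x ∈ AA l, ∀ y ∈ AA l, ‖(Φ x - x) - (Φ y - y)‖ ≤ K * ‖x - y‖ := by
    intro x hx y hy
    rw [Φ1 x hx, Φ1 y hy]; exact l1 x hx y hy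
  have L3 : ∀ x ∈ AA l, ∀ y ∈ unitCube d, 1/2 < y l → ‖(Φ x - x) - (Φ y - y)‖ ≤ K * ‖x - y‖ := by
    intro x hx y hy hyl
    obtain ⟨z, hz, hzl, hn⟩ := mid_point l x y hx.1 hy hx.2 hyl
    have h1 := L1 x hx z ⟨hz, hzl.le⟩
    have h2 := L2 z ⟨hz, hzl.ge⟩ y ⟨hy, hyl.le⟩
    calc _ = ‖((Φ x - x) - (Φ z - z)) + ((Φ z - z) - (Φ y - y))‖ := by congr 1; abel
      _ ≤ _ := norm_add_le _ _
      _ ≤ K * ‖x - z‖ + K * ‖z - y‖ := add_le_add h1 h2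
      _ = _ := by rw [← hn]; ring
  refine ⟨Φ, ?_, ?_, ?_, ?_, ?_⟩
  · have hU : AA l ∪ B = unitCube d := by
      ext x; constructor
      · rintro (h | h) <;> exact h.1
      · intro h
        rcases le_total (x l) (1/2) with h' | h'
        · exact Or.inl ⟨h, h'⟩
        · exact Or.inr ⟨h, h'⟩
    have hU2 : {x ∈ unitCube d | x l ≤ 1 / 2 + ε * θ x} ∪ TB = unitCube d := by
      ext x; constructor
      · rintro (h | h) <;> exact h.1
      · intro h
        rcases le_total (x l) (1/2 + ε * θ x) with h' | h'
        · exact Or.inl ⟨h, h'⟩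
        · exact Or.inr ⟨h, h'⟩
    have key : ∀ x ∈ AA l, ∀ y ∈ B, Φ x = Φ y → x = y := by
      intro x hx y hy hxy
      have hz1 := B1.mapsTo hx
      have hz2 := B2.mapsTo hy
      rw [← hxy] at hz2
      have hzl : Φ x l = 1/2 + ε * θ (Φ x) := le_antisymm hz1.2 hz2.2
      set w := Function.update (Φ x) l (1/2) with hw
      have hwl : w l = 1/2 := by simp [hw]
      have hwc : w ∈ unitCube d := by
        intro i
        by_cases h : i = l
        · subst h; rw [hwl]; norm_num
        · have := hz1.1 i
          simpa [hw, h] using this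
      have hwA : w ∈ AA l := ⟨hwc, hwl.le⟩
      have hwB : w ∈ B := ⟨hwc, hwl.ge⟩
      have hwz : Φ w = Φ x := by
        rw [Φ1 w hwA, c1 w hwA hwl, hθ w (Φ x) (fun i hi => by simp [hw, hi]), ← hzl]
        simp [hw]
      have e1 := B1.injOn hwA hx hwz
      have e2 := B2.injOn hwB hy (hwz.trans hxy)
      rw [← e1, ← e2]
    rw [← hU]
    nth_rewrite 2 [hU]
    rw [← hU2]
    refine B1.union B2 ?_
    rintro x (hx | hx) y (hy | hy) hxy
    · exact B1.injOn hx hy hxy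
    · exact key x hx y hy hxy
    · exact (key y hy x hx hxy.symm).symm
    · exact B2.injOn hx hy hxy
  · intro x hx
    obtain ⟨hc, i, hi⟩ := cube_bd x hx
    rcases le_total (x l) (1/2) with h | h
    · rw [Φ1 x ⟨hc, h⟩]
      refine f1 x ⟨hc, h⟩ ?_
      by_cases hil : i = l
      · subst hil
        rcases hi with hi | hi
        · exact Or.inl hi
        · linarith
      · exact Or.inr ⟨i, hil, hi⟩
    · rw [Φ2 x ⟨hc, h⟩, f2 _ (SS_AA l x hc h), SS_SS]
      by_cases hil : i = l
      · subst hil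
        rcases hi with hi | hi
        · linarith
        · left; rw [SS_l]; linarith
      · right; refine ⟨i, hil, ?_⟩; rw [SS_ne l x i hil]; exact hi
  · have hmeas : MeasurableSet {x ∈ unitCube d | x l ≤ 1 / 2} := by
      exact (cube_closed.inter (isClosed_le (continuous_apply l) continuous_const)).measurableSet
    rw [ae_restrict_iff' hmeas]
    filter_upwards [d1, ae_good l] with x h1 h2 hx
    have hl : x l < 1/2 := lt_of_le_of_ne hx.2 h2.2
    obtain ⟨D, hD, hdet⟩ := h1 ⟨fun i => ⟨lt_of_le_of_ne (hx.1 i).1 (Ne.symm (h2.1 i).1),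
      lt_of_le_of_ne (hx.1 i).2 (h2.1 i).2⟩, hl⟩
    refine ⟨D, HasFDerivAt.hasFDerivWithinAt (hD.congr_of_eventuallyEq ?_), hdet⟩
    have : ∀ᶠ y in nhds x, y l < 1/2 := (continuous_apply l).continuousAt.eventually_lt continuousAt_const hl
    filter_upwards [this] with y hy
    exact if_pos hy.le
  · have hmeas : MeasurableSet B := by
      exact (cube_closed.inter (isClosed_le continuous_const (continuous_apply l))).measurableSet
    rw [ae_restrict_iff' hmeas]
    have d3 := conj_ae (ss l) (ss l) (tt l) (tt l) (ss_sq l)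
      (fun x => (∀ i, 0 < x i ∧ x i < 1) ∧ x l < 1/2) G2 (1 + -ε) d2
    filter_upwards [d3, ae_good l] with x h1 h2 hx
    have hl : 1/2 < x l := lt_of_le_of_ne hx.2 (Ne.symm h2.2)
    obtain ⟨D, hD, hdet⟩ := h1 (by
      change (∀ i, 0 < SS l x i ∧ SS l x i < 1) ∧ SS l x l < 1/2
      refine ⟨fun i => ?_, by rw [SS_l]; linarith⟩
      have a := lt_of_le_of_ne (hx.1 i).1 (Ne.symm (h2.1 i).1)
      have b := lt_of_le_of_ne (hx.1 i).2 (h2.1 i).2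
      by_cases h : i = l
      · subst h; rw [SS_l]; constructor <;> linarith
      · rw [SS_ne l x i h]; exact ⟨a, b⟩)
    refine ⟨D, HasFDerivAt.hasFDerivWithinAt (hD.congr_of_eventuallyEq ?_), hdet⟩
    have : ∀ᶠ y in nhds x, 1/2 < y l := continuousAt_const.eventually_lt (continuous_apply l).continuousAt hl
    filter_upwards [this] with y hy
    exact if_neg (not_le.2 hy)
  · intro x hx y hy
    rcases le_or_gt (x l) (1/2) with h | h <;> rcases le_or_gt (y l) (1/2) with h' | h'
    · exact L1 x ⟨hx, h⟩ y ⟨hy, h'⟩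
    · exact L3 x ⟨hx, h⟩ y hy h'
    · have := L3 y ⟨hy, h'⟩ x hx h
      rw [norm_sub_rev, norm_sub_rev x y]; exact this
    · exact L2 x ⟨hx, h.le⟩ y ⟨hy, h'.le⟩

lemma norm_le_eudist (x y : Fin d → ℝ) : ‖x - y‖ ≤ eudist x y := by
  refine (pi_norm_le_iff_of_nonneg (Real.sqrt_nonneg _)).2 fun i => ?_
  rw [Pi.sub_apply, Real.norm_eq_abs]
  refine Real.abs_le_sqrt ?_
  exact Finset.single_le_sum (f := fun i => (x i - y i) ^ 2) (fun i _ => sq_nonneg _) (Finset.mem_univ i)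

lemma eudist_le_norm (x y : Fin d → ℝ) : eudist x y ≤ √d * ‖x - y‖ := by
  have h : ∑ i, (x i - y i) ^ 2 ≤ d * ‖x - y‖ ^ 2 := by
    calc _ ≤ ∑ i : Fin d, ‖x - y‖ ^ 2 := by
          refine Finset.sum_le_sum fun i _ => ?_
          rw [← sq_abs]
          have := norm_le_pi_norm (x - y) i
          rw [Pi.sub_apply, Real.norm_eq_abs] at this
          gcongr
      _ = _ := by simp
  calc _ ≤ √(d * ‖x - y‖ ^ 2) := Real.sqrt_le_sqrt h
    _ = _ := by rw [Real.sqrt_mul (by positivity), Real.sqrt_sq (norm_nonneg _)]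
end glue
/-- (Rivière–Ye, Lemma 1.) For `α + β = 1` with `η ≤ α ≤ 1 − η` there is a Lipschitz
homeomorphism `Φ` of `[0,1]^d` fixing the boundary, whose Jacobian is a.e. equal to `2α`
on the lower half `A = [0,1]^{d−1} × [0,1/2]` and to `2β` on the upper half
`B = [0,1]^{d−1} × [1/2,1]`, and with `Lip(Φ − id) ≤ Δ·|1 − 2α|`. -/
theorem stmt_6 (d : ℕ) (hd : 1 ≤ d) (η : ℝ) (hη : 0 < η) :
    ∃ Δ : ℝ, 0 < Δ ∧
      ∀ α β : ℝ, 0 ≤ α → 0 ≤ β → α + β = 1 → η ≤ α → α ≤ 1 - η →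
        ∃ Φ : (Fin d → ℝ) → (Fin d → ℝ),
          Set.BijOn Φ (unitCube d) (unitCube d) ∧
          ContinuousOn Φ (unitCube d) ∧
          (∀ x ∈ frontier (unitCube d), Φ x = x) ∧
          (∀ᵐ x ∂(volume.restrict {x ∈ unitCube d | x (⟨d - 1, by omega⟩ : Fin d) ≤ 1 / 2}),
            ∃ D : (Fin d → ℝ) →L[ℝ] (Fin d → ℝ),
              HasFDerivWithinAt Φ D (unitCube d) x ∧ D.det = 2 * α) ∧
          (∀ᵐ x ∂(volume.restrict {x ∈ unitCube d | 1 / 2 ≤ x (⟨d - 1, by omega⟩ : Fin d)}),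
            ∃ D : (Fin d → ℝ) →L[ℝ] (Fin d → ℝ),
              HasFDerivWithinAt Φ D (unitCube d) x ∧ D.det = 2 * β) ∧
          (∀ x ∈ unitCube d, ∀ y ∈ unitCube d,
            eudist (Φ x - x) (Φ y - y) ≤ Δ * |1 - 2 * α| * eudist x y) := by
  obtain ⟨m, hm⟩ := exists_nat_ge ((d:ℝ) / η)
  have hm' : (d:ℝ) ≤ η * m := by
    rw [div_le_iff₀ hη] at hm; linarith
  obtain ⟨K0, hK0⟩ : ∃ K0 : ℝ, K0 = (1 / (2 * η)) * (2 / η) ^ (d - 1) := ⟨_, rfl⟩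
  obtain ⟨C2, hC2⟩ : ∃ C2 : ℝ, C2 = (1 + K0 / ((η / 2) * η ^ (d - 1))) / (η / 2) := ⟨_, rfl⟩
  obtain ⟨C, hC⟩ : ∃ C : ℝ, C = (2 * (1 + 2 * m) + 2 * K0) * C2 := ⟨_, rfl⟩
  have hK0p : 0 < K0 := by rw [hK0]; positivity
  have hC2p : 0 < C2 := by rw [hC2]; positivity
  have hCp : 0 < C := by rw [hC]; positivity
  have hd0 : (0:ℝ) < d := by exact_mod_cast hd
  refine ⟨√d * (2 * C), by positivity, ?_⟩
  intro α β hα hβ hab h1 h2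
  have hη2 : η ≤ 1/2 := by linarith
  have hε : |2 * α - 1| ≤ 1 - 2 * η := abs_le.2 ⟨by linarith, by linarith⟩
  obtain ⟨G1, H1⟩ := half_exists (⟨d - 1, by omega⟩ : Fin d) m η hη hη2 hm' C K0 C2 hK0 hC2 hC
    (2 * α - 1) hε
  obtain ⟨G2, H2⟩ := half_exists (⟨d - 1, by omega⟩ : Fin d) m η hη hη2 hm' C K0 C2 hK0 hC2 hC
    (-(2 * α - 1)) (by rw [abs_neg]; exact hε)
  rw [abs_neg] at H2
  obtain ⟨Φ, p1, p2, p3, p4, p5⟩ := glue (⟨d - 1, by omega⟩ : Fin d) (th _ m)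
    (fun x y h => th_congr _ m h) (2 * α - 1) (2 * C * |2 * α - 1|) G1 G2 H1 H2
  refine ⟨Φ, p1, ?_, p2, ?_, ?_, ?_⟩
  · have hl : LipschitzOnWith (Real.toNNReal (2 * C * |2 * α - 1|)) (fun x => Φ x - x) (unitCube d) := by
      refine LipschitzOnWith.of_dist_le_mul fun x hx y hy => ?_
      rw [dist_eq_norm, dist_eq_norm, Real.coe_toNNReal _ (by positivity)]
      exact p5 x hx y hy
    have := hl.continuousOn.add continuousOn_id
    refine this.congr fun x _ => ?_
    simp
  · filter_upwards [p3] with x hx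
    obtain ⟨D, hD, e⟩ := hx
    exact ⟨D, hD, by rw [e]; ring⟩
  · filter_upwards [p4] with x hx
    obtain ⟨D, hD, e⟩ := hx
    exact ⟨D, hD, by rw [e]; linarith⟩
  · intro x hx y hy
    have e : |1 - 2 * α| = |2 * α - 1| := abs_sub_comm _ _
    rw [e]
    calc _ ≤ √d * ‖(Φ x - x) - (Φ y - y)‖ := eudist_le_norm _ _
      _ ≤ √d * (2 * C * |2 * α - 1| * ‖x - y‖) := by gcongr; exact p5 x hx y hy
      _ ≤ √d * (2 * C * |2 * α - 1| * eudist x y) := by gcongr; exact norm_le_eudist _ _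
      _ = _ := by ring
end

section
/- Let I ⊆ ℝ be an open interval, let f : I → (0,∞) be differentiable, concave and strictly increasing, let s, t ∈ I with s < t, and let λ ∈ (0,1). Then f((1−λ)·s + λ·t) ≤ (f'(s)/f'(t)) · ((1−λ)·f(s) + λ·f(t)). -/
/-- If `I ⊆ ℝ` is an open interval, `f : I → (0,∞)` is differentiable, concave and
strictly increasing, `s, t ∈ I` with `s < t` and `λ ∈ (0,1)`, then
`f((1-λ)s + λt) ≤ (f'(s)/f'(t)) · ((1-λ)f(s) + λf(t))`. -/
theorem stmt_8 (I : Set ℝ) (hIopen : IsOpen I) (hIconn : I.OrdConnected)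
    (f f' : ℝ → ℝ)
    (hpos : ∀ x ∈ I, 0 < f x)
    (hderiv : ∀ x ∈ I, HasDerivAt f (f' x) x)
    (hconc : ConcaveOn ℝ I f)
    (hmono : StrictMonoOn f I)
    (s t : ℝ) (hs : s ∈ I) (ht : t ∈ I) (hst : s < t)
    (l : ℝ) (hl0 : 0 < l) (hl1 : l < 1) :
    f ((1 - l) * s + l * t) ≤ (f' s / f' t) * ((1 - l) * f s + l * f t) := by
  have tang : ∀ x ∈ I, ∀ y ∈ I, x < y → f y - f x ≤ f' x * (y - x) := by
    intro x hx y hy hxy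
    have h := hconc.slope_le_of_hasDerivAt hx hy hxy (hderiv x hx)
    rw [slope_def_field, div_le_iff₀ (by linarith)] at h
    exact h
  have tang2 : f' t * (t - s) ≤ f t - f s := by
    have h := hconc.le_slope_of_hasDerivAt hs ht hst (hderiv t ht)
    rw [slope_def_field, le_div_iff₀ (by linarith)] at h
    exact h
  obtain ⟨u, htu, hu⟩ : ∃ u, t < u ∧ u ∈ I := by
    obtain ⟨e, he, hb⟩ := Metric.isOpen_iff.1 hIopen t ht
    refine ⟨t + e / 2, by linarith, hb ?_⟩
    rw [Metric.mem_ball, Real.dist_eq, add_sub_cancel_left, abs_of_pos (by linarith)]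
    linarith
  have hb : 0 < f' t := by
    have h1 := tang t ht u hu htu
    have h2 := hmono ht hu htu
    exact pos_of_mul_pos_left (lt_of_lt_of_le (by linarith) h1) (by linarith)
  have hab : f' t ≤ f' s := by
    have h1 := tang s hs t ht hst
    exact le_of_mul_le_mul_right (tang2.trans h1) (by linarith)
  have hld : 0 < l * (t - s) := mul_pos hl0 (by linarith)
  have hld' : 0 < (1 - l) * (t - s) := mul_pos (by linarith) (by linarith)
  have hm : (1 - l) * s + l * t ∈ I :=
    hIconn.out hs ht ⟨by linarith, by linarith⟩
  have h1 := tang s hs _ hm (by linarith)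
  have h2 := hpos s hs
  rw [div_mul_eq_mul_div, le_div_iff₀ hb]
  have e1 : f ((1 - l) * s + l * t) * f' t ≤ (f s + f' s * (l * (t - s))) * f' t := by
    apply mul_le_mul_of_nonneg_right _ hb.le
    linarith
  have e2 : f' s * (f s + l * (f' t * (t - s))) ≤ f' s * ((1 - l) * f s + l * f t) := by
    apply mul_le_mul_of_nonneg_left _ (hb.le.trans hab)
    linarith [mul_le_mul_of_nonneg_left tang2 hl0.le]
  linarith [mul_le_mul_of_nonneg_right hab h2.le]
end

section
/- Fix d ∈ ℕ, d ≥ 1. There exists a constant Γ = Γ(d) > 0 with the following property. Let n, m ∈ ℕ with n ≥ 2, and let C, q ∈ ℝ satisfy n/(2·(log₂ n)^q) ≤ m ≤ 2n/(log₂ n)^q, C ≥ 1 + 2^(d+7)/log₂ n, and q ≥ 1 if C^(1/d)·n/m ∉ ℤ while q > 0 suffices if C^(1/d)·n/m ∈ ℤ. Then a uniformly random n^d-element subset S of the grid {1,…,⌊C^(1/d)·n⌋}^d satisfies both: (i) ℙ[ ∃ T ∈ 𝒯_m with |S ∩ (C^(1/d)·n·T)| ≤ (1 − Γ/log₂ n)·n^d/m^d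 ] ≤ Γ·n^Γ·2^(−(log₂ n)^(qd−2)/Γ), and (ii) ℙ[ ∃ T ∈ 𝒯_m with |S ∩ (C^(1/d)·n·T)| ≥ (1 + Γ/log₂ n)·n^d/m^d ] ≤ Γ·n^Γ·2^(−(log₂ n)^(qd−2)/Γ). -/
/-- The grid `{1,…,m}^d` (with `m : ℤ`), as a finite type. -/
abbrev gridPt (d : ℕ) (m : ℤ) : Type := Fin d → (Finset.Icc (1 : ℤ) m : Finset ℤ)

/-- The uniform probability of an event `P` on a finite sample space `Ω`:
`ℙ(P) = |{ω : P ω}| / |Ω|`. -/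
noncomputable def uniformProb (Ω : Type*) [Fintype Ω] (P : Ω → Prop) : ℝ :=
  (Set.ncard {ω : Ω | P ω} : ℝ) / (Fintype.card Ω : ℝ)

open Finset in
theorem aux_dc {α : Type*} [Fintype α] [DecidableEq α] (y : α → ℝ) (k : ℕ) :
    ((k:ℝ)+1) * ∑ S ∈ powersetCard (k+1) (univ : Finset α), ∏ x ∈ S, y x =
    ∑ T ∈ powersetCard k (univ : Finset α), (∏ x ∈ T, y x) * (∑ x, y x - ∑ x ∈ T, y x) := by
  have h1 : ((k:ℝ)+1) * ∑ S ∈ powersetCard (k+1) (univ : Finset α), ∏ x ∈ S, y x =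
      ∑ S ∈ powersetCard (k+1) (univ : Finset α), ∑ x ∈ S, ∏ z ∈ S, y z := by
    rw [mul_sum]
    refine sum_congr rfl fun S hS => ?_
    rw [mem_powersetCard] at hS
    rw [sum_const, hS.2]; simp
  have h2 : ∑ T ∈ powersetCard k (univ : Finset α), (∏ x ∈ T, y x) * (∑ x, y x - ∑ x ∈ T, y x) =
      ∑ T ∈ powersetCard k (univ : Finset α), ∑ x ∈ Tᶜ, (∏ z ∈ T, y z) * y x := by
    refine sum_congr rfl fun T _ => ?_
    rw [← sum_compl_add_sum T y, ← mul_sum]; ring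
  rw [h1, h2, sum_sigma', sum_sigma']
  refine sum_bij' (fun p _ => ⟨p.1.erase p.2, p.2⟩) (fun p _ => ⟨insert p.2 p.1, p.2⟩) ?_ ?_ ?_ ?_ ?_
  · rintro ⟨S, x⟩ h
    simp only [mem_sigma, mem_powersetCard, subset_univ, true_and, mem_compl] at h ⊢
    simp [card_erase_of_mem h.2, h.1]
  · rintro ⟨S, x⟩ h
    simp only [mem_sigma, mem_powersetCard, subset_univ, true_and, mem_compl] at h ⊢
    simp [card_insert_of_notMem h.2, h.1]
  · rintro ⟨S, x⟩ h
    simp only [mem_sigma, mem_powersetCard, subset_univ, true_and, mem_compl] at h ⊢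
    simp [insert_erase h.2]
  · rintro ⟨S, x⟩ h
    simp only [mem_sigma, mem_powersetCard, subset_univ, true_and, mem_compl] at h ⊢
    simp [erase_insert h.2]
  · rintro ⟨S, x⟩ h
    simp only [mem_sigma, mem_powersetCard, subset_univ, true_and, mem_compl] at h ⊢
    rw [prod_erase_mul _ _ h.2]


open Finset in
theorem aux_sum {α : Type*} [Fintype α] [DecidableEq α] (y : α → ℝ) (k : ℕ) :
    (Fintype.card α : ℝ) * ∑ S ∈ powersetCard k (univ : Finset α), ∑ x ∈ S, y x =
    k * (Fintype.card α).choose k * ∑ x, y x := by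
  rcases k with _ | k
  · simp
  have h1 : ∑ S ∈ powersetCard (k+1) (univ : Finset α), ∑ x ∈ S, y x =
     ∑ x, (#{S ∈ powersetCard (k+1) (univ : Finset α) | x ∈ S} : ℝ) * y x := by
    rw [sum_comm' (s' := fun x => {S ∈ powersetCard (k+1) (univ : Finset α) | x ∈ S}) (t' := univ)]
    · simp
    · intro S x; simp
  rw [h1, mul_sum, mul_sum]
  refine sum_congr rfl fun x _ => ?_
  have h2 := card_filter_powersetCard_subset ({x} : Finset α) univ (k+1)
  simp only [singleton_subset_iff, mem_univ, card_singleton, card_univ] at h2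
  have h2 := h2 (by trivial) (by omega)
  obtain ⟨v, hv⟩ : ∃ v, Fintype.card α = v + 1 :=
    ⟨Fintype.card α - 1, by have : 0 < Fintype.card α := Fintype.card_pos_iff.2 ⟨x⟩; omega⟩
  rw [h2, hv, ← mul_assoc]
  congr 1
  have := Nat.add_one_mul_choose_eq v k
  simp only [Nat.add_sub_cancel]
  rw [mul_comm ((k+1 : ℕ) : ℝ)]
  exact_mod_cast this

open Finset in
theorem aux_mgf {α : Type*} [Fintype α] [DecidableEq α] (A : Finset α) (t : ℝ) (ht : 0 < t) (k : ℕ)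
    (hk : k ≤ Fintype.card α) :
    ∑ S ∈ powersetCard k (univ : Finset α), t ^ (#(S ∩ A)) ≤
      (Fintype.card α).choose k * (1 + (#A : ℝ) / Fintype.card α * (t - 1)) ^ k := by
  set y : α → ℝ := fun x => if x ∈ A then t else 1 with hy
  have hprod : ∀ S : Finset α, ∏ x ∈ S, y x = t ^ (#(S ∩ A)) := by
    intro S
    simp only [hy]
    rw [prod_ite]
    simp [filter_mem_eq_inter]
  have hsum : ∀ S : Finset α, ∑ x ∈ S, y x = #S + (t - 1) * #(S ∩ A) := by
    intro S
    have : ∀ x, y x = 1 + if x ∈ A then (t - 1) else 0 := by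
      intro x; simp only [hy]; split_ifs <;> ring
    simp_rw [this]
    rw [sum_add_distrib, ← sum_filter, filter_mem_eq_inter]
    simp; ring
  induction k with
  | zero => simp
  | succ k ih =>
    have ih := ih (by omega)
    set V := Fintype.card α with hV
    have hVpos : (0:ℝ) < V := by exact_mod_cast (by omega : 0 < V)
    have hdc := aux_dc y k
    have hs := aux_sum y k
    have hmono : MonovaryOn (fun T : Finset α => ∏ x ∈ T, y x) (fun T => ∑ x ∈ T, y x)
        (powersetCard k (univ : Finset α) : Set (Finset α)) := by
      intro S hS T hT h
      simp only [mem_coe, mem_powersetCard] at hS hT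
      simp only [hsum, hS.2, hT.2] at h
      simp only [hprod]
      rcases le_total 1 t with h1 | h1
      · apply pow_le_pow_right₀ h1
        by_contra hc
        push Not at hc
        have : (#(T ∩ A) : ℝ) ≤ #(S ∩ A) := by exact_mod_cast hc.le
        nlinarith
      · apply pow_le_pow_of_le_one ht.le h1
        by_contra hc
        push Not at hc
        have : (#(S ∩ A) : ℝ) ≤ #(T ∩ A) := by exact_mod_cast hc.le
        nlinarith
    have hch := hmono.sum_mul_sum_le_card_mul_sum
    have hch2 : (V.choose k : ℝ) > 0 := by exact_mod_cast Nat.choose_pos (by omega)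
    rw [card_powersetCard, card_univ, ← hV] at hch
    rw [← hV] at hs
    have he1 : ∑ x, y x = V * (1 + (#A : ℝ) / V * (t - 1)) := by
      rw [hsum, univ_inter, card_univ, ← hV]; field_simp
    set r := (1 + (#A : ℝ) / V * (t - 1)) with hr
    have hr0 : 0 ≤ r := by
      have : 0 ≤ ∑ x, y x := sum_nonneg fun x _ => by simp only [hy]; split_ifs <;> linarith
      rw [he1] at this
      exact nonneg_of_mul_nonneg_right this hVpos
    simp_rw [mul_sub] at hdc
    rw [sum_sub_distrib, ← sum_mul] at hdc
    rw [he1] at hs hdc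
    simp_rw [← hprod] at ih ⊢
    set e := ∑ S ∈ powersetCard k (univ : Finset α), ∏ x ∈ S, y x
    set e' := ∑ S ∈ powersetCard (k+1) (univ : Finset α), ∏ x ∈ S, y x
    set σ := ∑ S ∈ powersetCard k (univ : Finset α), ∑ x ∈ S, y x
    set ρ := ∑ S ∈ powersetCard k (univ : Finset α), (∏ x ∈ S, y x) * ∑ x ∈ S, y x
    have hσ : σ = k * V.choose k * r := by
      apply mul_left_cancel₀ hVpos.ne'
      rw [hs]; ring
    have hρ : e * (k * r) ≤ ρ := by
      have : V.choose k * (e * (k * r)) ≤ V.choose k * ρ := by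
        calc _ = e * σ := by rw [hσ]; ring
          _ ≤ _ := hch
      exact le_of_mul_le_mul_left this hch2
    have hstep : ((k:ℝ)+1) * e' ≤ (V - k) * r * e := by
      rw [hdc]; nlinarith
    have hc : (V.choose (k+1) : ℝ) * (k+1) = V.choose k * (V - k) := by
      have := Nat.choose_succ_right_eq V k
      rw [← Nat.cast_sub (by omega : k ≤ V)]
      exact_mod_cast this
    have hVk : (0:ℝ) ≤ V - k := by
      have : (k:ℝ) ≤ V := by exact_mod_cast (by omega : k ≤ V)
      linarith
    have hk1 : (0:ℝ) < k + 1 := by positivity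
    refine le_of_mul_le_mul_left (hstep.trans ?_) hk1
    calc (V - k) * r * e ≤ (V - k) * r * (V.choose k * r ^ k) := by gcongr
      _ = (V.choose k * (V - k)) * r ^ (k+1) := by ring
      _ = _ := by rw [← hc]; ring

open Finset in
/-- Chernoff bound: `λ` of either sign. -/
theorem aux_chernoff {α : Type*} [Fintype α] [DecidableEq α] (A : Finset α) (l b : ℝ) (k : ℕ)
    (hk : k ≤ Fintype.card α) (P : Finset α → Prop) [DecidablePred P]
    (hP : ∀ S, P S → l * b ≤ l * #(S ∩ A)) :
    (#{S ∈ powersetCard k (univ : Finset α) | P S} : ℝ) ≤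
      (Fintype.card α).choose k * Real.exp ((#A : ℝ) * k / Fintype.card α * (Real.exp l - 1) - l * b) := by
  have h := aux_mgf A (Real.exp l) (Real.exp_pos l) k hk
  have h1 : (#{S ∈ powersetCard k (univ : Finset α) | P S} : ℝ) * Real.exp (l * b) ≤
      ∑ S ∈ powersetCard k (univ : Finset α), Real.exp l ^ (#(S ∩ A)) := by
    calc _ = ∑ S ∈ powersetCard k (univ : Finset α) with P S, Real.exp (l * b) := by simp
      _ ≤ ∑ S ∈ powersetCard k (univ : Finset α) with P S, Real.exp l ^ (#(S ∩ A)) := by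
        refine sum_le_sum fun S hS => ?_
        rw [mem_filter] at hS
        rw [← Real.exp_nat_mul, mul_comm _ l]
        exact Real.exp_le_exp.2 (hP S hS.2)
      _ ≤ _ := sum_le_sum_of_subset_of_nonneg (filter_subset _ _) fun S _ _ => by positivity
  have h2 : (1 + (#A : ℝ) / Fintype.card α * (Real.exp l - 1)) ^ k ≤
      Real.exp ((#A : ℝ) * k / Fintype.card α * (Real.exp l - 1)) := by
    have hA : (#A : ℝ) / Fintype.card α ≤ 1 := by
      apply div_le_one_of_le₀ _ (by positivity)
      exact_mod_cast card_le_univ A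
    have hA0 : 0 ≤ (#A : ℝ) / Fintype.card α := by positivity
    have : (#A : ℝ) * k / Fintype.card α * (Real.exp l - 1) =
      k * ((#A : ℝ) / Fintype.card α * (Real.exp l - 1)) := by ring
    rw [this, Real.exp_nat_mul]
    apply pow_le_pow_left₀
    · nlinarith [Real.exp_pos l]
    · linarith [Real.add_one_le_exp ((#A : ℝ) / Fintype.card α * (Real.exp l - 1))]
  rw [Real.exp_sub, ← mul_div_assoc, le_div_iff₀ (Real.exp_pos _)]
  refine h1.trans (h.trans ?_)
  gcongr

open Finset in
theorem aux_prob {α ι : Type*} [Fintype α] [Fintype ι] [DecidableEq α] (k : ℕ)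
    (hk : k ≤ Fintype.card α)
    [Fintype {S : Finset α // S.card = k}] (Q : ι → Finset α → Prop) [∀ i, DecidablePred (Q i)]
    (B : ℝ)
    (hQ : ∀ i, (#{S ∈ powersetCard k (univ : Finset α) | Q i S} : ℝ) ≤
      (Fintype.card α).choose k * B) :
    uniformProb {S : Finset α // S.card = k} (fun S => ∃ i, Q i S.1) ≤ Fintype.card ι * B := by
  classical
  unfold uniformProb
  have hcard : Fintype.card {S : Finset α // S.card = k} = (Fintype.card α).choose k := by
    rw [Fintype.card_of_subtype (powersetCard k (univ : Finset α)) (by simp)]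
    simp
  have hpos : (0:ℝ) < (Fintype.card α).choose k := by exact_mod_cast Nat.choose_pos hk
  rw [hcard, div_le_iff₀ hpos]
  have h1 : (Set.ncard {S : {S : Finset α // S.card = k} | ∃ i, Q i S.1}) ≤
      #((univ : Finset ι).biUnion fun i => {S ∈ powersetCard k (univ : Finset α) | Q i S}) := by
    rw [← Set.ncard_image_of_injective _ Subtype.val_injective, ← Set.ncard_coe_finset]
    apply Set.ncard_le_ncard _ (Finset.finite_toSet _)
    rintro S ⟨⟨S, hS⟩, ⟨i, hi⟩, rfl⟩
    simp only [mem_coe, mem_biUnion, mem_filter, mem_powersetCard, mem_univ, true_and, subset_univ]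
    exact ⟨i, hS, hi⟩
  have h2 := h1.trans card_biUnion_le
  calc (Set.ncard {S : {S : Finset α // S.card = k} | ∃ i, Q i S.1} : ℝ) ≤
      ∑ i, (#{S ∈ powersetCard k (univ : Finset α) | Q i S} : ℝ) := by exact_mod_cast h2
    _ ≤ ∑ i : ι, (Fintype.card α).choose k * B := sum_le_sum fun i _ => hQ i
    _ = _ := by simp; ring

theorem aux_pow1 (x y : ℝ) (hx : 0 ≤ x) (hy : 0 ≤ y) (hy1 : y ≤ 1) (d : ℕ) :
    (1 + x * y) ^ d ≤ 1 + (1 + x) ^ d * y := by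
  have : (1 + x * y) ^ d ≤ (1 - y) + (1 + x) ^ d * y := by
    induction d with
    | zero => simp
    | succ d ih =>
      have h1 : 1 ≤ (1 + x) ^ d := one_le_pow₀ (by linarith)
      calc (1 + x * y) ^ (d+1) = (1 + x * y) ^ d * (1 + x * y) := pow_succ _ _
        _ ≤ ((1 - y) + (1 + x) ^ d * y) * (1 + x * y) := by gcongr
        _ ≤ _ := by
          rw [pow_succ]
          have : 0 ≤ x * y * (1 - y) * ((1 + x) ^ d - 1) := by
            apply mul_nonneg (mul_nonneg (mul_nonneg hx hy) (by linarith)) (by linarith)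
          nlinarith
  linarith

theorem aux_mean (d : ℕ) (hd : 1 ≤ d) (a : Fin d → ℝ) (s L : ℝ) (n m N : ℕ) (hn : 2 ≤ n)
    (hm : 1 ≤ m) (hL : 1 ≤ L) (hLn : L ≤ n) (hnN : n ≤ N) (hNs : N ≤ s) (hsN : s < N + 1)
    (ha0 : ∀ i, 0 ≤ a i)
    (h : (∀ i, a i = s / m) ∧ s = N ∨ (∀ i, s / m - 1 ≤ a i ∧ a i ≤ s / m + 1) ∧ m / s ≤ 2 / L) :
    (1 - (6 ^ d + 2 * d) / L) * (n ^ d / m ^ d) ≤ (∏ i, a i) * n ^ d / N ^ d ∧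
    (∏ i, a i) * n ^ d / N ^ d ≤ (1 + (6 ^ d + 2 * d) / L) * (n ^ d / m ^ d) := by
  have hn0 : (2:ℝ) ≤ n := by exact_mod_cast hn
  have hm0 : (1:ℝ) ≤ m := by exact_mod_cast hm
  have hN0 : (n:ℝ) ≤ N := by exact_mod_cast hnN
  have hNp : (0:ℝ) < N := by linarith
  have hs0 : 0 < s := by linarith
  have hd0 : (1:ℝ) ≤ d := by exact_mod_cast hd
  have hM : (0:ℝ) ≤ n ^ d / m ^ d := by positivity
  have hK : 0 ≤ (6 ^ d + 2 * (d:ℝ)) / L := by positivity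
  rcases h with ⟨h, hs⟩ | ⟨h, hms⟩
  · have : (∏ i, a i) * n ^ d / N ^ d = (n:ℝ) ^ d / m ^ d := by
      simp only [h, Finset.prod_const, Finset.card_univ, Fintype.card_fin]
      rw [hs, div_pow]; field_simp
    rw [this]
    constructor <;> nlinarith
  · have hP0 : 0 ≤ ∏ i, a i := Finset.prod_nonneg fun i _ => ha0 i
    constructor
    · have hlow : (1 - 2 * d / L) * (s / m) ^ d ≤ ∏ i, a i := by
        by_cases hc : 1 ≤ s / m
        · have h1 : (s / m - 1) ^ d ≤ ∏ i, a i := by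
            calc (s / m - 1) ^ d = ∏ i : Fin d, (s / m - 1) := by simp
              _ ≤ _ := Finset.prod_le_prod (fun i _ => by linarith) fun i _ => (h i).1
          have h2 : (s / m - 1) = (1 + - (m / s)) * (s / m) := by field_simp; ring
          have hms1 : m / s ≤ 1 := by
            rw [div_le_one hs0]; rwa [one_le_div (by linarith)] at hc
          have h3 := one_add_mul_le_pow (a := -(m / s)) (by linarith) d
          rw [h2, mul_pow] at h1
          refine le_trans ?_ h1
          gcongr
          refine le_trans ?_ h3
          have : d * (m / s) ≤ d * (2 / L) := by gcongr
          have e : 2 * d / L = d * (2 / L) := by ring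
          linarith
        · have hms1 : 1 ≤ m / s := by
            rw [one_le_div hs0]; push Not at hc; rw [div_lt_one (by linarith)] at hc; exact hc.le
          have : 1 - 2 * d / L ≤ 0 := by
            have e : 2 * d / L = d * (2 / L) := by ring
            rw [e]; nlinarith
          refine le_trans ?_ hP0
          exact mul_nonpos_of_nonpos_of_nonneg this (by positivity)
      calc (1 - (6 ^ d + 2 * d) / L) * (n ^ d / m ^ d) ≤ (1 - 2 * d / L) * (n ^ d / m ^ d) := by
            gcongr
            have : (0:ℝ) ≤ 6 ^ d := by positivity
            linarith
        _ = ((1 - 2 * d / L) * (s / m) ^ d) * n ^ d / s ^ d := by rw [div_pow]; field_simp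
        _ ≤ (∏ i, a i) * n ^ d / s ^ d := by gcongr
        _ ≤ _ := by gcongr
    · have h1 : ∏ i, a i ≤ (s / m + 1) ^ d := by
        calc _ ≤ ∏ i : Fin d, (s / m + 1) :=
              Finset.prod_le_prod (fun i _ => ha0 i) fun i _ => (h i).2
          _ = _ := by simp
      have h2 : s / N ≤ 1 + 1 / L := by
        rw [div_le_iff₀ hNp]
        have : 1 ≤ 1 / L * N := by
          rw [div_mul_eq_mul_div, one_mul, one_le_div (by linarith)]; linarith
        linarith
      have hL1 : 1 / L ≤ 1 := by rw [div_le_one (by linarith)]; exact hL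
      have hL0 : 0 ≤ 1 / L := by positivity
      have h3 : (1 + m / s) * (s / N) ≤ 1 + 5 * (1 / L) := by
        calc (1 + m / s) * (s / N) ≤ (1 + 2 / L) * (1 + 1 / L) := by gcongr
          _ = (1 + 2 * (1 / L)) * (1 + 1 / L) := by ring
          _ ≤ _ := by nlinarith
      calc (∏ i, a i) * n ^ d / N ^ d ≤ (s / m + 1) ^ d * n ^ d / N ^ d := by gcongr
        _ = ((1 + m / s) * (s / N)) ^ d * (n ^ d / m ^ d) := by
          have : s / m + 1 = (1 + m / s) * (s / m) := by field_simp
          rw [this]; simp only [mul_pow, div_pow]; field_simp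
        _ ≤ (1 + 5 * (1 / L)) ^ d * (n ^ d / m ^ d) := by gcongr
        _ ≤ (1 + (1 + 5) ^ d * (1 / L)) * (n ^ d / m ^ d) := by
          gcongr
          exact aux_pow1 5 _ (by norm_num) hL0 hL1 d
        _ ≤ _ := by
          gcongr
          have : (6 ^ d + 2 * (d:ℝ)) / L = (1 + 5) ^ d * (1 / L) + 2 * d * (1 / L) := by
            norm_num; ring
          rw [this]
          have : 0 ≤ 2 * d * (1 / L) := by positivity
          linarith

/-- numeric final bound -/
theorem aux_final (d n m : ℕ) (L q Γ : ℝ) (hn : 2 ≤ n) (hm : 1 ≤ m) (hL : 1 ≤ L)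
    (hq : 0 < q) (hmn : (m : ℝ) ≤ 2 * n / L ^ q) (hΓ1 : (2:ℝ) ^ d ≤ Γ) (hΓ2 : (d : ℝ) ≤ Γ) :
    (m : ℝ) ^ d * Real.exp (-(((n:ℝ) ^ d / m ^ d) / L ^ 2)) ≤
      Γ * (n : ℝ) ^ Γ * (2 : ℝ) ^ (-(L ^ (q * d - 2)) / Γ) := by
  have hn0 : (2:ℝ) ≤ n := by exact_mod_cast hn
  have hm0 : (1:ℝ) ≤ m := by exact_mod_cast hm
  have hLp : 0 < L := by linarith
  have hLq : 1 ≤ L ^ q := Real.one_le_rpow hL hq.le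
  have hΓ : 0 < Γ := lt_of_lt_of_le (by positivity) hΓ1
  have hm2 : (m:ℝ) ≤ 2 * n := hmn.trans (div_le_self (by positivity) hLq)
  have h1 : (m:ℝ) ^ d ≤ Γ * (n:ℝ) ^ Γ := by
    calc (m:ℝ) ^ d ≤ (2 * n) ^ d := by gcongr
      _ = 2 ^ d * (n:ℝ) ^ (d:ℝ) := by rw [mul_pow, Real.rpow_natCast]
      _ ≤ _ := by
        gcongr
        linarith
  have hX : L ^ (q * d - 2) = (L ^ q) ^ d / L ^ 2 := by
    rw [Real.rpow_sub hLp, Real.rpow_mul hLp.le, Real.rpow_natCast]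
    norm_num
  have hnm : L ^ q / 2 ≤ n / m := by
    rw [le_div_iff₀ (by positivity)] at hmn
    rw [div_le_div_iff₀ (by norm_num) (by positivity)]
    linarith
  have hMX : L ^ (q * d - 2) / Γ ≤ ((n:ℝ) ^ d / m ^ d) / L ^ 2 := by
    calc L ^ (q * d - 2) / Γ ≤ L ^ (q * d - 2) / 2 ^ d := by gcongr
      _ = (L ^ q / 2) ^ d / L ^ 2 := by rw [hX, div_pow]; field_simp
      _ ≤ (n / m) ^ d / L ^ 2 := by gcongr
      _ = _ := by rw [div_pow]
  have h2 : Real.exp (-(((n:ℝ) ^ d / m ^ d) / L ^ 2)) ≤ (2 : ℝ) ^ (-(L ^ (q * d - 2)) / Γ) := by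
    rw [Real.rpow_def_of_pos (by norm_num)]
    apply Real.exp_le_exp.2
    have hl : Real.log 2 ≤ 1 := by linarith [Real.log_two_lt_d9]
    have hl0 : 0 ≤ Real.log 2 := Real.log_nonneg (by norm_num)
    have hx0 : 0 ≤ L ^ (q * d - 2) / Γ := by positivity
    have : -(L ^ (q * d - 2)) / Γ = -(L ^ (q * d - 2) / Γ) := by ring
    rw [this]
    nlinarith
  gcongr

theorem aux_exp_up (L K Γ M μ : ℝ) (hL : 1 ≤ L) (hK : 0 ≤ K) (hM : 0 ≤ M) (hΓ : 2 + 2 * K ≤ Γ)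
    (h : μ ≤ (1 + K / L) * M) :
    μ * (Real.exp (1 / L) - 1) - 1 / L * ((1 + Γ / L) * M) ≤ -(M / L ^ 2) := by
  have hu0 : 0 ≤ 1 / L := by positivity
  have hu1 : 1 / L ≤ 1 := by rw [div_le_one (by linarith)]; exact hL
  have e1 : K / L = K * (1 / L) := by ring
  have e2 : Γ / L = Γ * (1 / L) := by ring
  have e3 : M / L ^ 2 = M * (1 / L) ^ 2 := by ring
  rw [e1] at h
  rw [e2, e3]
  set u := 1 / L
  have he := (abs_le.1 (Real.abs_exp_sub_one_sub_id_le (x := u) (abs_le.2 ⟨by linarith, hu1⟩))).2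
  have he0 : 0 ≤ Real.exp u - 1 := by linarith [Real.add_one_le_exp u]
  have hKu : 0 ≤ 1 + K * u := by positivity
  calc μ * (Real.exp u - 1) - u * ((1 + Γ * u) * M) ≤
      (1 + K * u) * M * (u + u ^ 2) - u * ((1 + Γ * u) * M) := by
        have : μ * (Real.exp u - 1) ≤ (1 + K * u) * M * (u + u ^ 2) := by
          calc _ ≤ (1 + K * u) * M * (Real.exp u - 1) := by gcongr
            _ ≤ _ := by gcongr; linarith
        linarith
    _ = M * u ^ 2 * (1 + K + K * u - Γ) := by ring
    _ ≤ M * u ^ 2 * (-1) := by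
        gcongr
        nlinarith
    _ = _ := by ring

theorem aux_exp_lo (L K Γ M μ : ℝ) (hL : 1 ≤ L) (hK : 0 ≤ K) (hM : 0 ≤ M) (hΓ : 2 + 2 * K ≤ Γ)
    (hμ : 0 ≤ μ) (h : (1 - K / L) * M ≤ μ) :
    μ * (Real.exp (-(1 / L)) - 1) - -(1 / L) * ((1 - Γ / L) * M) ≤ -(M / L ^ 2) := by
  have hu0 : 0 ≤ 1 / L := by positivity
  have hu1 : 1 / L ≤ 1 := by rw [div_le_one (by linarith)]; exact hL
  have e1 : K / L = K * (1 / L) := by ring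
  have e2 : Γ / L = Γ * (1 / L) := by ring
  have e3 : M / L ^ 2 = M * (1 / L) ^ 2 := by ring
  rw [e1] at h
  rw [e2, e3]
  set u := 1 / L
  have he := (abs_le.1 (Real.abs_exp_sub_one_sub_id_le (x := -u)
    (abs_le.2 ⟨by linarith, by linarith⟩))).2
  have h1 : μ * (Real.exp (-u) - 1) ≤ μ * (-u + u ^ 2) := by
    gcongr; linarith
  have h2 : (1 - K * u) * M * (u - u ^ 2) ≤ μ * (u - u ^ 2) := by
    apply mul_le_mul_of_nonneg_right h
    nlinarith
  calc μ * (Real.exp (-u) - 1) - -u * ((1 - Γ * u) * M) ≤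
      -((1 - K * u) * M * (u - u ^ 2)) + u * ((1 - Γ * u) * M) := by linarith
    _ = M * u ^ 2 * (1 + K - K * u - Γ) := by ring
    _ ≤ M * u ^ 2 * (-1) := by
        gcongr
        nlinarith [mul_nonneg hK hu0]
    _ = _ := by ring

open Finset in
theorem aux_box (d : ℕ) (s : ℝ) (m : ℕ) (hm : 1 ≤ m) (hs : 0 ≤ s) (p : Fin d → Fin m) :
    ∃ (A : Finset (gridPt d ⌊s⌋)) (a : Fin d → ℝ), (#A : ℝ) = ∏ i, a i ∧ (∀ i, 0 ≤ a i) ∧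
      (∀ i, s / m - 1 ≤ a i ∧ a i ≤ s / m + 1) ∧
      ((∃ z : ℤ, s / m = z) → ∀ i, a i = s / m) ∧
      ∀ S : Finset (gridPt d ⌊s⌋), Set.ncard {x | x ∈ S ∧ ∀ i,
                  s * (p i : ℕ) / m < ((x i : ℤ) : ℝ) ∧
                  ((x i : ℤ) : ℝ) ≤ s * ((p i : ℕ) + 1) / m} = #(S ∩ A) := by
  classical
  have hm0 : (0:ℝ) < m := by exact_mod_cast hm
  let I : ∀ i : Fin d, Finset (Icc (1 : ℤ) ⌊s⌋ : Finset ℤ) := fun i =>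
    {x | s * (p i : ℕ) / m < ((x : ℤ) : ℝ) ∧ ((x : ℤ) : ℝ) ≤ s * ((p i : ℕ) + 1) / m}
  have hI : ∀ i, (#(I i) : ℤ) = ⌊s * ((p i : ℕ) + 1) / m⌋ - ⌊s * (p i : ℕ) / m⌋ := by
    intro i
    have hle : ⌊s * (p i : ℕ) / m⌋ ≤ ⌊s * ((p i : ℕ) + 1) / m⌋ := by
      apply Int.floor_le_floor; gcongr; linarith
    rw [← Int.toNat_of_nonneg (sub_nonneg.2 hle), ← Int.card_Ioc]
    rw [← card_map (Function.Embedding.subtype _)]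
    congr 2
    ext j
    simp only [I, mem_map, mem_filter, mem_univ, true_and, Function.Embedding.subtype_apply,
      Subtype.exists, exists_and_right, exists_eq_right, mem_Ioc, Int.floor_lt, Int.le_floor,
      mem_Icc]
    constructor
    · rintro ⟨⟨_, h1⟩, h2⟩; exact ⟨h1, h2⟩
    · rintro ⟨h1, h2⟩
      refine ⟨⟨⟨?_, ?_⟩, h1⟩, h2⟩
      · have : (0:ℝ) < j := lt_of_le_of_lt (by positivity) h1
        have : 0 < j := by exact_mod_cast this
        omega
      · refine h2.trans ?_
        rw [div_le_iff₀ hm0]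
        gcongr
        have := (p i).2
        exact_mod_cast this
  have hIr : ∀ i, (#(I i) : ℝ) = ⌊s * ((p i : ℕ) + 1) / m⌋ - ⌊s * (p i : ℕ) / m⌋ := by
    intro i; exact_mod_cast hI i
  have hsplit : ∀ i, s * ((p i : ℕ) + 1) / m = s * (p i : ℕ) / m + s / m := by
    intro i; ring
  refine ⟨Fintype.piFinset I, fun i => #(I i), ?_, ?_, ?_, ?_, ?_⟩
  · rw [Fintype.card_piFinset]; push_cast; rfl
  · intro i; positivity
  · intro i
    simp only [hIr]
    have h1 := Int.floor_le (s * ((p i : ℕ) + 1) / m)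
    have h2 := Int.lt_floor_add_one (s * ((p i : ℕ) + 1) / m)
    have h3 := Int.floor_le (s * (p i : ℕ) / m)
    have h4 := Int.lt_floor_add_one (s * (p i : ℕ) / m)
    have := hsplit i
    constructor <;> linarith
  · rintro ⟨z, hz⟩ i
    simp only [hIr, hsplit, hz, Int.floor_add_intCast]
    push_cast; ring
  · intro S
    rw [← Set.ncard_coe_finset]
    congr 1
    ext x
    simp [I]

/-- With probability at least `1 − Γ·n^Γ·2^(−(log₂ n)^(qd−2)/Γ)`, a uniformly random
`n^d`-element subset of the grid `{1,…,⌊C^(1/d)n⌋}^d` has, in every cube of the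
rescaled dyadic partition `C^(1/d)·n·𝒯_m`, a number of points within a
`(1 ± Γ/log₂ n)` factor of the average `n^d/m^d`. -/
theorem stmt_10 (d : ℕ) (hd : 1 ≤ d) :
    ∃ Γ : ℝ, 0 < Γ ∧
      ∀ (n m : ℕ) (C q : ℝ), 2 ≤ n → 1 ≤ m →
        (n : ℝ) / (2 * Real.logb 2 n ^ q) ≤ (m : ℝ) →
        (m : ℝ) ≤ 2 * n / Real.logb 2 n ^ q →
        1 + 2 ^ (d + 7) / Real.logb 2 n ≤ C →
        0 < q →
        ((¬ ∃ z : ℤ, C ^ ((d : ℝ)⁻¹) * n / m = (z : ℝ)) → 1 ≤ q) →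
        uniformProb {S : Finset (gridPt d ⌊C ^ ((d : ℝ)⁻¹) * n⌋) // S.card = n ^ d}
            (fun S => ∃ p : Fin d → Fin m,
              (Set.ncard {x | x ∈ S.1 ∧ ∀ i,
                  C ^ ((d : ℝ)⁻¹) * n * (p i : ℕ) / m < ((x i : ℤ) : ℝ) ∧
                  ((x i : ℤ) : ℝ) ≤ C ^ ((d : ℝ)⁻¹) * n * ((p i : ℕ) + 1) / m} : ℝ) ≤
                (1 - Γ / Real.logb 2 n) * n ^ d / m ^ d) ≤
          Γ * (n : ℝ) ^ Γ * (2 : ℝ) ^ (-(Real.logb 2 n ^ (q * d - 2)) / Γ) ∧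
        uniformProb {S : Finset (gridPt d ⌊C ^ ((d : ℝ)⁻¹) * n⌋) // S.card = n ^ d}
            (fun S => ∃ p : Fin d → Fin m,
              (1 + Γ / Real.logb 2 n) * n ^ d / m ^ d ≤
                (Set.ncard {x | x ∈ S.1 ∧ ∀ i,
                  C ^ ((d : ℝ)⁻¹) * n * (p i : ℕ) / m < ((x i : ℤ) : ℝ) ∧
                  ((x i : ℤ) : ℝ) ≤ C ^ ((d : ℝ)⁻¹) * n * ((p i : ℕ) + 1) / m} : ℝ)) ≤
          Γ * (n : ℝ) ^ Γ * (2 : ℝ) ^ (-(Real.logb 2 n ^ (q * d - 2)) / Γ) := by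
  classical
  refine ⟨2 + 2 * (6 ^ d + 2 * d) + 2 ^ d + d, by positivity, ?_⟩
  intro n m C q hn hm hmlo hmhi hC hq hint
  set K : ℝ := 6 ^ d + 2 * d with hKdef
  have hK0 : 0 ≤ K := by positivity
  set Γ : ℝ := 2 + 2 * K + 2 ^ d + d with hΓdef
  have h2d : (0:ℝ) < 2 ^ d := by positivity
  have hdd : (0:ℝ) ≤ d := by positivity
  have hΓK : 2 + 2 * K ≤ Γ := by linarith
  have hn0 : (2:ℝ) ≤ n := by exact_mod_cast hn
  have hm0 : (1:ℝ) ≤ m := by exact_mod_cast hm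
  have hL : 1 ≤ Real.logb 2 n := by
    rw [Real.le_logb_iff_rpow_le (by norm_num) (by linarith)]; simpa using hn0
  have hLn : Real.logb 2 n ≤ n := by
    rw [Real.logb_le_iff_le_rpow (by norm_num) (by linarith), Real.rpow_natCast]
    exact_mod_cast Nat.lt_two_pow_self.le
  set L := Real.logb 2 n with hLdef
  have hC1 : 1 ≤ C := by
    have : 0 ≤ 2 ^ (d + 7) / L := by positivity
    linarith
  have hCd : 1 ≤ C ^ ((d : ℝ)⁻¹) := Real.one_le_rpow hC1 (by positivity)
  set s := C ^ ((d : ℝ)⁻¹) * n with hsdef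
  have hns : (n:ℝ) ≤ s := by nlinarith
  have hs0 : 0 < s := by linarith
  obtain ⟨N, hN⟩ : ∃ N : ℕ, ⌊s⌋ = N := ⟨⌊s⌋.toNat, (Int.toNat_of_nonneg (Int.floor_nonneg.2 hs0.le)).symm⟩
  have hNs : (N:ℝ) ≤ s := by
    have := Int.floor_le s
    rw [hN] at this; exact_mod_cast this
  have hsN : s < N + 1 := by
    have := Int.lt_floor_add_one s
    rw [hN] at this; exact_mod_cast this
  have hnN : n ≤ N := by
    have : (n:ℝ) < N + 1 := by linarith
    have : n < N + 1 := by exact_mod_cast this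
    omega
  have hcard : Fintype.card (gridPt d ⌊s⌋) = N ^ d := by
    simp [gridPt, hN]
  have hk : n ^ d ≤ Fintype.card (gridPt d ⌊s⌋) := by
    rw [hcard]; exact Nat.pow_le_pow_left hnN d
  have hcardR : (Fintype.card (gridPt d ⌊s⌋) : ℝ) = (N:ℝ) ^ d := by rw [hcard]; push_cast; rfl
  set M : ℝ := (n:ℝ) ^ d / m ^ d with hMdef
  have hM : 0 ≤ M := by positivity
  have hLp : 0 < L := by linarith
  have hmean : ∀ a : Fin d → ℝ, (∀ i, 0 ≤ a i) → (∀ i, s / m - 1 ≤ a i ∧ a i ≤ s / m + 1) →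
      ((∃ z : ℤ, s / m = z) → ∀ i, a i = s / m) →
      (1 - K / L) * M ≤ (∏ i, a i) * n ^ d / N ^ d ∧
      (∏ i, a i) * n ^ d / N ^ d ≤ (1 + K / L) * M := by
    intro a ha0 ha1 ha2
    apply aux_mean d hd a s L n m N hn hm hL hLn hnN hNs hsN ha0
    by_cases hz : ∃ z : ℤ, s / m = z
    · left
      refine ⟨ha2 hz, ?_⟩
      obtain ⟨z, hz⟩ := hz
      have hsz : s = ((z * m : ℤ) : ℝ) := by
        rw [div_eq_iff (by positivity)] at hz; rw [hz]; push_cast; rfl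
      have h1 : ⌊s⌋ = z * m := by rw [hsz, Int.floor_intCast]
      rw [hsz, ← h1, hN]; simp
    · right
      refine ⟨ha1, ?_⟩
      have hq1 := hint hz
      have hLq : L ≤ L ^ q := by
        calc L = L ^ (1:ℝ) := (Real.rpow_one L).symm
          _ ≤ _ := Real.rpow_le_rpow_of_exponent_le hL hq1
      rw [div_le_div_iff₀ hs0 hLp]
      rw [le_div_iff₀ (by positivity)] at hmhi
      calc (m:ℝ) * L ≤ m * L ^ q := by gcongr
        _ ≤ 2 * n := hmhi
        _ ≤ 2 * s := by linarith
  have hfin := aux_final d n m L q Γ hn hm hL hq hmhi (by linarith) (by linarith)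
  have hι : (Fintype.card (Fin d → Fin m) : ℝ) = (m:ℝ) ^ d := by simp
  constructor
  · refine le_trans (aux_prob (n ^ d) hk (fun (p : Fin d → Fin m) (S : Finset (gridPt d ⌊s⌋)) =>
      (Set.ncard {x | x ∈ S ∧ ∀ i, s * (p i : ℕ) / m < ((x i : ℤ) : ℝ) ∧
        ((x i : ℤ) : ℝ) ≤ s * ((p i : ℕ) + 1) / m} : ℝ) ≤ (1 - Γ / L) * n ^ d / m ^ d)
      (Real.exp (-(M / L ^ 2))) ?_) (by rw [hι]; exact hfin)
    intro p
    obtain ⟨A, a, hA, ha0, ha1, ha2, hS⟩ := aux_box d s m hm hs0.le p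
    obtain ⟨hlo, hup⟩ := hmean a ha0 ha1 ha2
    rw [← hA] at hlo hup
    have hexp := aux_exp_lo L K Γ M _ hL hK0 hM hΓK (by positivity) hlo
    refine (aux_chernoff A (-(1 / L)) ((1 - Γ / L) * M) (n ^ d) hk _ ?_).trans ?_
    · intro S hPS
      rw [hS S, mul_div_assoc] at hPS
      have : 0 ≤ 1 / L := by positivity
      rw [neg_mul, neg_mul, neg_le_neg_iff]
      exact mul_le_mul_of_nonneg_left hPS this
    · gcongr
      rw [hcardR]; push_cast; exact hexp
  · refine le_trans (aux_prob (n ^ d) hk (fun (p : Fin d → Fin m) (S : Finset (gridPt d ⌊s⌋)) =>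
      (1 + Γ / L) * n ^ d / m ^ d ≤
      (Set.ncard {x | x ∈ S ∧ ∀ i, s * (p i : ℕ) / m < ((x i : ℤ) : ℝ) ∧
        ((x i : ℤ) : ℝ) ≤ s * ((p i : ℕ) + 1) / m} : ℝ))
      (Real.exp (-(M / L ^ 2))) ?_) (by rw [hι]; exact hfin)
    intro p
    obtain ⟨A, a, hA, ha0, ha1, ha2, hS⟩ := aux_box d s m hm hs0.le p
    obtain ⟨hlo, hup⟩ := hmean a ha0 ha1 ha2
    rw [← hA] at hlo hup
    have hexp := aux_exp_up L K Γ M _ hL hK0 hM hΓK hup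
    refine (aux_chernoff A (1 / L) ((1 + Γ / L) * M) (n ^ d) hk _ ?_).trans ?_
    · intro S hPS
      rw [hS S, mul_div_assoc] at hPS
      have : 0 ≤ 1 / L := by positivity
      exact mul_le_mul_of_nonneg_left hPS this
    · gcongr
      rw [hcardR]; push_cast; exact hexp
end

section
/- Fix d ∈ ℕ, d ≥ 2 and q ∈ ℝ with q ≥ 1 and q > 3/d. There exists a constant Υ = Υ(d) > 0 such that for every n ∈ ℕ with n ≥ 2 and every real c ≥ (1 + 2^(d+7)/log₂ n)^(1/d), a uniformly random n^d-element subset S of the grid {1,…,⌊c·n⌋}^d satisfies ℙ[ F_n(S) > Υ·(log₂ n)^q ] ≤ Υ·n^(−2). -/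
/-- Euclidean distance between two points of the integer lattice `ℤ^d`. -/
noncomputable def zdist {d : ℕ} (x y : Fin d → ℤ) : ℝ :=
  Real.sqrt (∑ i, ((x i : ℝ) - (y i : ℝ)) ^ 2)

/-- The grid `{1,…,n}^d` as a finset of `ℤ^d`. -/
noncomputable def grid (d n : ℕ) : Finset (Fin d → ℤ) :=
  Fintype.piFinset fun _ => Finset.Icc 1 (n : ℤ)

/-- `F_n(S)`: the least Lipschitz constant (Euclidean metric) of a surjection of `S`
onto the grid `{1,…,n}^d`. -/
noncomputable def Fleast (d n : ℕ) (S : Finset (Fin d → ℤ)) : ℝ :=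
  sInf {L : ℝ | ∃ f : (Fin d → ℤ) → (Fin d → ℤ),
    (∀ x ∈ S, f x ∈ grid d n) ∧
    (∀ y ∈ grid d n, ∃ x ∈ S, f x = y) ∧
    (∀ x ∈ S, ∀ y ∈ S, zdist (f x) (f y) ≤ L * zdist x y)}

/-- A configuration in `gridPt d m`, regarded as a finset of the integer lattice. -/
def toLattice {d : ℕ} {m : ℤ} (S : Finset (gridPt d m)) : Finset (Fin d → ℤ) :=
  S.image fun x i => (x i : ℤ)

section tails
open Finset

lemma choose_sub_le (N M j : ℕ) (hN : N ≤ M) (hj : j ≤ N) :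
    ((M - j).choose (N - j) : ℝ) * (M : ℝ) ^ j ≤ M.choose N * (N : ℝ) ^ j := by
  induction j with
  | zero => simp
  | succ j ih =>
    have ih := ih (by omega)
    obtain ⟨a, ha⟩ : ∃ a, M - j = a + 1 := ⟨M - j - 1, by omega⟩
    obtain ⟨b, hb⟩ : ∃ b, N - j = b + 1 := ⟨N - j - 1, by omega⟩
    have e1 : M - (j + 1) = a := by omega
    have e2 : N - (j + 1) = b := by omega
    rw [ha, hb] at ih
    rw [e1, e2]
    have key : ((a : ℝ) + 1) * a.choose b = (a + 1).choose (b + 1) * ((b : ℝ) + 1) := by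
      exact_mod_cast Nat.add_one_mul_choose_eq a b
    have hM : (M : ℝ) = a + 1 + j := by
      have : M = a + 1 + j := by omega
      exact_mod_cast this
    have hN' : (N : ℝ) = b + 1 + j := by
      have : N = b + 1 + j := by omega
      exact_mod_cast this
    have hab : (b : ℝ) ≤ a := by
      have : b ≤ a := by omega
      exact_mod_cast this
    -- (b+1)/(a+1) ≤ N/M
    have h1 : ((b : ℝ) + 1) * M ≤ N * (a + 1) := by
      rw [hM, hN']
      have : (0 : ℝ) ≤ j := Nat.cast_nonneg j
      nlinarith
    have h2 : (a.choose b : ℝ) * M ≤ (a + 1).choose (b + 1) * N := by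
      have ha1 : (0 : ℝ) < a + 1 := by positivity
      have : ((a : ℝ) + 1) * (a.choose b * M) ≤ (a + 1) * ((a + 1).choose (b + 1) * N) := by
        calc ((a : ℝ) + 1) * (a.choose b * M) = (a + 1).choose (b + 1) * (((b : ℝ) + 1) * M) := by
              rw [← mul_assoc, key]; ring
          _ ≤ (a + 1).choose (b + 1) * (N * (a + 1)) := by gcongr
          _ = _ := by ring
      exact le_of_mul_le_mul_left this ha1
    calc (a.choose b : ℝ) * (M : ℝ) ^ (j + 1) = (a.choose b * M) * (M : ℝ) ^ j := by ring
      _ ≤ ((a + 1).choose (b + 1) * N) * (M : ℝ) ^ j := by gcongr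
      _ = ((a + 1).choose (b + 1) * (M : ℝ) ^ j) * N := by ring
      _ ≤ (M.choose N * (N : ℝ) ^ j) * N := by gcongr
      _ = _ := by ring

lemma cnt_super {α : Type*} [Fintype α] [DecidableEq α] (N : ℕ) (A : Finset α)
    (hN : N ≤ Fintype.card α) :
    (#{S ∈ powersetCard N (univ : Finset α) | A ⊆ S} : ℝ) * (Fintype.card α : ℝ) ^ #A
      ≤ (Fintype.card α).choose N * (N : ℝ) ^ #A := by
  by_cases hA : #A ≤ N
  · rw [card_filter_powersetCard_subset A univ N (subset_univ _) hA, card_univ]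
    exact choose_sub_le N _ _ hN hA
  · have : #{S ∈ powersetCard N (univ : Finset α) | A ⊆ S} = 0 := by
      rw [card_eq_zero, filter_eq_empty_iff]
      intro S hS hAS
      rw [mem_powersetCard] at hS
      have := card_le_card hAS
      omega
    rw [this]
    simp only [Nat.cast_zero, zero_mul]
    positivity

lemma mgf_le {α : Type*} [Fintype α] [DecidableEq α] (N : ℕ) (B : Finset α)
    (hN : N ≤ Fintype.card α) (hM : 0 < Fintype.card α) (u : ℝ) (hu : 0 ≤ u) :
    ∑ S ∈ powersetCard N (univ : Finset α), (1 + u) ^ #(S ∩ B)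
      ≤ (Fintype.card α).choose N * (1 + u * (N / Fintype.card α)) ^ #B := by
  have hM' : (0 : ℝ) < Fintype.card α := by exact_mod_cast hM
  have e1 : ∀ S : Finset α, (1 + u) ^ #(S ∩ B) = ∑ A ∈ B.powerset, if A ⊆ S then u ^ #A else 0 := by
    intro S
    have := Finset.sum_pow_mul_eq_add_pow u 1 (S ∩ B)
    simp only [one_pow, mul_one] at this
    rw [add_comm, ← this, ← sum_filter]
    congr 1
    ext A
    simp only [mem_powerset, mem_filter, subset_inter_iff]
    tauto
  simp_rw [e1]
  rw [sum_comm]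
  have e2 := Finset.sum_pow_mul_eq_add_pow (u * (N / Fintype.card α)) 1 B
  simp only [one_pow, mul_one] at e2
  rw [add_comm 1 (u * _), ← e2, mul_sum]
  apply sum_le_sum
  intro A _
  rw [← sum_filter, sum_const, nsmul_eq_mul, mul_pow, div_pow]
  have := cnt_super N A hN
  have h3 : (#{S ∈ powersetCard N (univ : Finset α) | A ⊆ S} : ℝ)
     ≤ (Fintype.card α).choose N * ((N : ℝ) ^ #A / (Fintype.card α : ℝ) ^ #A) := by
    rw [← mul_div_assoc, le_div_iff₀ (by positivity)]
    exact this
  calc _ ≤ ((Fintype.card α).choose N * ((N : ℝ) ^ #A / (Fintype.card α : ℝ) ^ #A)) * u ^ #A := by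
        gcongr
    _ = _ := by ring

lemma mgf_compl {α : Type*} [Fintype α] [DecidableEq α] (N : ℕ) (B : Finset α)
    (hN : N ≤ Fintype.card α) (hM : 0 < Fintype.card α) (u : ℝ) (hu : 0 ≤ u) :
    ∑ S ∈ powersetCard N (univ : Finset α), (1 + u) ^ (#B - #(S ∩ B))
      ≤ (Fintype.card α).choose N * (1 + u * (1 - N / Fintype.card α)) ^ #B := by
  have hM' : (0 : ℝ) < Fintype.card α := by exact_mod_cast hM
  have := mgf_le (Fintype.card α - N) B (Nat.sub_le _ _) hM u hu
  rw [Nat.choose_symm hN, Nat.cast_sub hN, sub_div, div_self hM'.ne'] at this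
  refine le_trans (le_of_eq ?_) this
  apply sum_nbij' (fun S => Sᶜ) (fun S => Sᶜ)
  · intro S hS
    rw [mem_powersetCard] at hS ⊢
    exact ⟨subset_univ _, by rw [card_compl, hS.2]⟩
  · intro S hS
    rw [mem_powersetCard] at hS ⊢
    exact ⟨subset_univ _, by rw [card_compl, hS.2]; omega⟩
  · simp
  · simp
  · intro S _
    congr 1
    have : #(S ∩ B) + #(Sᶜ ∩ B) = #B := by
      rw [← card_union_of_disjoint]
      · rw [← union_inter_distrib_right]; simp
      · rw [Finset.disjoint_left]; intro x; simp; tauto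
    omega

lemma upper_tail {α : Type*} [Fintype α] [DecidableEq α] (N : ℕ) (B : Finset α)
    (hN : N ≤ Fintype.card α) (hM : 0 < Fintype.card α) (ε μ : ℝ) (h0 : 0 ≤ ε) (h1 : ε ≤ 1)
    (hμ : μ = #B * (N / Fintype.card α)) :
    (#{S ∈ powersetCard N (univ : Finset α) | (1 + ε) * μ < #(S ∩ B)} : ℝ)
      ≤ (Fintype.card α).choose N * Real.exp (-(ε ^ 2 * μ / 4)) := by
  have hμ0 : 0 ≤ μ := by rw [hμ]; positivity
  set u := ε / 2 with hu
  have hu0 : 0 ≤ u := by positivity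
  have A := mgf_le N B hN hM u hu0
  set T := {S ∈ powersetCard N (univ : Finset α) | (1 + ε) * μ < #(S ∩ B)}
  have hlog : u - u ^ 2 / 2 ≤ Real.log (1 + u) := by
    have := Real.le_log_one_add_of_nonneg hu0
    refine le_trans ?_ this
    rw [le_div_iff₀ (by positivity)]
    nlinarith [pow_nonneg hu0 3]
  have B1 : #T * Real.exp ((u - u ^ 2 / 2) * ((1 + ε) * μ)) ≤
      ∑ S ∈ powersetCard N (univ : Finset α), (1 + u) ^ #(S ∩ B) := by
    calc _ = ∑ S ∈ T, Real.exp ((u - u ^ 2 / 2) * ((1 + ε) * μ)) := by simp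
      _ ≤ ∑ S ∈ T, (1 + u) ^ #(S ∩ B) := by
        apply sum_le_sum
        intro S hS
        have hS := (mem_filter.1 hS).2
        have : (1 + u) ^ #(S ∩ B) = Real.exp (Real.log (1 + u) * #(S ∩ B)) := by
          rw [mul_comm, Real.exp_nat_mul, Real.exp_log (by positivity)]
        rw [this]
        apply Real.exp_le_exp.2
        apply mul_le_mul hlog hS.le (by positivity)
        apply Real.log_nonneg; linarith
      _ ≤ _ := by
        apply sum_le_sum_of_subset_of_nonneg (filter_subset _ _)
        intros; positivity
  have C1 : (1 + u * (N / Fintype.card α)) ^ #B ≤ Real.exp (u * μ) := by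
    calc (1 + u * ((N : ℝ) / Fintype.card α)) ^ #B ≤ (Real.exp (u * (N / Fintype.card α))) ^ #B := by
          gcongr
          have := Real.add_one_le_exp (u * ((N : ℝ) / Fintype.card α))
          linarith
      _ = _ := by rw [← Real.exp_nat_mul, hμ]; congr 1; ring
  have D : #T * Real.exp ((u - u ^ 2 / 2) * ((1 + ε) * μ)) ≤
      (Fintype.card α).choose N * Real.exp (u * μ) :=
    B1.trans (A.trans (by gcongr))
  rw [← le_div_iff₀ (Real.exp_pos _), mul_div_assoc, ← Real.exp_sub] at D
  refine D.trans ?_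
  gcongr
  have hε : ε = 2 * u := by rw [hu]; ring
  have : u * μ - (u - u ^ 2 / 2) * ((1 + ε) * μ) + ε ^ 2 * μ / 4
     = μ * (u ^ 2 * (2 * u - 1) / 2) := by rw [hε]; ring
  have h2 : μ * (u ^ 2 * (2 * u - 1) / 2) ≤ 0 := by
    apply mul_nonpos_of_nonneg_of_nonpos hμ0
    nlinarith [sq_nonneg u]
  linarith

lemma lower_tail {α : Type*} [Fintype α] [DecidableEq α] (N : ℕ) (B : Finset α)
    (hN : N ≤ Fintype.card α) (hM : 0 < Fintype.card α) (ε μ : ℝ) (h0 : 0 ≤ ε)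
    (hμ : μ = #B * (N / Fintype.card α)) :
    (#{S ∈ powersetCard N (univ : Finset α) | #(S ∩ B) < (1 - ε) * μ} : ℝ)
      ≤ (Fintype.card α).choose N * Real.exp (-(ε ^ 2 * μ / 4)) := by
  have hM' : (0 : ℝ) < Fintype.card α := by exact_mod_cast hM
  have hμ0 : 0 ≤ μ := by rw [hμ]; positivity
  set u := ε / 2 with hu
  have hu0 : 0 ≤ u := by positivity
  have A := mgf_compl N B hN hM u hu0
  set T := {S ∈ powersetCard N (univ : Finset α) | #(S ∩ B) < (1 - ε) * μ}
  set l : ℝ := (N : ℝ) / Fintype.card α with hl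
  have hl0 : 0 ≤ l := by positivity
  have hl1 : l ≤ 1 := by rw [hl, div_le_one hM']; exact_mod_cast hN
  have B1 : #T * ((1 + u) ^ #B * Real.exp (-(u * ((1 - ε) * μ)))) ≤
      ∑ S ∈ powersetCard N (univ : Finset α), (1 + u) ^ (#B - #(S ∩ B)) := by
    calc _ = ∑ S ∈ T, ((1 + u) ^ #B * Real.exp (-(u * ((1 - ε) * μ)))) := by simp
      _ ≤ ∑ S ∈ T, (1 + u) ^ (#B - #(S ∩ B)) := by
        apply sum_le_sum
        intro S hS
        have hS := (mem_filter.1 hS).2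
        have hle : #(S ∩ B) ≤ #B := card_le_card inter_subset_right
        have e : (1 + u) ^ #B = (1 + u) ^ (#B - #(S ∩ B)) * (1 + u) ^ #(S ∩ B) := by
          rw [← pow_add]; congr 1; omega
        rw [e, mul_assoc]
        apply mul_le_of_le_one_right (by positivity)
        rw [Real.exp_neg, ← div_eq_mul_inv, div_le_one (Real.exp_pos _)]
        calc (1 + u) ^ #(S ∩ B) ≤ (Real.exp u) ^ #(S ∩ B) := by
              gcongr
              have := Real.add_one_le_exp u
              linarith
          _ = Real.exp (#(S ∩ B) * u) := by rw [← Real.exp_nat_mul]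
          _ ≤ _ := by
              apply Real.exp_le_exp.2
              rw [mul_comm]
              gcongr
      _ ≤ _ := by
        apply sum_le_sum_of_subset_of_nonneg (filter_subset _ _)
        intros; positivity
  have C1 : (1 + u * (1 - l)) ^ #B ≤ (1 + u) ^ #B * Real.exp (-((u - u ^ 2) * μ)) := by
    have : 1 + u * (1 - l) ≤ (1 + u) * Real.exp (-((u - u ^ 2) * l)) := by
      have h := Real.add_one_le_exp (-((u - u ^ 2) * l))
      have h' : (1 + u) * (-((u - u ^ 2) * l) + 1) ≤ (1 + u) * Real.exp (-((u - u ^ 2) * l)) := by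
        gcongr
      refine le_trans ?_ h'
      nlinarith [mul_nonneg hl0 (pow_nonneg hu0 3)]
    calc _ ≤ ((1 + u) * Real.exp (-((u - u ^ 2) * l))) ^ #B := by
          apply pow_le_pow_left₀ _ this
          nlinarith
      _ = _ := by rw [mul_pow, ← Real.exp_nat_mul, hμ]; congr 2; ring
  have D : #T * ((1 + u) ^ #B * Real.exp (-(u * ((1 - ε) * μ)))) ≤
      (Fintype.card α).choose N * ((1 + u) ^ #B * Real.exp (-((u - u ^ 2) * μ))) :=
    B1.trans (A.trans (by gcongr))
  have D' : (#T : ℝ) * Real.exp (-(u * ((1 - ε) * μ))) ≤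
      (Fintype.card α).choose N * Real.exp (-((u - u ^ 2) * μ)) := by
    have hp : 0 < (1 + u) ^ #B := by positivity
    refine le_of_mul_le_mul_left ?_ hp
    calc _ = #T * ((1 + u) ^ #B * Real.exp (-(u * ((1 - ε) * μ)))) := by ring
      _ ≤ _ := D
      _ = _ := by ring
  rw [← le_div_iff₀ (Real.exp_pos _), mul_div_assoc, ← Real.exp_sub] at D'
  refine D'.trans (le_of_eq ?_)
  congr 2
  have hε : ε = 2 * u := by rw [hu]; ring
  rw [hε]; ring

end tails
section boxes
open Finset

/-- cut coordinate at stage `s` -/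
def cutc (d : ℕ) [NeZero d] (s : ℕ) : Fin d := Fin.ofNat d s

/-- left child -/
def lft {d : ℕ} (i : Fin d) (B : (Fin d → ℤ) × (Fin d → ℤ)) : (Fin d → ℤ) × (Fin d → ℤ) :=
  (B.1, Function.update B.2 i ((B.1 i + B.2 i) / 2))

/-- right child -/
def rgt {d : ℕ} (i : Fin d) (B : (Fin d → ℤ) × (Fin d → ℤ)) : (Fin d → ℤ) × (Fin d → ℤ) :=
  (Function.update B.1 i ((B.1 i + B.2 i) / 2), B.2)

/-- the family of source boxes of stage `s` -/
def bxs (d : ℕ) [NeZero d] (m : ℤ) : ℕ → Finset ((Fin d → ℤ) × (Fin d → ℤ))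
  | 0 => {(fun _ => 0, fun _ => m)}
  | s + 1 => (bxs d m s).image (lft (cutc d s)) ∪ (bxs d m s).image (rgt (cutc d s))

/-- number of halvings of coordinate `i` before stage `s` -/
def kap (d : ℕ) (s : ℕ) (i : Fin d) : ℕ := (s + (d - 1 - i)) / d

lemma bxs_card (d : ℕ) [NeZero d] (m : ℤ) (s : ℕ) : #(bxs d m s) ≤ 2 ^ s := by
  induction s with
  | zero => simp [bxs]
  | succ s ih =>
    rw [bxs]
    refine (card_union_le _ _).trans ?_
    have h1 := card_image_le (s := bxs d m s) (f := lft (cutc d s))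
    have h2 := card_image_le (s := bxs d m s) (f := rgt (cutc d s))
    rw [pow_succ]; omega

lemma kap_zero (d : ℕ) [NeZero d] (i : Fin d) : kap d 0 i = 0 := by
  unfold kap
  have := i.2
  rw [Nat.div_eq_zero_iff]; right; omega

lemma kap_succ (d : ℕ) [NeZero d] (s : ℕ) (i : Fin d) :
    kap d (s + 1) i = kap d s i + if i = cutc d s then 1 else 0 := by
  unfold kap
  have hi := i.2
  have e : s + 1 + (d - 1 - i) = (s + (d - 1 - i)) + 1 := by omega
  rw [e, Nat.succ_div]
  congr 1
  have hiff : (d ∣ s + (d - 1 - i) + 1) ↔ i = cutc d s := by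
    have e2 : s + (d - 1 - i) + 1 = s + (d - i) := by omega
    rw [e2]
    have e3 : i = cutc d s ↔ (i : ℕ) = s % d := by
      rw [Fin.ext_iff]; rfl
    rw [e3]
    have hmod := Nat.mod_add_div s d
    have hlt := Nat.mod_lt s (show s ≥ 0 → d > 0 by omega |> fun h => h (Nat.zero_le _))
    constructor
    · rintro ⟨c, hc⟩
      set t := s % d
      set p := s / d
      -- t + d p + d - i = d c
      have h : (t : ℤ) - i = d * (c - p - 1) := by
        have : (t : ℤ) + d * p + (d - i) = d * c := by
          have h1 : ((d - i : ℕ) : ℤ) = d - i := by push_cast [hi.le]; ring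
          rw [← h1]; exact_mod_cast (by rw [hmod]; exact hc)
        linarith
      have h0 : (t : ℤ) - i = 0 := by
        apply Int.eq_zero_of_abs_lt_dvd (m := d) ⟨_, h⟩
        rw [abs_lt]; omega
      omega
    · intro h
      refine ⟨s / d + 1, ?_⟩
      rw [mul_add]; omega
  simp [hiff]

lemma kap_bounds (d : ℕ) [NeZero d] (s : ℕ) (i : Fin d) :
    s / d ≤ kap d s i ∧ kap d s i ≤ s / d + 1 := by
  unfold kap
  have hi := i.2
  constructor
  · exact Nat.div_le_div_right (by omega)
  · calc (s + (d - 1 - i)) / d ≤ (s + d) / d := Nat.div_le_div_right (by omega)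
      _ = s / d + 1 := Nat.add_div_right _ (by omega)

lemma half_bounds (x : ℤ) : (x : ℝ) / 2 - 1 / 2 ≤ ((x / 2 : ℤ) : ℝ) ∧ ((x / 2 : ℤ) : ℝ) ≤ x / 2 := by
  have h1 : x - 1 ≤ 2 * (x / 2) := by omega
  have h2 : 2 * (x / 2) ≤ x := by omega
  have h1' : (x : ℝ) - 1 ≤ 2 * ((x / 2 : ℤ) : ℝ) := by exact_mod_cast h1
  have h2' : 2 * ((x / 2 : ℤ) : ℝ) ≤ (x : ℝ) := by exact_mod_cast h2
  constructor <;> linarith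

lemma bxs_inv (d : ℕ) [NeZero d] (m : ℤ) (hm : 0 ≤ m) (s : ℕ) :
    ∀ B ∈ bxs d m s, ∀ i, 0 ≤ B.1 i ∧ B.1 i ≤ B.2 i ∧ B.2 i ≤ m ∧
      |((B.2 i : ℝ) - B.1 i) - m / 2 ^ (kap d s i)| ≤ 1 := by
  induction s with
  | zero =>
    intro B hB i
    simp only [bxs, mem_singleton] at hB
    subst hB
    simp [kap_zero, hm]
  | succ s ih =>
    intro B hB i
    rw [bxs, mem_union, mem_image, mem_image] at hB
    rw [kap_succ]
    rcases hB with ⟨C, hC, rfl⟩ | ⟨C, hC, rfl⟩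
    · obtain ⟨h1, h2, h3, h4⟩ := ih C hC i
      by_cases hi : i = cutc d s
      · subst hi
        simp only [lft, Function.update_self, if_true]
        obtain ⟨g1, g2⟩ := half_bounds (C.1 (cutc d s) + C.2 (cutc d s))
        refine ⟨h1, by omega, by omega, ?_⟩
        rw [abs_le] at h4 ⊢
        push_cast at g1 g2
        rw [pow_succ, ← div_div]
        constructor <;> linarith
      · simp only [lft, Function.update_of_ne hi, if_neg hi]
        exact ⟨h1, h2, h3, h4⟩
    · obtain ⟨h1, h2, h3, h4⟩ := ih C hC i
      by_cases hi : i = cutc d s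
      · subst hi
        simp only [rgt, Function.update_self, if_true]
        obtain ⟨g1, g2⟩ := half_bounds (C.1 (cutc d s) + C.2 (cutc d s))
        refine ⟨by omega, by omega, by omega, ?_⟩
        rw [abs_le] at h4 ⊢
        push_cast at g1 g2
        rw [pow_succ, ← div_div]
        constructor <;> linarith
      · simp only [rgt, Function.update_of_ne hi, if_neg hi]
        exact ⟨h1, h2, h3, h4⟩

/-- membership in a half-open box -/
def inB {d : ℕ} (B : (Fin d → ℤ) × (Fin d → ℤ)) (x : Fin d → ℤ) : Prop :=
  ∀ i, B.1 i < x i ∧ x i ≤ B.2 i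

open Classical in
/-- number of points of `S` in a box -/
noncomputable def cnt {d : ℕ} (S : Finset (Fin d → ℤ)) (B : (Fin d → ℤ) × (Fin d → ℤ)) : ℕ :=
  #{x ∈ S | inB B x}

/-- scaled volume of a box -/
noncomputable def muB {d : ℕ} (r : ℝ) (B : (Fin d → ℤ) × (Fin d → ℤ)) : ℝ :=
  ∏ i, (r * ((B.2 i : ℝ) - B.1 i))

lemma inB_split {d : ℕ} (i : Fin d) (B : (Fin d → ℤ) × (Fin d → ℤ)) (h : B.1 i ≤ B.2 i)
    (x : Fin d → ℤ) : inB B x ↔ inB (lft i B) x ∨ inB (rgt i B) x := by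
  unfold inB lft rgt
  constructor
  · intro hx
    by_cases hc : x i ≤ (B.1 i + B.2 i) / 2
    · left
      intro j
      by_cases hj : j = i
      · subst hj; simp only [Function.update_self]; exact ⟨(hx j).1, hc⟩
      · simp only [Function.update_of_ne hj]; exact hx j
    · right
      intro j
      by_cases hj : j = i
      · subst hj; simp only [Function.update_self]; exact ⟨not_le.1 hc, (hx j).2⟩
      · simp only [Function.update_of_ne hj]; exact hx j
  · rintro (hx | hx) j
    · by_cases hj : j = i
      · subst hj; have := hx j; simp only [Function.update_self] at this; omega
      · have := hx j; simpa only [Function.update_of_ne hj] using this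
    · by_cases hj : j = i
      · subst hj; have := hx j; simp only [Function.update_self] at this; omega
      · have := hx j; simpa only [Function.update_of_ne hj] using this

lemma inB_disj {d : ℕ} (i : Fin d) (B : (Fin d → ℤ) × (Fin d → ℤ))
    (x : Fin d → ℤ) (h1 : inB (lft i B) x) (h2 : inB (rgt i B) x) : False := by
  have a := h1 i
  have b := h2 i
  simp only [lft, rgt, Function.update_self] at a b
  omega

open Classical in
lemma card_split {d : ℕ} (S : Finset (Fin d → ℤ)) (i : Fin d) (B : (Fin d → ℤ) × (Fin d → ℤ))
    (h : B.1 i ≤ B.2 i) (P : (Fin d → ℤ) → Prop) :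
    #{x ∈ S | inB B x ∧ P x} = #{x ∈ S | inB (lft i B) x ∧ P x} + #{x ∈ S | inB (rgt i B) x ∧ P x} := by
  rw [← card_union_of_disjoint]
  · congr 1
    ext x
    simp only [mem_filter, mem_union, inB_split i B h x]
    tauto
  · rw [Finset.disjoint_left]
    intro x hx hy
    rw [mem_filter] at hx hy
    exact inB_disj i B x hx.2.1 hy.2.1

lemma cnt_split {d : ℕ} (S : Finset (Fin d → ℤ)) (i : Fin d) (B : (Fin d → ℤ) × (Fin d → ℤ))
    (h : B.1 i ≤ B.2 i) : cnt S B = cnt S (lft i B) + cnt S (rgt i B) := by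
  have := card_split S i B h (fun _ => True)
  have e : ∀ C : (Fin d → ℤ) × (Fin d → ℤ), ∀ _ : DecidablePred fun x => inB C x ∧ True,
      #{x ∈ S | inB C x ∧ True} = cnt S C := by
    intro C _
    unfold cnt
    congr 1
    ext x
    simp
  rw [e, e, e] at this
  exact this

lemma prod_change {d : ℕ} (i : Fin d) (f g : Fin d → ℝ) (t : ℝ) (h : ∀ j, j ≠ i → f j = g j)
    (hi : f i = g i * t) : ∏ j, f j = (∏ j, g j) * t := by
  rw [← mul_prod_erase univ f (mem_univ i), ← mul_prod_erase univ g (mem_univ i), hi]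
  rw [prod_congr rfl (fun j hj => h j (ne_of_mem_erase hj))]
  ring

lemma ratio_lem (N N1 μ τ ε : ℝ) (hε : 0 ≤ ε) (hε2 : ε ≤ 1 / 2) (hμ : 0 < μ) (h0 : 0 ≤ τ) (h1 : τ ≤ 1)
    (h : |N - μ| ≤ ε * μ) (h' : |N1 - μ * τ| ≤ 2 * ε * (μ * τ)) :
    0 < N ∧ |N1 / N - τ| ≤ 6 * ε := by
  rw [abs_le] at h h'
  have hN : μ * (1 - ε) ≤ N := by linarith
  have hN2 : N ≤ μ * (1 + ε) := by linarith
  have hpos : 0 < N := by nlinarith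
  refine ⟨hpos, ?_⟩
  have hm : 0 ≤ μ * τ := by positivity
  rw [abs_le]
  constructor
  · have : τ - 6 * ε ≤ N1 / N := by
      rw [le_div_iff₀ hpos]
      have e1 : μ * τ * (1 - 2 * ε) ≤ N1 := by linarith
      have e2 : τ * N ≤ τ * (μ * (1 + ε)) := by gcongr
      have e3 : ε * (μ * (1 - ε)) ≤ ε * N := by gcongr
      have e4 : τ * (μ * ε) ≤ 1 * (μ * ε) := by gcongr
      have e5 : μ * ε * ε ≤ μ * ε * (1 / 2) := by gcongr
      nlinarith
    linarith
  · have : N1 / N ≤ τ + 6 * ε := by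
      rw [div_le_iff₀ hpos]
      have e1 : N1 ≤ μ * τ * (1 + 2 * ε) := by linarith
      have e2 : τ * (μ * (1 - ε)) ≤ τ * N := by gcongr
      have e3 : ε * (μ * (1 - ε)) ≤ ε * N := by gcongr
      have e4 : τ * (μ * ε) ≤ 1 * (μ * ε) := by gcongr
      have e5 : μ * ε * ε ≤ μ * ε * (1 / 2) := by gcongr
      nlinarith
    linarith

end boxes
section recursion
open Finset MeasureTheory

lemma muB_lft {d : ℕ} (r : ℝ) (i : Fin d) (B : (Fin d → ℤ) × (Fin d → ℤ)) (τ : ℝ)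
    (h : (((B.1 i + B.2 i) / 2 : ℤ) : ℝ) - B.1 i = ((B.2 i : ℝ) - B.1 i) * τ) :
    muB r (lft i B) = muB r B * τ := by
  apply prod_change i
  · intro j hj
    simp only [lft, Function.update_of_ne hj]
  · simp only [lft, Function.update_self]
    rw [h]; ring

lemma vol_box {d : ℕ} (a b : Fin d → ℝ) (hab : ∀ i, a i ≤ b i) :
    volume (Set.Icc a b) = ENNReal.ofReal (∏ i, (b i - a i)) := by
  rw [Real.volume_Icc_pi, ENNReal.ofReal_prod_of_nonneg]
  intro i _
  have := hab i
  linarith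

open Classical in
lemma main_rec (d : ℕ) [NeZero d] (n : ℕ) (m : ℤ) (hn : 1 ≤ n) (hm : (n : ℤ) ≤ m)
    (L η : ℝ) (K : ℕ) (hL : 4 ≤ L) (hK1 : L ≤ n / 2 ^ K) (hK2 : n / 2 ^ K < 2 * L)
    (hη : 0 ≤ η) (hη1 : 24 * η ≤ L) (hη2 : 24 * η * (d * K) ≤ L)
    (S : Finset (Fin d → ℤ))
    (hgood : ∀ s ≤ d * K, ∀ B ∈ bxs d m s,
      |(cnt S B : ℝ) - muB ((n : ℝ) / m) B| ≤ (η / (n / 2 ^ (s / d))) * muB ((n : ℝ) / m) B) :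
    ∀ j s, s + j = d * K → ∀ B ∈ bxs d m s, ∀ a' b' : Fin d → ℝ, (∀ i, a' i ≤ b' i) →
      (∏ i, (b' i - a' i) = cnt S B) →
      (∀ i, |a' i - (n : ℝ) / m * B.1 i| ≤ 24 * η * s) →
      (∀ i, |b' i - (n : ℝ) / m * B.2 i| ≤ 24 * η * s) →
      ∀ A : Set (Fin d → ℝ), volume (A ∩ Set.Icc a' b') ≤
        (#{x ∈ S | inB B x ∧ ∃ y ∈ A, ∀ i, |(n : ℝ) / m * x i - y i| ≤ 5 * L} : ENNReal) := by
  have hd : 0 < d := Nat.pos_of_ne_zero (NeZero.ne d)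
  have hn' : (0 : ℝ) < n := by exact_mod_cast hn
  have hnm : (n : ℝ) ≤ m := by exact_mod_cast hm
  have hm' : (0 : ℝ) < m := by linarith
  have hm0 : (0 : ℤ) ≤ m := by omega
  set r : ℝ := (n : ℝ) / m with hr
  have hr0 : 0 < r := by positivity
  have hr1 : r ≤ 1 := by rw [hr, div_le_one hm']; exact hnm
  have hrm : r * m = n := by rw [hr]; field_simp
  -- facts for a stage
  have stage : ∀ s ≤ d * K, L ≤ n / 2 ^ (s / d) ∧ 24 * η * s ≤ L := by
    intro s hs
    constructor
    · refine hK1.trans ?_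
      have : s / d ≤ K := by
        calc s / d ≤ (d * K) / d := Nat.div_le_div_right hs
          _ = K := Nat.mul_div_cancel_left _ hd
      gcongr
      norm_num
    · refine le_trans ?_ hη2
      have : (s : ℝ) ≤ d * K := by exact_mod_cast hs
      gcongr
  have sides : ∀ s ≤ d * K, ∀ B ∈ bxs d m s, ∀ i,
      r * ((B.2 i : ℝ) - B.1 i) ≤ 2 * (n / 2 ^ (s / d)) ∧ 0 < (B.2 i : ℝ) - B.1 i := by
    intro s hs B hB i
    obtain ⟨h1, h2, h3, h4⟩ := bxs_inv d m hm0 s B hB i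
    obtain ⟨k1, k2⟩ := kap_bounds d s i
    have st := (stage s hs).1
    rw [abs_le] at h4
    have u1 : (m : ℝ) / 2 ^ kap d s i ≤ m / 2 ^ (s / d) := by
      gcongr
      norm_num
    have u2 : (m : ℝ) / 2 ^ (s / d + 1) ≤ m / 2 ^ kap d s i := by
      gcongr
      norm_num
    have u3 : (n : ℝ) / 2 ^ (s / d) ≤ m / 2 ^ (s / d) := by gcongr
    rw [pow_succ, ← div_div] at u2
    constructor
    · have : r * ((B.2 i : ℝ) - B.1 i) ≤ r * (m / 2 ^ (s / d) + 1) := by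
        gcongr
        linarith
      have e : r * (m / 2 ^ (s / d)) = n / 2 ^ (s / d) := by rw [← mul_div_assoc, hrm]
      rw [mul_add, e] at this
      linarith
    · linarith
  intro j
  induction j with
  | zero =>
    intro s hs B hB a' b' hab hvol ha hb A
    rw [add_zero] at hs
    obtain ⟨st1, st2⟩ := stage s hs.le
    have hsd : s / d = K := by rw [hs]; exact Nat.mul_div_cancel_left _ hd
    by_cases hne : (A ∩ Set.Icc a' b').Nonempty
    · obtain ⟨y, hyA, hy⟩ := hne
      have hcnt : #{x ∈ S | inB B x ∧ ∃ y ∈ A, ∀ i, |r * x i - y i| ≤ 5 * L} = cnt S B := by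
        unfold cnt
        congr 1
        apply filter_congr
        intro x _
        refine ⟨fun h => h.1, fun h => ⟨h, y, hyA, fun i => ?_⟩⟩
        have hx := h i
        have hx1 : (B.1 i : ℝ) ≤ x i := by exact_mod_cast hx.1.le
        have hx2 : (x i : ℝ) ≤ B.2 i := by exact_mod_cast hx.2
        have hx1' : r * (B.1 i : ℝ) ≤ r * x i := by gcongr
        have hx2' : r * (x i : ℝ) ≤ r * B.2 i := by gcongr
        have hai := ha i
        have hbi := hb i
        have y1 := hy.1 i
        have y2 := hy.2 i
        have sd := (sides s hs.le B hB i).1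
        rw [hsd, mul_sub] at sd
        rw [abs_le] at hai hbi ⊢
        constructor <;> linarith
      rw [hcnt]
      calc volume (A ∩ Set.Icc a' b') ≤ volume (Set.Icc a' b') := measure_mono Set.inter_subset_right
        _ = _ := by rw [vol_box a' b' hab, hvol]; simp
    · rw [Set.not_nonempty_iff_eq_empty] at hne
      rw [hne]; simp
  | succ j ih =>
    intro s hs B hB a' b' hab hvol ha hb A
    have hs0 : s ≤ d * K := by omega
    have hs1 : s + 1 ≤ d * K := by omega
    obtain ⟨st1, st2⟩ := stage s hs0
    set l : ℝ := n / 2 ^ (s / d) with hl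
    have hl0 : 0 < l := by linarith
    set i := cutc d s with hi
    obtain ⟨i1, i2, i3, i4⟩ := bxs_inv d m hm0 s B hB i
    have hBl : lft i B ∈ bxs d m (s + 1) := by
      rw [bxs, mem_union]; left; exact mem_image_of_mem _ hB
    have hBr : rgt i B ∈ bxs d m (s + 1) := by
      rw [bxs, mem_union]; right; exact mem_image_of_mem _ hB
    set c : ℤ := (B.1 i + B.2 i) / 2 with hc
    have hside := (sides s hs0 B hB i).2
    set τ : ℝ := ((c : ℝ) - B.1 i) / ((B.2 i : ℝ) - B.1 i) with hτ
    have hτe : (c : ℝ) - B.1 i = ((B.2 i : ℝ) - B.1 i) * τ := by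
      rw [hτ]; field_simp
    have hc1 : (B.1 i : ℝ) ≤ c := by
      have : B.1 i ≤ c := by omega
      exact_mod_cast this
    have hc2 : (c : ℝ) ≤ B.2 i := by
      have : c ≤ B.2 i := by omega
      exact_mod_cast this
    have hτ0 : 0 ≤ τ := by
      rw [hτ]; apply div_nonneg <;> linarith
    have hτ1 : τ ≤ 1 := by
      rw [hτ, div_le_one hside]; linarith
    have hμ : 0 < muB r B := by
      unfold muB
      apply prod_pos
      intro k _
      have := (sides s hs0 B hB k).2
      positivity
    have hsplit := cnt_split S i B i2
    have g0 := hgood s hs0 B hB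
    have g1 := hgood (s + 1) hs1 _ hBl
    rw [muB_lft r i B τ hτe] at g1
    have hε2 : η / (n / 2 ^ ((s + 1) / d)) ≤ 2 * (η / l) := by
      have h1 : (s + 1) / d ≤ s / d + 1 := by
        calc (s + 1) / d ≤ (s + d) / d := Nat.div_le_div_right (by omega)
          _ = s / d + 1 := Nat.add_div_right _ hd
      have h2 : (2 : ℝ) ^ ((s + 1) / d) ≤ 2 ^ (s / d) * 2 := by
        rw [← pow_succ]
        exact pow_le_pow_right₀ (by norm_num) h1
      have e1 : η / (n / 2 ^ ((s + 1) / d)) = η / n * 2 ^ ((s + 1) / d) := by field_simp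
      have e2 : 2 * (η / l) = η / n * (2 ^ (s / d) * 2) := by rw [hl]; field_simp
      rw [e1, e2]
      gcongr
    have hε0 : 0 ≤ η / l := by positivity
    have hε1 : η / l ≤ 1 / 2 := by
      rw [div_le_iff₀ hl0]; linarith
    obtain ⟨hN, hθ⟩ := ratio_lem (cnt S B) (cnt S (lft i B)) (muB r B) τ (η / l) hε0 hε1 hμ hτ0 hτ1 g0
      (g1.trans (by gcongr))
    set θ : ℝ := (cnt S (lft i B) : ℝ) / cnt S B with hθd
    have hθ0 : 0 ≤ θ := by positivity
    have hsplit' : (cnt S B : ℝ) = cnt S (lft i B) + cnt S (rgt i B) := by exact_mod_cast hsplit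
    have hθ1 : θ ≤ 1 := by
      rw [hθd, div_le_one hN, hsplit']
      have : (0 : ℝ) ≤ cnt S (rgt i B) := Nat.cast_nonneg _
      linarith
    set c' : ℝ := a' i + (b' i - a' i) * θ with hc'
    have habi := hab i
    have hac : a' i ≤ c' := by
      have : 0 ≤ (b' i - a' i) * θ := mul_nonneg (by linarith) hθ0
      linarith
    have hcb : c' ≤ b' i := by
      have : (b' i - a' i) * θ ≤ (b' i - a' i) * 1 := by
        apply mul_le_mul_of_nonneg_left hθ1; linarith
      linarith
    have hlen : b' i - a' i ≤ 4 * l := by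
      have hai := ha i
      have hbi := hb i
      have sd := (sides s hs0 B hB i).1
      rw [mul_sub] at sd
      rw [abs_le] at hai hbi
      linarith
    have hdisp : |c' - r * c| ≤ 24 * η * ((s + 1 : ℕ) : ℝ) := by
      have e : c' - r * c = (1 - τ) * (a' i - r * B.1 i) + τ * (b' i - r * B.2 i)
          + (b' i - a' i) * (θ - τ) := by
        have : (c : ℝ) = B.1 i + ((B.2 i : ℝ) - B.1 i) * τ := by linarith
        rw [hc', this]; ring
      rw [e]
      have t1 : |(1 - τ) * (a' i - r * B.1 i)| ≤ (1 - τ) * (24 * η * s) := by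
        rw [abs_mul, abs_of_nonneg (by linarith : 0 ≤ 1 - τ)]
        exact mul_le_mul_of_nonneg_left (ha i) (by linarith)
      have t2 : |τ * (b' i - r * B.2 i)| ≤ τ * (24 * η * s) := by
        rw [abs_mul, abs_of_nonneg hτ0]
        exact mul_le_mul_of_nonneg_left (hb i) hτ0
      have t3 : |(b' i - a' i) * (θ - τ)| ≤ 4 * l * (6 * (η / l)) := by
        rw [abs_mul, abs_of_nonneg (by linarith : 0 ≤ b' i - a' i)]
        exact mul_le_mul hlen hθ (abs_nonneg _) (by linarith)
      have t4 : 4 * l * (6 * (η / l)) = 24 * η := by field_simp; ring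
      have t5 := abs_add_three ((1 - τ) * (a' i - r * B.1 i)) (τ * (b' i - r * B.2 i))
        ((b' i - a' i) * (θ - τ))
      push_cast
      linarith
    have hmono : 24 * η * (s : ℝ) ≤ 24 * η * ((s + 1 : ℕ) : ℝ) := by
      gcongr; omega
    have IL := ih (s + 1) (by omega) (lft i B) hBl a' (Function.update b' i c')
      (by
        intro k
        by_cases hk : k = i
        · rw [hk, Function.update_self]; exact hac
        · rw [Function.update_of_ne hk]; exact hab k)
      (by
        rw [prod_change i _ (fun k => b' k - a' k) θ, hvol, hθd]
        · field_simp
        · intro k hk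
          rw [Function.update_of_ne hk]
        · rw [Function.update_self, hc']; ring)
      (by intro k; exact (ha k).trans hmono)
      (by
        intro k
        by_cases hk : k = i
        · rw [hk, Function.update_self]; simp only [lft, Function.update_self]; exact hdisp
        · rw [Function.update_of_ne hk]; simp only [lft, Function.update_of_ne hk]
          exact (hb k).trans hmono) A
    have IR := ih (s + 1) (by omega) (rgt i B) hBr (Function.update a' i c') b'
      (by
        intro k
        by_cases hk : k = i
        · rw [hk, Function.update_self]; exact hcb
        · rw [Function.update_of_ne hk]; exact hab k)
      (by
        rw [prod_change i _ (fun k => b' k - a' k) (1 - θ), hvol, hθd]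
        · field_simp; linarith
        · intro k hk
          rw [Function.update_of_ne hk]
        · rw [Function.update_self, hc']; ring)
      (by
        intro k
        by_cases hk : k = i
        · rw [hk, Function.update_self]; simp only [rgt, Function.update_self]; exact hdisp
        · rw [Function.update_of_ne hk]; simp only [rgt, Function.update_of_ne hk]
          exact (ha k).trans hmono)
      (by intro k; exact (hb k).trans hmono) A
    rw [card_split S i B i2]
    push_cast
    refine le_trans ?_ (add_le_add IL IR)
    refine le_trans (measure_mono ?_) (measure_union_le _ _)
    rintro y ⟨hyA, hy1, hy2⟩
    by_cases hyc : y i ≤ c'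
    · left
      refine ⟨hyA, hy1, fun k => ?_⟩
      by_cases hk : k = i
      · rw [hk, Function.update_self]; exact hyc
      · rw [Function.update_of_ne hk]; exact hy2 k
    · right
      refine ⟨hyA, fun k => ?_, hy2⟩
      by_cases hk : k = i
      · rw [hk, Function.update_self]; exact (not_le.1 hyc).le
      · rw [Function.update_of_ne hk]; exact hy1 k

end recursion
section hall
open Finset MeasureTheory

lemma zdist_coord {d : ℕ} (x y : Fin d → ℤ) (i : Fin d) : |(x i : ℝ) - y i| ≤ zdist x y := by
  unfold zdist
  rw [← Real.sqrt_sq_eq_abs]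
  apply Real.sqrt_le_sqrt
  exact single_le_sum (f := fun i => ((x i : ℝ) - y i) ^ 2) (fun _ _ => sq_nonneg _) (mem_univ i)

lemma zdist_ge_one {d : ℕ} (x y : Fin d → ℤ) (h : x ≠ y) : 1 ≤ zdist x y := by
  obtain ⟨i, hi⟩ := Function.ne_iff.1 h
  refine le_trans ?_ (zdist_coord x y i)
  have : 1 ≤ |x i - y i| := Int.one_le_abs (sub_ne_zero.2 hi)
  exact_mod_cast this

lemma zdist_le {d : ℕ} (x y : Fin d → ℤ) (C : ℝ) (hC : 0 ≤ C) (h : ∀ i, |(x i : ℝ) - y i| ≤ C) :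
    zdist x y ≤ Real.sqrt d * C := by
  unfold zdist
  rw [← Real.sqrt_sq hC, ← Real.sqrt_mul (by positivity)]
  apply Real.sqrt_le_sqrt
  calc ∑ i, ((x i : ℝ) - y i) ^ 2 ≤ ∑ _i : Fin d, C ^ 2 := by
        apply sum_le_sum
        intro i _
        rw [← sq_abs]
        have := h i
        gcongr
    _ = _ := by simp

lemma Fleast_le {d n : ℕ} (hd : 1 ≤ d) (hn : 2 ≤ n) (S : Finset (Fin d → ℤ)) (L : ℝ)
    (f : (Fin d → ℤ) → (Fin d → ℤ)) (h1 : ∀ x ∈ S, f x ∈ grid d n)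
    (h2 : ∀ y ∈ grid d n, ∃ x ∈ S, f x = y)
    (h3 : ∀ x ∈ S, ∀ y ∈ S, x ≠ y → zdist (f x) (f y) ≤ L * zdist x y) : Fleast d n S ≤ L := by
  unfold Fleast
  apply csInf_le
  · refine ⟨0, ?_⟩
    rintro l ⟨g, g1, g2, g3⟩
    have m1 : (fun _ => 1 : Fin d → ℤ) ∈ grid d n := by
      unfold grid; rw [Fintype.mem_piFinset]; intro i; rw [mem_Icc]; omega
    have m2 : (fun _ => 2 : Fin d → ℤ) ∈ grid d n := by
      unfold grid; rw [Fintype.mem_piFinset]; intro i; rw [mem_Icc]; omega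
    obtain ⟨x, hx, ex⟩ := g2 _ m1
    obtain ⟨y, hy, ey⟩ := g2 _ m2
    have hxy : x ≠ y := by
      rintro rfl
      rw [ex] at ey
      have := congrFun ey ⟨0, hd⟩
      norm_num at this
    have p := zdist_ge_one x y hxy
    have := g3 x hx y hy
    have h0 : 0 ≤ zdist (g x) (g y) := Real.sqrt_nonneg _
    by_contra hneg
    rw [not_le] at hneg
    nlinarith
  · refine ⟨f, h1, h2, ?_⟩
    intro x hx y hy
    by_cases h : x = y
    · subst h; simp [zdist]
    · exact h3 x hx y hy h

lemma grid_card (d n : ℕ) : #(grid d n) = n ^ d := by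
  unfold grid
  rw [Fintype.card_piFinset]
  simp

lemma Fleast_trivial {d n : ℕ} (hd : 1 ≤ d) (hn : 2 ≤ n) (S : Finset (Fin d → ℤ))
    (hS : #S = n ^ d) : Fleast d n S ≤ Real.sqrt d * n := by
  classical
  have hc : #S = #(grid d n) := by rw [hS, grid_card]
  have e := Finset.equivOfCardEq hc
  apply Fleast_le hd hn S _ (fun x => if h : x ∈ S then (e ⟨x, h⟩ : Fin d → ℤ) else x)
  · intro x hx
    rw [dif_pos hx]
    exact (e ⟨x, hx⟩).2
  · intro y hy
    refine ⟨e.symm ⟨y, hy⟩, (e.symm ⟨y, hy⟩).2, ?_⟩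
    simp
  · intro x hx y hy hxy
    rw [dif_pos hx, dif_pos hy]
    have p := zdist_ge_one x y hxy
    refine le_trans (zdist_le _ _ n (by positivity) ?_) (le_mul_of_one_le_right (by positivity) p)
    intro i
    have q1 := (e ⟨x, hx⟩).2
    have q2 := (e ⟨y, hy⟩).2
    unfold grid at q1 q2
    rw [Fintype.mem_piFinset] at q1 q2
    have q1 := q1 i
    have q2 := q2 i
    rw [mem_Icc] at q1 q2
    rw [abs_le]
    constructor
    · have : -(n : ℤ) ≤ (e ⟨x, hx⟩ : Fin d → ℤ) i - (e ⟨y, hy⟩ : Fin d → ℤ) i := by omega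
      exact_mod_cast this
    · have : (e ⟨x, hx⟩ : Fin d → ℤ) i - (e ⟨y, hy⟩ : Fin d → ℤ) i ≤ (n : ℤ) := by omega
      exact_mod_cast this

/-- unit cube with upper corner `y` -/
def ucube {d : ℕ} (y : Fin d → ℤ) : Set (Fin d → ℝ) :=
  Set.univ.pi fun i => Set.Ioc ((y i : ℝ) - 1) (y i)

lemma ucube_vol {d : ℕ} (A : Finset (Fin d → ℤ)) : volume (⋃ y ∈ A, ucube y) = #A := by
  rw [measure_biUnion_finset]
  · have : ∀ y : Fin d → ℤ, volume (ucube y) = 1 := by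
      intro y
      unfold ucube
      rw [Real.volume_pi_Ioc]
      simp
    simp [this]
  · intro x _ y _ hxy
    rw [Function.onFun, Set.disjoint_left]
    intro z hx hy
    apply hxy
    funext i
    have a := hx i (Set.mem_univ i)
    have b := hy i (Set.mem_univ i)
    simp only [Set.mem_Ioc] at a b
    have h1 : (x i : ℝ) < y i + 1 := by linarith
    have h2 : (y i : ℝ) < x i + 1 := by linarith
    have h1' : x i < y i + 1 := by exact_mod_cast h1
    have h2' : y i < x i + 1 := by exact_mod_cast h2
    omega
  · intro y _
    exact MeasurableSet.univ_pi fun i => measurableSet_Ioc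

lemma Fleast_good (d : ℕ) [NeZero d] (n : ℕ) (m : ℤ) (hn : 2 ≤ n) (hm : (n : ℤ) ≤ m)
    (L η : ℝ) (K : ℕ) (hL : 4 ≤ L) (hK1 : L ≤ n / 2 ^ K) (hK2 : n / 2 ^ K < 2 * L)
    (hη : 0 ≤ η) (hη1 : 24 * η ≤ L) (hη2 : 24 * η * (d * K) ≤ L)
    (S : Finset (Fin d → ℤ)) (hS : #S = n ^ d) (hSm : ∀ x ∈ S, ∀ i, 0 < x i ∧ x i ≤ m)
    (hgood : ∀ s ≤ d * K, ∀ B ∈ bxs d m s,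
      |(cnt S B : ℝ) - muB ((n : ℝ) / m) B| ≤ (η / (n / 2 ^ (s / d))) * muB ((n : ℝ) / m) B) :
    Fleast d n S ≤ Real.sqrt d * (10 * L + 3) := by
  classical
  have hd : 0 < d := Nat.pos_of_ne_zero (NeZero.ne d)
  have hn' : (0 : ℝ) < n := by
    have : 0 < n := by omega
    exact_mod_cast this
  have hnm : (n : ℝ) ≤ m := by exact_mod_cast hm
  have hm' : (0 : ℝ) < m := by linarith
  have key := main_rec d n m (by omega) hm L η K hL hK1 hK2 hη hη1 hη2 S hgood (d * K) 0 (by simp)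
    (fun _ => 0, fun _ => m) (by simp [bxs]) (fun _ => 0) (fun _ => n) (by intro i; positivity)
    (by
      have : cnt S (fun _ => 0, fun _ => m) = n ^ d := by
        rw [← hS]
        unfold cnt
        congr 1
        rw [filter_eq_self]
        intro x hx
        exact hSm x hx
      rw [this]; simp)
    (by simp)
    (by
      intro i
      have : (n : ℝ) - n / m * m = 0 := by field_simp; ring
      simp [this])
  set r : ℝ := (n : ℝ) / m with hr
  have hr0 : 0 < r := by positivity
  have hr1 : r ≤ 1 := by rw [hr, div_le_one hm']; exact hnm
  -- Hall
  let t : grid d n → Finset (Fin d → ℤ) := fun y =>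
    {x ∈ S | ∀ i, |r * x i - (y : Fin d → ℤ) i| ≤ 5 * L + 1}
  have hall : ∀ A : Finset (grid d n), #A ≤ #(A.biUnion t) := by
    intro A
    have hv := ucube_vol (A.image (fun y : grid d n => (y : Fin d → ℤ)))
    rw [card_image_of_injective _ Subtype.val_injective] at hv
    have hk := key (⋃ y ∈ A.image (fun y : grid d n => (y : Fin d → ℤ)), ucube y)
    rw [Set.inter_eq_left.2, hv] at hk
    · have hk' := Nat.cast_le.1 hk
      refine hk'.trans (card_le_card ?_)
      intro x hx
      rw [mem_filter] at hx
      obtain ⟨hxS, -, z, hz, hxz⟩ := hx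
      simp only [Set.mem_iUnion, mem_image] at hz
      obtain ⟨y, ⟨w, hwA, rfl⟩, hz⟩ := hz
      rw [mem_biUnion]
      refine ⟨w, hwA, ?_⟩
      simp only [t, mem_filter]
      refine ⟨hxS, fun i => ?_⟩
      have a := hz i (Set.mem_univ i)
      have b := hxz i
      simp only [Set.mem_Ioc] at a
      rw [abs_le] at b ⊢
      constructor <;> linarith
    · intro z hz
      simp only [Set.mem_iUnion, mem_image] at hz
      obtain ⟨y, ⟨w, hwA, rfl⟩, hz⟩ := hz
      have q := w.2
      unfold grid at q
      rw [Fintype.mem_piFinset] at q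
      constructor
      · intro i
        have a := hz i (Set.mem_univ i)
        have q := q i
        rw [mem_Icc] at q
        simp only [Set.mem_Ioc] at a
        have : (1 : ℝ) ≤ (w : Fin d → ℤ) i := by exact_mod_cast q.1
        show (0 : ℝ) ≤ z i
        linarith
      · intro i
        have a := hz i (Set.mem_univ i)
        have q := q i
        rw [mem_Icc] at q
        simp only [Set.mem_Ioc] at a
        have : ((w : Fin d → ℤ) i : ℝ) ≤ n := by exact_mod_cast q.2
        show z i ≤ n
        linarith
  obtain ⟨g, ginj, hg⟩ := (Finset.all_card_le_biUnion_card_iff_exists_injective t).1 hall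
  have hgS : ∀ y, g y ∈ S := fun y => (mem_filter.1 (hg y)).1
  have hgd : ∀ y, ∀ i, |r * g y i - (y : Fin d → ℤ) i| ≤ 5 * L + 1 := fun y => (mem_filter.1 (hg y)).2
  have himg : (univ : Finset (grid d n)).image g = S := by
    apply eq_of_subset_of_card_le
    · intro x hx
      obtain ⟨y, -, rfl⟩ := mem_image.1 hx
      exact hgS y
    · rw [card_image_of_injective _ ginj, hS, card_univ, Fintype.card_coe, grid_card]
  have hinv : ∀ x ∈ S, ∃ y : grid d n, g y = x := by
    intro x hx
    rw [← himg] at hx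
    obtain ⟨y, -, h⟩ := mem_image.1 hx
    exact ⟨y, h⟩
  have : Nonempty (grid d n) := ⟨⟨fun _ => 1, by
      unfold grid; rw [Fintype.mem_piFinset]; intro i; rw [mem_Icc]; omega⟩⟩
  choose! f hf using hinv
  · apply Fleast_le hd hn S _ (fun x => (f x : Fin d → ℤ))
    · intro x hx
      exact (f x).2
    · intro y hy
      refine ⟨g ⟨y, hy⟩, hgS _, ?_⟩
      have := ginj (hf _ (hgS ⟨y, hy⟩))
      rw [this]
    · intro x hx y hy hxy
      have p := zdist_ge_one x y hxy
      have : zdist (f x : Fin d → ℤ) (f y) ≤ Real.sqrt d * ((10 * L + 3) * zdist x y) := by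
        apply zdist_le
        · positivity
        · intro i
          have a := hgd (f x) i
          have b := hgd (f y) i
          rw [hf x hx] at a
          rw [hf y hy] at b
          have c := zdist_coord x y i
          have c' : |r * x i - r * y i| ≤ zdist x y := by
            rw [← mul_sub, abs_mul, abs_of_pos hr0]
            calc r * |(x i : ℝ) - y i| ≤ 1 * |(x i : ℝ) - y i| := by gcongr
              _ ≤ _ := by rw [one_mul]; exact c
          rw [abs_le] at a b c' ⊢
          constructor <;> nlinarith
      rw [mul_assoc]
      exact this

end hall
section prob
open Finset

open Classical in
/-- the points of the big grid in a box -/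
noncomputable def bset {d : ℕ} (m : ℤ) (B : (Fin d → ℤ) × (Fin d → ℤ)) : Finset (gridPt d m) :=
  {x | inB B (fun i => (x i : ℤ))}

lemma toL_inj {d : ℕ} {m : ℤ} : Function.Injective (fun (x : gridPt d m) (i : Fin d) => (x i : ℤ)) := by
  intro x y h
  funext i
  exact Subtype.ext (congrFun h i)

lemma toL_card {d : ℕ} {m : ℤ} (S : Finset (gridPt d m)) : #(toLattice S) = #S :=
  card_image_of_injective _ toL_inj

lemma cnt_toL {d : ℕ} {m : ℤ} (S : Finset (gridPt d m)) (B : (Fin d → ℤ) × (Fin d → ℤ)) :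
    cnt (toLattice S) B = #(S ∩ bset m B) := by
  classical
  rw [← toL_card (S ∩ bset m B)]
  unfold cnt
  congr 1
  ext z
  simp only [toLattice, bset, mem_filter, mem_image, mem_inter, mem_univ, true_and]
  constructor
  · rintro ⟨⟨x, hx, rfl⟩, h⟩
    exact ⟨x, ⟨hx, h⟩, rfl⟩
  · rintro ⟨x, ⟨hx, h⟩, rfl⟩
    exact ⟨⟨x, hx, rfl⟩, h⟩

lemma card_gridPt (d : ℕ) (m : ℤ) : Fintype.card (gridPt d m) = m.toNat ^ d := by
  simp [gridPt]

lemma bset_card {d : ℕ} (m : ℤ) (B : (Fin d → ℤ) × (Fin d → ℤ))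
    (h : ∀ i, 0 ≤ B.1 i ∧ B.1 i ≤ B.2 i ∧ B.2 i ≤ m) :
    (#(bset m B) : ℝ) = ∏ i, ((B.2 i : ℝ) - B.1 i) := by
  classical
  have e : #(bset m B) = #(Fintype.piFinset fun i => Ioc (B.1 i) (B.2 i)) := by
    rw [← toL_card]
    congr 1
    ext z
    simp only [toLattice, bset, mem_filter, mem_image, mem_univ, true_and, Fintype.mem_piFinset, mem_Ioc]
    constructor
    · rintro ⟨x, hx, rfl⟩
      exact hx
    · intro hz
      refine ⟨fun i => ⟨z i, ?_⟩, hz, rfl⟩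
      have := hz i
      have := h i
      rw [mem_Icc]
      omega
  rw [e, Fintype.card_piFinset]
  push_cast
  apply prod_congr rfl
  intro i _
  rw [Int.card_Ioc]
  have := (h i).2.1
  have e2 : ((B.2 i - B.1 i).toNat : ℤ) = B.2 i - B.1 i := Int.toNat_of_nonneg (by omega)
  have : (((B.2 i - B.1 i).toNat : ℤ) : ℝ) = B.2 i - B.1 i := by rw [e2]; push_cast; ring
  exact_mod_cast this

lemma mu_eq {d : ℕ} (n : ℕ) (m : ℤ) (hm : 0 < m) (B : (Fin d → ℤ) × (Fin d → ℤ))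
    (h : ∀ i, 0 ≤ B.1 i ∧ B.1 i ≤ B.2 i ∧ B.2 i ≤ m) :
    muB ((n : ℝ) / m) B = #(bset m B) * (((n ^ d : ℕ) : ℝ) / Fintype.card (gridPt d m)) := by
  rw [bset_card m B h, card_gridPt, muB, prod_mul_distrib]
  have : ((m.toNat : ℕ) : ℝ) = m := by
    have : ((m.toNat : ℤ) : ℝ) = m := by rw [Int.toNat_of_nonneg hm.le]
    exact_mod_cast this
  push_cast
  rw [this]
  simp
  ring

lemma mu_lower (d : ℕ) [NeZero d] (n : ℕ) (m : ℤ) (hn : 1 ≤ n) (hm : (n : ℤ) ≤ m)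
    (s : ℕ) (hs : 4 ≤ (n : ℝ) / 2 ^ (s / d)) (B) (hB : B ∈ bxs d m s) :
    ((n : ℝ) / 2 ^ (s / d) / 4) ^ d ≤ muB ((n : ℝ) / m) B := by
  have hn' : (0 : ℝ) < n := by exact_mod_cast hn
  have hnm : (n : ℝ) ≤ m := by exact_mod_cast hm
  have hm' : (0 : ℝ) < m := by linarith
  have hm0 : (0 : ℤ) ≤ m := by omega
  calc ((n : ℝ) / 2 ^ (s / d) / 4) ^ d = ∏ _i : Fin d, ((n : ℝ) / 2 ^ (s / d) / 4) := by
        rw [prod_const, card_univ, Fintype.card_fin]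
    _ ≤ muB ((n : ℝ) / m) B := by
      unfold muB
      apply prod_le_prod
      · intros; positivity
      · intro i _
        obtain ⟨h1, h2, h3, h4⟩ := bxs_inv d m hm0 s B hB i
        obtain ⟨k1, k2⟩ := kap_bounds d s i
        rw [abs_le] at h4
        have u2 : (m : ℝ) / 2 ^ (s / d + 1) ≤ m / 2 ^ kap d s i := by
          gcongr
          norm_num
        have u3 : (n : ℝ) / 2 ^ (s / d) ≤ m / 2 ^ (s / d) := by gcongr
        rw [pow_succ, ← div_div] at u2
        have u4 : (m : ℝ) / 2 ^ (s / d) / 4 ≤ (B.2 i : ℝ) - B.1 i := by linarith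
        calc (n : ℝ) / 2 ^ (s / d) / 4 = n / m * (m / 2 ^ (s / d) / 4) := by field_simp
          _ ≤ _ := by gcongr

open Classical in
lemma bad_count (d : ℕ) [NeZero d] (n : ℕ) (m : ℤ) (hn : 2 ≤ n) (hm : (n : ℤ) ≤ m) (K : ℕ)
    (η E : ℝ) (hη : 0 ≤ η)
    (h1 : ∀ s ≤ d * K, η / (n / 2 ^ (s / d)) ≤ 1)
    (h2 : ∀ s ≤ d * K, ∀ B ∈ bxs d m s,
      E ≤ (η / (n / 2 ^ (s / d))) ^ 2 * muB ((n : ℝ) / m) B / 4) :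
    (#{S ∈ powersetCard (n ^ d) (univ : Finset (gridPt d m)) |
      ¬ ∀ s ≤ d * K, ∀ B ∈ bxs d m s,
      |(cnt (toLattice S) B : ℝ) - muB ((n : ℝ) / m) B| ≤ (η / (n / 2 ^ (s / d))) * muB ((n : ℝ) / m) B} : ℝ)
     ≤ 4 * 2 ^ (d * K) * ((Fintype.card (gridPt d m)).choose (n ^ d) * Real.exp (-E)) := by
  have hm0 : 0 < m := by omega
  have hM : 0 < Fintype.card (gridPt d m) := by
    rw [card_gridPt]; apply Nat.pow_pos; omega
  have hN : n ^ d ≤ Fintype.card (gridPt d m) := by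
    rw [card_gridPt]; apply Nat.pow_le_pow_left; omega
  set U : ℕ → ((Fin d → ℤ) × (Fin d → ℤ)) → Finset (Finset (gridPt d m)) := fun s B =>
    {S ∈ powersetCard (n ^ d) (univ : Finset (gridPt d m)) |
      (1 + η / (n / 2 ^ (s / d))) * muB ((n : ℝ) / m) B < #(S ∩ bset m B)} with hU
  set V : ℕ → ((Fin d → ℤ) × (Fin d → ℤ)) → Finset (Finset (gridPt d m)) := fun s B =>
    {S ∈ powersetCard (n ^ d) (univ : Finset (gridPt d m)) |
      #(S ∩ bset m B) < (1 - η / (n / 2 ^ (s / d))) * muB ((n : ℝ) / m) B} with hV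
  set C : ℝ := (Fintype.card (gridPt d m)).choose (n ^ d) * Real.exp (-E) with hC
  have hC0 : 0 ≤ C := by positivity
  have bU : ∀ s ≤ d * K, ∀ B ∈ bxs d m s, (#(U s B ∪ V s B) : ℝ) ≤ 2 * C := by
    intro s hs B hB
    have inv := bxs_inv d m hm0.le s B hB
    have hmu := mu_eq n m hm0 B (fun i => ⟨(inv i).1, (inv i).2.1, (inv i).2.2.1⟩)
    have hε0 : 0 ≤ η / ((n : ℝ) / 2 ^ (s / d)) := by positivity
    have t1 := upper_tail (n ^ d) (bset m B) hN hM _ _ hε0 (h1 s hs) hmu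
    have t2 := lower_tail (n ^ d) (bset m B) hN hM _ _ hε0 hmu
    have t3 : (Fintype.card (gridPt d m)).choose (n ^ d) *
        Real.exp (-((η / (n / 2 ^ (s / d))) ^ 2 * muB ((n : ℝ) / m) B / 4)) ≤ C := by
      rw [hC]
      gcongr
      exact h2 s hs B hB
    have t4 : (#(U s B ∪ V s B) : ℝ) ≤ #(U s B) + #(V s B) := by
      exact_mod_cast card_union_le _ _
    have t5 : (#(U s B) : ℝ) ≤ C := le_trans (le_of_eq (by simp only [hU])) (t1.trans t3)
    have t6 : (#(V s B) : ℝ) ≤ C := le_trans (le_of_eq (by simp only [hV])) (t2.trans t3)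
    linarith
  have hsub : {S ∈ powersetCard (n ^ d) (univ : Finset (gridPt d m)) |
      ¬ ∀ s ≤ d * K, ∀ B ∈ bxs d m s,
      |(cnt (toLattice S) B : ℝ) - muB ((n : ℝ) / m) B| ≤ (η / (n / 2 ^ (s / d))) * muB ((n : ℝ) / m) B}
      ⊆ (range (d * K + 1)).biUnion fun s => (bxs d m s).biUnion fun B => U s B ∪ V s B := by
    intro S hS
    rw [mem_filter] at hS
    obtain ⟨hS1, hS2⟩ := hS
    push Not at hS2
    obtain ⟨s, hs, B, hB, hlt⟩ := hS2
    rw [mem_biUnion]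
    refine ⟨s, by rw [mem_range]; omega, ?_⟩
    rw [mem_biUnion]
    refine ⟨B, hB, ?_⟩
    rw [cnt_toL] at hlt
    rw [mem_union]
    rcases lt_abs.1 hlt with h | h
    · left
      simp only [hU, mem_filter]
      exact ⟨hS1, by linarith⟩
    · right
      simp only [hV, mem_filter]
      exact ⟨hS1, by linarith⟩
  calc _ ≤ (#((range (d * K + 1)).biUnion fun s => (bxs d m s).biUnion fun B => U s B ∪ V s B) : ℝ) := by
        exact_mod_cast card_le_card hsub
    _ ≤ ∑ s ∈ range (d * K + 1), (#((bxs d m s).biUnion fun B => U s B ∪ V s B) : ℝ) := by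
        exact_mod_cast card_biUnion_le
    _ ≤ ∑ s ∈ range (d * K + 1), 2 ^ s * (2 * C) := by
        apply sum_le_sum
        intro s hs
        rw [mem_range] at hs
        calc (#((bxs d m s).biUnion fun B => U s B ∪ V s B) : ℝ)
            ≤ ∑ B ∈ bxs d m s, (#(U s B ∪ V s B) : ℝ) := by exact_mod_cast card_biUnion_le
          _ ≤ ∑ B ∈ bxs d m s, 2 * C := sum_le_sum fun B hB => bU s (by omega) B hB
          _ = #(bxs d m s) * (2 * C) := by simp
          _ ≤ _ := by
            gcongr
            exact_mod_cast bxs_card d m s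
    _ = (2 ^ (d * K + 1) - 1) * (2 * C) := by
        rw [← sum_mul]
        congr 1
        have := geom_sum_eq (show (2 : ℝ) ≠ 1 by norm_num) (d * K + 1)
        rw [this]; ring
    _ ≤ _ := by
        rw [pow_succ]
        nlinarith

end prob
lemma exponent_bound (d : ℕ) (hd : 2 ≤ d) (q : ℝ) (hq2 : 3 / (d : ℝ) < q) (n : ℕ) (hn : 2 ≤ n)
    (lg Kc L η l mu : ℝ) (hlg : lg = Real.logb 2 n) (hlg1 : 1 ≤ lg)
    (hKc : Kc = 24 ^ 2 * d ^ 2 * 4 ^ (d + 1) * (d + 2)) (hL : L = Kc * lg ^ q)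
    (hη : η = L / (24 * d * lg)) (hl : L ≤ l) (hmu : (l / 4) ^ d ≤ mu) :
    (d + 2 : ℝ) * Real.log n ≤ (η / l) ^ 2 * mu / 4 := by
  have hd' : (2 : ℝ) ≤ d := by exact_mod_cast hd
  have hKc1 : 1 ≤ Kc := by
    rw [hKc]
    have h4 : (1 : ℝ) ≤ 4 ^ (d + 1) := one_le_pow₀ (by norm_num)
    have hdd : (1 : ℝ) ≤ (d : ℝ) ^ 2 := one_le_pow₀ (by linarith)
    have h5 : (1 : ℝ) ≤ (24 : ℝ) ^ 2 * d ^ 2 := by nlinarith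
    have h6 : (1 : ℝ) ≤ (24 : ℝ) ^ 2 * d ^ 2 * 4 ^ (d + 1) := one_le_mul_of_one_le_of_one_le h5 h4
    exact one_le_mul_of_one_le_of_one_le h6 (by linarith)
  have hlg0 : 0 < lg := by linarith
  have hL0 : 0 < L := by rw [hL]; positivity
  have hl0 : 0 < l := by linarith
  have hLd : Kc * lg ^ 3 ≤ L ^ d := by
    rw [hL, mul_pow]
    have a1 : Kc ≤ Kc ^ d := le_self_pow₀ hKc1 (by omega)
    have a2 : lg ^ 3 ≤ (lg ^ q) ^ d := by
      rw [← Real.rpow_natCast (lg ^ q) d, ← Real.rpow_mul hlg0.le, ← Real.rpow_natCast lg 3]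
      apply Real.rpow_le_rpow_of_exponent_le hlg1
      rw [div_lt_iff₀ (by linarith)] at hq2
      push_cast
      exact hq2.le
    gcongr
  have hlog : Real.log n ≤ lg := by
    rw [hlg, Real.logb, le_div_iff₀ (Real.log_pos (by norm_num))]
    have h1 : Real.log 2 ≤ 1 := by linarith [Real.log_two_lt_d9]
    have h0 : 0 ≤ Real.log n := Real.log_natCast_nonneg n
    nlinarith
  obtain ⟨e, rfl⟩ : ∃ e, d = e + 2 := ⟨d - 2, by omega⟩
  set D : ℝ := ((e + 2 : ℕ) : ℝ) with hD
  have hD0 : 0 < D := by linarith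
  calc (D + 2) * Real.log n ≤ (D + 2) * lg := by gcongr
    _ = Kc * lg ^ 3 / (24 ^ 2 * D ^ 2 * lg ^ 2 * 4 ^ (e + 2 + 1)) := by
        rw [hKc]; field_simp
    _ ≤ L ^ (e + 2) / (24 ^ 2 * D ^ 2 * lg ^ 2 * 4 ^ (e + 2 + 1)) := by gcongr
    _ = η ^ 2 * L ^ e / 4 ^ (e + 3) := by
        rw [hη, pow_add L e 2]; field_simp
    _ ≤ η ^ 2 * l ^ e / 4 ^ (e + 3) := by gcongr
    _ = (η / l) ^ 2 * (l / 4) ^ (e + 2) / 4 := by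
        rw [div_pow, div_pow]; field_simp; ring
    _ ≤ (η / l) ^ 2 * mu / 4 := by gcongr

/-- For `d ≥ 2`, `q ≥ 1` with `q > 3/d`, there is `Υ = Υ(d) > 0` so that for all `n ≥ 2`
and `c ≥ (1 + 2^(d+7)/log₂ n)^(1/d)`, a uniformly random `n^d`-element subset `S` of
`{1,…,⌊c·n⌋}^d` satisfies `ℙ[F_n(S) > Υ·(log₂ n)^q] ≤ Υ·n^(−2)`. -/
theorem stmt_11 (d : ℕ) (hd : 2 ≤ d) (q : ℝ) (hq1 : 1 ≤ q) (hq2 : 3 / (d : ℝ) < q) :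
    ∃ Υ : ℝ, 0 < Υ ∧
      ∀ (n : ℕ) (c : ℝ), 2 ≤ n →
        (1 + 2 ^ (d + 7) / Real.logb 2 n) ^ ((d : ℝ)⁻¹) ≤ c →
        uniformProb {S : Finset (gridPt d ⌊c * n⌋) // S.card = n ^ d}
            (fun S => Υ * Real.logb 2 n ^ q < Fleast d n (toLattice S.1)) ≤
          Υ * (n : ℝ) ^ (-2 : ℝ) := by
  classical
  have hd0 : NeZero d := ⟨by omega⟩
  have hd' : (2 : ℝ) ≤ d := by exact_mod_cast hd
  obtain ⟨Kc, hKc⟩ : ∃ Kc : ℝ, Kc = 24 ^ 2 * d ^ 2 * 4 ^ (d + 1) * (d + 2) := ⟨_, rfl⟩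
  have hKc4 : 4 ≤ Kc := by
    rw [hKc]
    have h4 : (1 : ℝ) ≤ 4 ^ (d + 1) := one_le_pow₀ (by norm_num)
    have hdd : (1 : ℝ) ≤ (d : ℝ) ^ 2 := one_le_pow₀ (by linarith)
    have h5 : (1 : ℝ) ≤ (24 : ℝ) ^ 2 * d ^ 2 := by nlinarith
    have h6 : (1 : ℝ) ≤ (24 : ℝ) ^ 2 * d ^ 2 * 4 ^ (d + 1) := one_le_mul_of_one_le_of_one_le h5 h4
    nlinarith
  have hKc0 : 0 < Kc := by linarith
  refine ⟨13 * d * Kc, by positivity, ?_⟩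
  intro n c hn hc
  have hn0 : (2 : ℝ) ≤ n := by exact_mod_cast hn
  have hn0' : (0 : ℝ) < n := by linarith
  obtain ⟨lg, hlg⟩ : ∃ lg, lg = Real.logb 2 n := ⟨_, rfl⟩
  have hlg1 : 1 ≤ lg := by
    rw [hlg, Real.le_logb_iff_rpow_le (by norm_num) hn0']
    simpa using hn0
  rw [← hlg] at hc ⊢
  have hlg0 : 0 < lg := by linarith
  have hc1 : 1 ≤ c := by
    refine le_trans ?_ hc
    apply Real.one_le_rpow
    · have : (0 : ℝ) ≤ 2 ^ (d + 7) / lg := by positivity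
      linarith
    · positivity
  generalize hmdef : ⌊c * n⌋ = m
  have hm : (n : ℤ) ≤ m := by
    rw [← hmdef, Int.le_floor]
    push_cast
    nlinarith
  have hsqrt : Real.sqrt d ≤ d := by
    rw [Real.sqrt_le_left (by linarith)]
    nlinarith
  obtain ⟨L, hL⟩ : ∃ L, L = Kc * lg ^ q := ⟨_, rfl⟩
  have hlgq : 1 ≤ lg ^ q := Real.one_le_rpow hlg1 (by linarith)
  have hL4 : 4 ≤ L := by rw [hL]; nlinarith
  have hUL : 13 * d * Kc * lg ^ q = d * (13 * L) := by rw [hL]; ring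
  rw [hUL]
  have hmem : ∀ S : Finset (gridPt d m), ∀ x ∈ toLattice S, ∀ i, 0 < x i ∧ x i ≤ m := by
    intro S x hx i
    simp only [toLattice, Finset.mem_image] at hx
    obtain ⟨y, -, rfl⟩ := hx
    have := (y i).2
    rw [Finset.mem_Icc] at this
    exact ⟨by show 0 < (y i : ℤ); omega, this.2⟩
  have hrhs : 0 ≤ 13 * d * Kc * (n : ℝ) ^ (-2 : ℝ) := by positivity
  by_cases hLn : (n : ℝ) < L
  · have : {ω : {S : Finset (gridPt d m) // S.card = n ^ d} |
        d * (13 * L) < Fleast d n (toLattice ω.1)} = ∅ := by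
      rw [Set.eq_empty_iff_forall_notMem]
      intro S hS
      simp only [Set.mem_ofPred_eq] at hS
      have h := Fleast_trivial (by omega : 1 ≤ d) hn (toLattice S.1) (by rw [toL_card, S.2])
      have : Real.sqrt d * n ≤ d * (13 * L) := by gcongr; linarith
      linarith
    unfold uniformProb
    rw [this]
    simpa using hrhs
  · rw [not_lt] at hLn
    obtain ⟨K, hKa, hKb⟩ := exists_nat_pow_near (x := (n : ℝ) / L) (y := 2)
      (by rw [one_le_div (by linarith)]; exact hLn) (by norm_num)
    have hL0 : 0 < L := by linarith
    have h2K : (0 : ℝ) < 2 ^ K := by positivity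
    have hK1 : L ≤ n / 2 ^ K := by
      rw [le_div_iff₀ hL0] at hKa
      rw [le_div_iff₀ h2K]; linarith
    have hK2 : n / 2 ^ K < 2 * L := by
      rw [div_lt_iff₀ hL0, pow_succ] at hKb
      rw [div_lt_iff₀ h2K]; linarith
    have hKn : (2 : ℝ) ^ K ≤ n := by
      rw [le_div_iff₀ hL0] at hKa
      nlinarith
    have hKlg : (K : ℝ) ≤ lg := by
      rw [hlg, Real.le_logb_iff_rpow_le (by norm_num) hn0', Real.rpow_natCast]
      exact hKn
    obtain ⟨η, hη⟩ : ∃ η, η = L / (24 * d * lg) := ⟨_, rfl⟩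
    have hη0 : 0 ≤ η := by rw [hη]; positivity
    have hηe : 24 * η * (d * lg) = L := by rw [hη]; field_simp
    have hη1 : 24 * η ≤ L := by
      rw [← hηe]
      apply le_mul_of_one_le_right (by positivity)
      nlinarith
    have hη2 : 24 * η * (d * K) ≤ L := by
      rw [← hηe]
      gcongr
    have stage : ∀ s ≤ d * K, L ≤ n / 2 ^ (s / d) := by
      intro s hs
      refine hK1.trans ?_
      have : s / d ≤ K := by
        calc s / d ≤ (d * K) / d := Nat.div_le_div_right hs
          _ = K := Nat.mul_div_cancel_left _ (by omega)
      gcongr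
      norm_num
    have bc := bad_count d n m hn hm K η ((d + 2 : ℝ) * Real.log n) hη0
      (by
        intro s hs
        have := stage s hs
        rw [div_le_one (by linarith)]
        linarith)
      (by
        intro s hs B hB
        have st := stage s hs
        have ml := mu_lower d n m (by omega) hm s (by linarith) B hB
        exact exponent_bound d hd q hq2 n hn lg Kc L η _ _ hlg hlg1 hKc hL hη st ml)
    unfold uniformProb
    have hcard : Fintype.card {S : Finset (gridPt d m) // S.card = n ^ d}
        = (Fintype.card (gridPt d m)).choose (n ^ d) := by
      rw [← Fintype.card_finset_len]
    rw [hcard]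
    have hN : n ^ d ≤ Fintype.card (gridPt d m) := by
      rw [card_gridPt]; apply Nat.pow_le_pow_left; omega
    have hch : (0 : ℝ) < (Fintype.card (gridPt d m)).choose (n ^ d) := by
      exact_mod_cast Nat.choose_pos hN
    rw [div_le_iff₀ hch]
    set bad : Finset (Finset (gridPt d m)) := {S ∈ Finset.powersetCard (n ^ d)
        (Finset.univ : Finset (gridPt d m)) | ¬ ∀ s ≤ d * K, ∀ B ∈ bxs d m s,
      |(cnt (toLattice S) B : ℝ) - muB ((n : ℝ) / m) B|
        ≤ (η / (n / 2 ^ (s / d))) * muB ((n : ℝ) / m) B} with hbad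
    have hnc : Set.ncard {ω : {S : Finset (gridPt d m) // S.card = n ^ d} |
        d * (13 * L) < Fleast d n (toLattice ω.1)} ≤ Set.ncard (bad : Set (Finset (gridPt d m))) := by
      refine Set.ncard_le_ncard_of_injOn Subtype.val ?_
        Subtype.val_injective.injOn (Finset.finite_toSet _)
      intro S hS
      simp only [Set.mem_ofPred_eq] at hS
      rw [Finset.mem_coe, hbad, Finset.mem_filter]
      refine ⟨Finset.mem_powersetCard.2 ⟨Finset.subset_univ _, S.2⟩, ?_⟩
      intro hgood
      have h := Fleast_good d n m hn hm L η K hL4 hK1 hK2 hη0 hη1 hη2 (toLattice S.1)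
        (by rw [toL_card, S.2]) (hmem S.1) hgood
      have : Real.sqrt d * (10 * L + 3) ≤ d * (13 * L) := by gcongr; linarith
      linarith
    rw [Set.ncard_coe_finset] at hnc
    have hnc' := (Nat.cast_le (α := ℝ)).2 hnc
    refine hnc'.trans (bc.trans ?_)
    have hexp : Real.exp (-((d + 2 : ℝ) * Real.log n)) = ((n : ℝ) ^ d)⁻¹ * (n : ℝ) ^ (-2 : ℝ) := by
      rw [← Real.rpow_natCast (n : ℝ) d, ← Real.rpow_neg hn0'.le, ← Real.rpow_add hn0',
        Real.rpow_def_of_pos hn0']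
      congr 1; ring
    rw [hexp]
    have hp : (2 : ℝ) ^ (d * K) * ((n : ℝ) ^ d)⁻¹ ≤ 1 := by
      rw [← div_eq_mul_inv, div_le_one (by positivity), mul_comm, pow_mul]
      gcongr
    set R : ℝ := (n : ℝ) ^ (-2 : ℝ) with hR
    have hR0 : 0 ≤ R := by positivity
    set W : ℝ := (((Fintype.card (gridPt d m)).choose (n ^ d) : ℕ) : ℝ) with hW
    calc 4 * 2 ^ (d * K) * (W * (((n : ℝ) ^ d)⁻¹ * R))
        = ((2 : ℝ) ^ (d * K) * ((n : ℝ) ^ d)⁻¹) * (4 * R * W) := by ring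
      _ ≤ 1 * (4 * R * W) := by gcongr
      _ = 4 * R * W := by ring
      _ ≤ 13 * d * Kc * R * W := by
        gcongr
        nlinarith
end

section
/- Fix d ∈ ℕ, d ≥ 1. For every n ∈ ℕ with n ≥ 1 and every set S ⊆ ℤ^d with |S| = n^d, there exists an injective map f : S → {1,…,n^d}^d that is 1-Lipschitz with respect to the Euclidean metric, i.e., ‖f(x) − f(y)‖₂ ≤ ‖x − y‖₂ for all x, y ∈ S. -/
/-- Rank of an integer within a finite set. -/
def zrank (A : Finset ℤ) (a : ℤ) : ℤ := ((A.filter (fun z => z ≤ a)).card : ℤ)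

theorem zrank_diff (A : Finset ℤ) {a b : ℤ} (h : a ≤ b) :
    zrank A b = zrank A a + ((A.filter (fun z => a < z ∧ z ≤ b)).card : ℤ) := by
  unfold zrank
  rw [← Nat.cast_add, ← Finset.card_union_of_disjoint]
  · congr 2
    ext z
    simp only [Finset.mem_filter, Finset.mem_union]
    grind
  · rw [Finset.disjoint_left]
    intro z
    simp only [Finset.mem_filter]
    grind

theorem zrank_bounds (A : Finset ℤ) {a b : ℤ} (h : a ≤ b) :
    zrank A a ≤ zrank A b ∧ zrank A b - zrank A a ≤ b - a := by
  have h1 := zrank_diff A h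
  have h2 : (A.filter (fun z => a < z ∧ z ≤ b)).card ≤ (Finset.Ioc a b).card := by
    apply Finset.card_le_card
    intro z
    simp
  rw [Int.card_Ioc] at h2
  omega

theorem zrank_lt (A : Finset ℤ) {a b : ℤ} (h : a < b) (hb : b ∈ A) :
    zrank A a < zrank A b := by
  have h1 := zrank_diff A h.le
  have h2 : 0 < (A.filter (fun z => a < z ∧ z ≤ b)).card :=
    Finset.card_pos.2 ⟨b, by simp [hb, h]⟩
  omega

theorem zrank_abs (A : Finset ℤ) (a b : ℤ) : |zrank A a - zrank A b| ≤ |a - b| := by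
  rcases le_total a b with h | h
  · have := zrank_bounds A h
    rw [abs_le, abs_of_nonpos (by omega)]
    omega
  · have := zrank_bounds A h
    rw [abs_le, abs_of_nonneg (by omega)]
    omega

/-- Any `n^d`-element subset of `ℤ^d` admits a `1`-Lipschitz (for the Euclidean metric)
injection into the cubic grid `{1,…,n^d}^d`. -/
theorem stmt_12 (d n : ℕ) (hd : 1 ≤ d) (hn : 1 ≤ n)
    (S : Finset (Fin d → ℤ)) (hS : S.card = n ^ d) :
    ∃ f : (Fin d → ℤ) → (Fin d → ℤ),
      Set.InjOn f ↑S ∧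
      (∀ x ∈ S, ∀ i, 1 ≤ f x i ∧ f x i ≤ ((n ^ d : ℕ) : ℤ)) ∧
      (∀ x ∈ S, ∀ y ∈ S, zdist (f x) (f y) ≤ zdist x y) := by
  refine ⟨fun x i => zrank (S.image (fun y => y i)) (x i), ?_, ?_, ?_⟩
  · intro x hx y hy hxy
    funext i
    have h := congrFun hxy i
    simp only at h
    have hx' : x i ∈ S.image (fun y => y i) := Finset.mem_image_of_mem (fun y => y i) hx
    have hy' : y i ∈ S.image (fun y => y i) := Finset.mem_image_of_mem (fun y => y i) hy
    rcases lt_trichotomy (x i) (y i) with h1 | h1 | h1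
    · exact absurd h (zrank_lt _ h1 hy').ne
    · exact h1
    · exact absurd h (zrank_lt _ h1 hx').ne'
  · intro x hx i
    have hx' : x i ∈ S.image (fun y => y i) := Finset.mem_image_of_mem (fun y => y i) hx
    constructor
    · have : 0 < ((S.image (fun y => y i)).filter (fun z => z ≤ x i)).card :=
        Finset.card_pos.2 ⟨x i, Finset.mem_filter.2 ⟨hx', le_rfl⟩⟩
      simp only [zrank]
      omega
    · simp only [zrank]
      rw [← hS]
      exact_mod_cast (Finset.card_filter_le _ _).trans Finset.card_image_le
  · intro x hx y hy
    unfold zdist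
    apply Real.sqrt_le_sqrt
    apply Finset.sum_le_sum
    intro i _
    apply sq_le_sq.2
    exact_mod_cast zrank_abs _ (x i) (y i)
end

section
/- Let x, s be real numbers with 0 < x < 1 and 1/2 < s < 1. Then (1 − s·x)·log₂((1 − s·x)/(1 − x)) + s·x·log₂ s ≥ (1 − s)²·x·(1 − x)/(2·(1 − s·x)). -/
/-- For `0 < x < 1` and `1/2 < s < 1`:
`(1 − s·x)·log₂((1 − s·x)/(1 − x)) + s·x·log₂ s ≥ (1 − s)²·x·(1 − x)/(2·(1 − s·x))`. -/
theorem stmt_14 (x s : ℝ) (hx0 : 0 < x) (hx1 : x < 1) (hs0 : 1 / 2 < s) (hs1 : s < 1) :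
    (1 - s) ^ 2 * x * (1 - x) / (2 * (1 - s * x)) ≤
      (1 - s * x) * Real.logb 2 ((1 - s * x) / (1 - x)) + s * x * Real.logb 2 s := by
  have hsp : 0 < s := by linarith
  have h1x : 0 < 1 - x := by linarith
  have hsx : 1 - x ≤ 1 - s * x := by nlinarith
  have hp : 0 < 1 - s * x := by linarith
  have hl2 : 0 < Real.log 2 := Real.log_pos (by norm_num)
  have hl2' : Real.log 2 ≤ 1 := by linarith [Real.log_two_lt_d9]
  have h1 : (s - s⁻¹) / 2 ≤ Real.log s := by
    rw [← Real.sinh_log hsp]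
    exact Real.sinh_le_self_iff.2 (Real.log_nonpos hsp.le hs1.le)
  have h2 := Real.one_sub_inv_le_log_of_pos (div_pos hp h1x)
  have h3 : x * (1 - s) ≤ (1 - s * x) * Real.log ((1 - s * x) / (1 - x)) := by
    refine le_trans (le_of_eq ?_) (mul_le_mul_of_nonneg_left h2 hp.le)
    have hne := hp.ne'
    rw [inv_div, mul_sub (1 - s * x), mul_div_cancel₀ _ hne]
    ring
  have h4 : x * (s ^ 2 - 1) / 2 ≤ s * x * Real.log s := by
    refine le_trans (le_of_eq ?_) (mul_le_mul_of_nonneg_left h1 (by positivity))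
    field_simp
  have h5 : (1 - s) ^ 2 * x * (1 - x) / (2 * (1 - s * x)) ≤ (1 - s) ^ 2 * x / 2 := by
    rw [div_le_div_iff₀ (by positivity) (by norm_num)]
    have : 0 ≤ (1 - s) ^ 2 * x := by positivity
    nlinarith [mul_le_mul_of_nonneg_left hsx this]
  have h6 : (1 - s * x) * Real.logb 2 ((1 - s * x) / (1 - x)) + s * x * Real.logb 2 s
      = ((1 - s * x) * Real.log ((1 - s * x) / (1 - x)) + s * x * Real.log s) / Real.log 2 := by
    simp only [Real.logb]
    ring
  rw [h6, le_div_iff₀ hl2]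
  have h7 : 0 ≤ (1 - s) ^ 2 * x * (1 - x) / (2 * (1 - s * x)) := by positivity
  have h8 := mul_le_mul_of_nonneg_left hl2' h7
  nlinarith
end

section
/- Let x, b be real numbers with 0 < x < 1, 1 < b < 2 and b·x < 1. Then b·x·log₂ b + (1 − b·x)·log₂((1 − b·x)/(1 − x)) ≥ (b − 1)²·x·(1 − b·x)/(2·(1 − x)). -/
theorem aux_15 (b : ℝ) (hb1 : 1 < b) (hb2 : b < 2) :
    (b - 1) ^ 2 * Real.log 2 / 2 ≤ b * Real.log b - (b - 1) := by
  have h1 := Real.log_two_gt_d9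
  have h2 := Real.log_two_lt_d9
  have h3 : (b - 1) ^ 2 * Real.log 2 / 2 ≤ (b - 1) ^ 2 * 0.35 := by
    nlinarith [sq_nonneg (b - 1)]
  refine h3.trans ?_
  rcases le_total b 1.857 with h | h
  · have h4 := Real.le_log_one_add_of_nonneg (x := b - 1) (by linarith)
    rw [show 1 + (b - 1) = b by ring, div_le_iff₀ (by linarith)] at h4
    have h5 : 0 ≤ (b - 1) ^ 2 * (1 - 0.35 * (b + 1)) :=
      mul_nonneg (sq_nonneg _) (by linarith)
    nlinarith
  · have h4 := Real.one_sub_inv_le_log_of_pos (x := b / 2) (by linarith)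
    rw [Real.log_div (by linarith) (by norm_num), inv_div] at h4
    have h5 : b * (1 - 2 / b) ≤ b * (Real.log b - Real.log 2) :=
      mul_le_mul_of_nonneg_left h4 (by linarith)
    have h6 : b * (1 - 2 / b) = b - 2 := by field_simp
    nlinarith

/-- For `0 < x < 1`, `1 < b < 2` and `b·x < 1`:
`b·x·log₂ b + (1 − b·x)·log₂((1 − b·x)/(1 − x)) ≥ (b − 1)²·x·(1 − b·x)/(2·(1 − x))`. -/
theorem stmt_15 (x b : ℝ) (hx0 : 0 < x) (hx1 : x < 1) (hb1 : 1 < b) (hb2 : b < 2)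
    (hbx : b * x < 1) :
    (b - 1) ^ 2 * x * (1 - b * x) / (2 * (1 - x)) ≤
      b * x * Real.logb 2 b + (1 - b * x) * Real.logb 2 ((1 - b * x) / (1 - x)) := by
  have hL : 0 < Real.log 2 := Real.log_pos (by norm_num)
  have hx : 0 < 1 - x := by linarith
  have hu : 0 < 1 - b * x := by linarith
  have h1 := aux_15 b hb1 hb2
  have h2 := Real.one_sub_inv_le_log_of_pos (div_pos hu hx)
  have h3 := mul_le_mul_of_nonneg_left h2 hu.le
  have h4 : (1 - b * x) * (1 - ((1 - b * x) / (1 - x))⁻¹) = -((b - 1) * x) := by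
    rw [inv_div]; field_simp; ring
  have h5 : (b - 1) ^ 2 * x * (1 - b * x) / (2 * (1 - x)) ≤ (b - 1) ^ 2 * x / 2 := by
    rw [div_le_div_iff₀ (by linarith) (by norm_num)]
    have : 0 ≤ (b - 1) ^ 2 * x * ((b - 1) * x) := by
      have : 0 < b - 1 := by linarith
      positivity
    nlinarith
  refine h5.trans ?_
  have h6 : b * x * Real.logb 2 b + (1 - b * x) * Real.logb 2 ((1 - b * x) / (1 - x)) =
      (b * x * Real.log b + (1 - b * x) * Real.log ((1 - b * x) / (1 - x))) / Real.log 2 := by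
    simp only [Real.logb]; ring
  rw [h6, le_div_iff₀ hL]
  have h7 := mul_le_mul_of_nonneg_left h1 hx0.le
  linarith
end
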